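/- A(1/6;n) ∼ 2√2·cosh(π√(8n−1)/12)/√(8n−1) as n → ∞; that is, the quotient A(1/6;n)·√(8n−1)/(2√2·cosh(π√(8n−1)/12)) tends to 1 as n → ∞. (Here A(1/6;n) = N2(0,6,n) + N2(1,6,n) − N2(2,6,n) − N2(3,6,n).) -/

import Mathlib

open scoped Classical

/-- The M2-rank of a partition: ⌈ℓ/2⌉ − s, where ℓ is the largest part
(0 for the empty partition) and s is the number of parts. -/
def m2Rank {n : ℕ} (P : n.Partition) : ℤ :=
  (((P.parts.sup + 1) / 2 : ℕ) : ℤ) - (Multiset.card P.parts : ℤ)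

/-- A partition has no repeated odd parts. -/
def NoRepeatedOddParts {n : ℕ} (P : n.Partition) : Prop :=
  ∀ j : ℕ, Odd j → P.parts.count j ≤ 1

/-- `N2 r m n` is the number of partitions of `n` without repeated odd parts whose
M2-rank is congruent to `r` modulo `m`. -/
noncomputable def N2 (r : ℤ) (m n : ℕ) : ℕ :=
  Nat.card {P : n.Partition // NoRepeatedOddParts P ∧ m2Rank P ≡ r [ZMOD (m : ℤ)]}

/-- `Acoef a c n = Σ_{r=0}^{c−1} N2(r,c,n)·e^{2πiar/c}`, the coefficient of `q^n`
in the M2-rank generating function `R2(e^{2πia/c};q)`. -/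
noncomputable def Acoef (a : ℤ) (c n : ℕ) : ℂ :=
  ∑ r ∈ Finset.range c,
    (N2 (r : ℤ) c n : ℂ) * Complex.exp (2 * Real.pi * Complex.I * (a : ℂ) * (r : ℂ) / (c : ℂ))

/-!
Cauchy's formula writes the coefficient of `q ^ n` in `R2(ζ;q)`, `ζ = e^{πi/3}`, as an integral
over `q = e^{-τ}`, `τ = t - iφ`, so the asymptotics follow from the behaviour of `R2(ζ;e^{-τ})` as
`τ → 0`.

Fine's transformation identifies the generating function with a `q`-hypergeometric series, and a
Bailey pair turns that series into the quotient of an Appell–Lerch type series by a theta series.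
The terms of the former are values of a hyperbolic function which, by its partial fraction
expansion, is a cosine transform; Poisson summation then gives both series in the variable `1 / τ`,
with the result `R2(ζ;e^{-τ}) ~ √π τ^{-1/2} e^{π²/(72τ)}` in every sector `|φ| ≤ K t`.

Outside such a sector the terms of the hypergeometric series are bounded one at a time. In the
expansion of the logarithm of a term, the `m`-th coefficient contributes at order `1 / t` only near
the points where `q ^ (2m) = 1`; adding up the possible resonances is a finite check, and their
total stays below `π²/72`. With a large but fixed `K`, the integral over the remaining sector is of
Laplace type, with saddle point at `τ = π / √(72n)`.
-/

namespace M2Rank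

open Complex Filter Topology
open scoped Real

section Combinatorics

variable {n : ℕ} {z w q : ℂ}

/-- The coefficient of `q ^ n` in the M2-rank generating function `R2(z;q)`. -/
noncomputable def rankCoeff (z : ℂ) (n : ℕ) : ℂ :=
  ∑ P : n.Partition with NoRepeatedOddParts P, z ^ m2Rank P

/-- The sum of `w ^ (number of parts)` over the partitions of `n` without repeated odd parts
whose largest part `ℓ` satisfies `⌈ℓ/2⌉ ≤ m`. -/
noncomputable def boundedCoeff (w : ℂ) (m n : ℕ) : ℂ :=
  ∑ P : n.Partition with NoRepeatedOddParts P ∧ (P.parts.sup + 1) / 2 ≤ m,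
    w ^ Multiset.card P.parts

/-- The sum of `w ^ (number of parts)` over the partitions of `n` without repeated odd parts
whose largest part `ℓ` satisfies `⌈ℓ/2⌉ = m`. -/
noncomputable def layerCoeff (w : ℂ) (m n : ℕ) : ℂ :=
  ∑ P : n.Partition with NoRepeatedOddParts P ∧ (P.parts.sup + 1) / 2 = m,
    w ^ Multiset.card P.parts

lemma zpow_eq_pow_toNat_emod {c : ℕ} (hc : c ≠ 0) (hz : z ^ c = 1) (k : ℤ) :
    z ^ k = z ^ (k % c).toNat := by
  have hz0 : z ≠ 0 := by rintro rfl; simp [hc] at hz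
  have hk : ((k % c).toNat : ℤ) = k % c := Int.toNat_of_nonneg (Int.emod_nonneg _ (by positivity))
  conv_lhs => rw [← Int.emod_add_mul_ediv k c]
  rw [zpow_add₀ hz0, zpow_mul, zpow_natCast, hz, one_zpow, mul_one, ← zpow_natCast z, hk]

lemma Acoef_eq_rankCoeff {c : ℕ} (hc : c ≠ 0) (a : ℤ) (n : ℕ) :
    Acoef a c n = rankCoeff (exp (2 * π * I * a / c)) n := by
  set z := exp (2 * π * I * a / c) with hz
  have hc' : (c : ℂ) ≠ 0 := Nat.cast_ne_zero.2 hc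
  have hzc : z ^ c = 1 := by
    rw [hz, ← exp_nat_mul, mul_div_cancel₀ _ hc', mul_comm, exp_int_mul_two_pi_mul_I]
  have hpow (r : ℕ) : exp (2 * π * I * a * r / c) = z ^ r := by
    rw [hz, ← exp_nat_mul]; congr 1; ring
  have hmod (k : ℤ) (r : ℕ) (hr : r < c) : k ≡ r [ZMOD c] ↔ (k % c).toNat = r := by
    have h0 : 0 ≤ k % c := Int.emod_nonneg _ (by positivity)
    rw [Int.ModEq, Int.emod_eq_of_lt (Int.natCast_nonneg r) (by exact_mod_cast hr)]
    omega
  rw [rankCoeff, ← Finset.sum_fiberwise_of_maps_to (t := Finset.range c)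
    (g := fun P => (m2Rank P % c).toNat), Acoef]
  · refine Finset.sum_congr rfl fun r hr => ?_
    rw [Finset.sum_congr rfl (g := fun _ => z ^ r), Finset.sum_const, nsmul_eq_mul, hpow, N2,
      Nat.card_eq_fintype_card, Fintype.card_subtype, Finset.filter_filter]
    · simp only [hmod _ r (Finset.mem_range.1 hr)]
    · intro P hP
      rw [zpow_eq_pow_toNat_emod hc hzc, (Finset.mem_filter.1 hP).2]
  · intro P _
    have := Int.emod_lt_of_pos (m2Rank P) (b := (c : ℤ)) (by positivity)
    rw [Finset.mem_range]
    omega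

lemma card_partition_le (n : ℕ) : Fintype.card n.Partition ≤ 2 ^ n :=
  calc Fintype.card n.Partition ≤ Fintype.card (Composition n) :=
        Fintype.card_le_of_surjective _ Nat.Partition.ofComposition_surj
    _ = 2 ^ (n - 1) := composition_card n
    _ ≤ 2 ^ n := Nat.pow_le_pow_right two_pos (Nat.sub_le n 1)

lemma norm_sum_partition_le (s : Finset n.Partition) {f : n.Partition → ℂ}
    (hf : ∀ P, ‖f P‖ = 1) : ‖∑ P ∈ s, f P‖ ≤ 2 ^ n :=
  calc ‖∑ P ∈ s, f P‖ ≤ s.card := by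
        simpa [hf] using norm_sum_le s f
    _ ≤ 2 ^ n := by exact_mod_cast (Finset.card_le_univ s).trans (card_partition_le n)

lemma norm_boundedCoeff_le (hw : ‖w‖ = 1) (m n : ℕ) : ‖boundedCoeff w m n‖ ≤ 2 ^ n :=
  norm_sum_partition_le _ fun P => by rw [norm_pow, hw, one_pow]

lemma norm_layerCoeff_le (hw : ‖w‖ = 1) (m n : ℕ) : ‖layerCoeff w m n‖ ≤ 2 ^ n :=
  norm_sum_partition_le _ fun P => by rw [norm_pow, hw, one_pow]

lemma layerCoeff_zero (w : ℂ) (n : ℕ) : layerCoeff w 0 n = boundedCoeff w 0 n := by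
  simp only [layerCoeff, boundedCoeff, Nat.le_zero]

lemma layerCoeff_succ (w : ℂ) (m n : ℕ) :
    layerCoeff w (m + 1) n = boundedCoeff w (m + 1) n - boundedCoeff w m n := by
  simp only [layerCoeff, boundedCoeff]
  rw [eq_sub_iff_add_eq, add_comm, ← Finset.sum_union]
  · refine Finset.sum_congr ?_ fun _ _ => rfl
    ext P
    simp only [Finset.mem_union, Finset.mem_filter, Finset.mem_univ, true_and, ← and_or_left,
      Nat.le_succ_iff]
  · refine Finset.disjoint_filter.2 fun P _ h h' => ?_
    omega

lemma sup_parts_le (P : n.Partition) : P.parts.sup ≤ n :=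
  Multiset.sup_le.2 fun _ hb => (Multiset.le_sum_of_mem hb).trans P.parts_sum.le

lemma layerCoeff_eq_zero {m : ℕ} (h : n < m) : layerCoeff w m n = 0 := by
  refine Finset.sum_eq_zero fun P hP => ?_
  have h' := (Finset.mem_filter.1 hP).2.2
  have := sup_parts_le P
  omega

lemma rankCoeff_eq_sum_layerCoeff (hz : z ≠ 0) (n : ℕ) :
    rankCoeff z n = ∑ m ∈ Finset.range (n + 1), z ^ m * layerCoeff z⁻¹ m n := by
  rw [rankCoeff, ← Finset.sum_fiberwise_of_maps_to (t := Finset.range (n + 1))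
    (g := fun P => (P.parts.sup + 1) / 2)]
  · refine Finset.sum_congr rfl fun m _ => ?_
    rw [layerCoeff, Finset.mul_sum, Finset.filter_filter]
    refine Finset.sum_congr rfl fun P hP => ?_
    rw [m2Rank, (Finset.mem_filter.1 hP).2.2, zpow_sub₀ hz, zpow_natCast, zpow_natCast, inv_pow,
      div_eq_mul_inv]
  · intro P _
    have := sup_parts_le P
    rw [Finset.mem_range]
    omega

end Combinatorics

section PartitionSeries

open PowerSeries
open scoped PowerSeries.WithPiTopology

variable {w q : ℂ}

/-- The weight of a part `i` of multiplicity `c` in a partition without repeated odd parts. -/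
noncomputable def partWeight (w : ℂ) (i c : ℕ) : ℂ := if Odd i → c ≤ 1 then w ^ c else 0

/-- The generating function of the multiplicity of the part `i + 1`. -/
noncomputable def partFactor (w : ℂ) (i : ℕ) : ℂ⟦X⟧ :=
  1 + ∑' j, partWeight w (i + 1) (j + 1) • (X : ℂ⟦X⟧) ^ ((i + 1) * (j + 1))

/-- The power series `∑ₙ boundedCoeff w m n Xⁿ`. -/
noncomputable def boundedSeries (w : ℂ) (m : ℕ) : ℂ⟦X⟧ := PowerSeries.mk (boundedCoeff w m)

lemma prod_partWeight {n : ℕ} (w : ℂ) (m : ℕ) (P : n.Partition) :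
    (∏ i ∈ P.parts.toFinset, if i ≤ 2 * m then partWeight w i (P.parts.count i) else 0) =
      if NoRepeatedOddParts P ∧ (P.parts.sup + 1) / 2 ≤ m then w ^ Multiset.card P.parts
      else 0 := by
  have hsup : (P.parts.sup + 1) / 2 ≤ m ↔ ∀ i ∈ P.parts, i ≤ 2 * m := by
    rw [← Multiset.sup_le]; omega
  split_ifs with h <;> rw [hsup] at h
  · rw [← Multiset.toFinset_sum_count_eq, ← Finset.prod_pow_eq_pow_sum]
    refine Finset.prod_congr rfl fun i hi => ?_
    rw [if_pos (h.2 i (Multiset.mem_toFinset.1 hi)), partWeight, if_pos (h.1 i)]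
  · contrapose! h
    have hi := fun i hi => Finset.prod_ne_zero_iff.1 h i (Multiset.mem_toFinset.2 hi)
    refine ⟨fun j hj => ?_, fun i hiP => ?_⟩
    · by_contra hcount
      have hjP : j ∈ P.parts := Multiset.count_pos.1 (by omega)
      exact hi j hjP (by simp [partWeight, hj, hcount])
    · by_contra hlt
      exact hi i hiP (if_neg hlt)

lemma boundedSeries_eq_genFun (w : ℂ) (m : ℕ) :
    boundedSeries w m =
      Nat.Partition.genFun fun i c => if i ≤ 2 * m then partWeight w i c else 0 := by
  ext n
  rw [Nat.Partition.coeff_genFun, boundedSeries, coeff_mk, boundedCoeff, Finset.sum_filter]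
  refine Finset.sum_congr rfl fun P _ => ?_
  rw [← prod_partWeight, Finsupp.prod, Multiset.toFinsupp_support]
  simp only [Multiset.toFinsupp_apply]

lemma boundedSeries_eq_prod (w : ℂ) (m : ℕ) :
    boundedSeries w m = ∏ i ∈ Finset.range (2 * m), partFactor w i := by
  let f : ℕ → ℕ → ℂ := fun i c => if i ≤ 2 * m then partWeight w i c else 0
  have hgen := Nat.Partition.hasProd_genFun f
  have hfin := hasProd_prod_of_ne_finset_one (L := SummationFilter.unconditional ℕ)
    (f := fun i : ℕ => (1 : ℂ⟦X⟧) + ∑' j, f (i + 1) (j + 1) • (X : ℂ⟦X⟧) ^ ((i + 1) * (j + 1)))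
    (s := Finset.range (2 * m)) fun i hi => by
      have : ¬i + 1 ≤ 2 * m := by rw [Finset.mem_range] at hi; omega
      simp [f, this]
  rw [boundedSeries_eq_genFun, hgen.unique hfin]
  refine Finset.prod_congr rfl fun i hi => ?_
  have : i + 1 ≤ 2 * m := by rw [Finset.mem_range] at hi; omega
  simp only [f, this, if_true, partFactor]

lemma partFactor_two_mul (w : ℂ) (m : ℕ) : partFactor w (2 * m) = 1 + C w * X ^ (2 * m + 1) := by
  rw [partFactor, tsum_eq_single 0]
  · simp [partWeight, smul_eq_C_mul]
  · intro j hj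
    rw [partWeight, if_neg, zero_smul]
    intro h
    have := h ⟨m, rfl⟩
    omega

lemma partFactor_two_mul_add_one (w : ℂ) (m : ℕ) :
    (1 - C w * X ^ (2 * m + 2)) * partFactor w (2 * m + 1) = 1 := by
  set a : ℂ⟦X⟧ := C w * X ^ (2 * m + 2) with ha
  have hterm (j : ℕ) : partWeight w (2 * m + 1 + 1) (j + 1) •
      (X : ℂ⟦X⟧) ^ ((2 * m + 1 + 1) * (j + 1)) = a ^ (j + 1) := by
    have hodd : ¬Odd (2 * m + 1 + 1) := by rw [Nat.odd_iff]; omega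
    rw [ha, partWeight, if_pos fun h => absurd h hodd, smul_eq_C_mul, mul_pow, ← pow_mul, map_pow]
  have hs := Nat.Partition.summable_genFun_term (partWeight w) (2 * m + 1)
  rw [partFactor]
  simp only [hterm] at hs ⊢
  have hsplit := hs.tsum_eq_zero_add
  have hshift : ∑' j : ℕ, a ^ (j + 1 + 1) = a * ∑' j : ℕ, a ^ (j + 1) := by
    rw [← hs.tsum_mul_left]
    simp only [pow_succ' a (_ + 1)]
  rw [hshift] at hsplit
  linear_combination hsplit

lemma boundedSeries_zero (w : ℂ) : boundedSeries w 0 = 1 := by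
  simp [boundedSeries_eq_prod]

lemma boundedSeries_succ (w : ℂ) (m : ℕ) :
    boundedSeries w (m + 1) * (1 + C (-w) * X ^ (2 * m + 2)) =
      boundedSeries w m * (1 + C w * X ^ (2 * m + 1)) := by
  rw [boundedSeries_eq_prod, boundedSeries_eq_prod, show 2 * (m + 1) = 2 * m + 1 + 1 by ring,
    Finset.prod_range_succ, Finset.prod_range_succ, partFactor_two_mul, map_neg]
  linear_combination (∏ i ∈ Finset.range (2 * m), partFactor w i) * (1 + C w * X ^ (2 * m + 1)) *
    partFactor_two_mul_add_one w m

lemma hasSum_coeff_mul_one_add (A : ℂ⟦X⟧) (hs : Summable fun n => A.coeff n * q ^ n) (c : ℂ)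
    (k : ℕ) : HasSum (fun n => (A * (1 + C c * X ^ k)).coeff n * q ^ n)
      ((∑' n, A.coeff n * q ^ n) * (1 + c * q ^ k)) := by
  have hX : HasSum (fun n => (A * X ^ k).coeff n * q ^ n) ((∑' n, A.coeff n * q ^ n) * q ^ k) := by
    rw [← hasSum_nat_add_iff' k, Finset.sum_eq_zero, sub_zero]
    · refine (hs.hasSum.mul_right (q ^ k)).congr_fun fun n => ?_
      rw [coeff_mul_X_pow]; ring
    · intro i hi
      rw [coeff_mul_X_pow', if_neg (by rw [Finset.mem_range] at hi; omega), zero_mul]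
  convert hs.hasSum.add (hX.mul_left c) using 1
  · ext n
    rw [show A * (1 + C c * X ^ k) = A + C c * (A * X ^ k) by ring, map_add, coeff_C_mul]
    ring
  · ring

/-- The value `∑ₙ boundedCoeff w m n qⁿ`. -/
noncomputable def boundedSum (w q : ℂ) (m : ℕ) : ℂ := ∑' n, boundedCoeff w m n * q ^ n

/-- The value `∑ₙ layerCoeff w m n qⁿ`. -/
noncomputable def layerSum (w q : ℂ) (m : ℕ) : ℂ := ∑' n, layerCoeff w m n * q ^ n

lemma summable_mul_pow_of_norm_le_two_pow (hq : ‖q‖ ≤ 1 / 16) {a : ℕ → ℂ}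
    (ha : ∀ n, ‖a n‖ ≤ 2 ^ n) : Summable fun n => a n * q ^ n := by
  refine Summable.of_norm_bounded (g := fun n : ℕ => (1 / 8 : ℝ) ^ n)
    (summable_geometric_of_lt_one (by norm_num) (by norm_num)) fun n => ?_
  rw [norm_mul, norm_pow]
  calc ‖a n‖ * ‖q‖ ^ n ≤ 2 ^ n * (1 / 16) ^ n := by gcongr; exact ha n
    _ = (1 / 8) ^ n := by rw [← mul_pow]; norm_num

lemma coeff_boundedSeries (w : ℂ) (m n : ℕ) : (boundedSeries w m).coeff n = boundedCoeff w m n :=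
  coeff_mk _ _

lemma boundedSum_zero (w q : ℂ) : boundedSum w q 0 = 1 := by
  simp only [boundedSum, ← coeff_boundedSeries, boundedSeries_zero, coeff_one]
  rw [tsum_eq_single 0 fun n hn => by simp [hn]]
  simp

lemma boundedSum_succ (hw : ‖w‖ = 1) (hq : ‖q‖ ≤ 1 / 16) (m : ℕ) :
    boundedSum w q (m + 1) * (1 - w * q ^ (2 * m + 2)) =
      boundedSum w q m * (1 + w * q ^ (2 * m + 1)) := by
  have hs (m : ℕ) : Summable fun n => (boundedSeries w m).coeff n * q ^ n := by
    simp only [coeff_boundedSeries]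
    exact summable_mul_pow_of_norm_le_two_pow hq (norm_boundedCoeff_le hw m)
  have hl := hasSum_coeff_mul_one_add _ (hs (m + 1)) (-w) (2 * m + 2)
  have hr := hasSum_coeff_mul_one_add _ (hs m) w (2 * m + 1)
  rw [boundedSeries_succ] at hl
  have h := hl.unique hr
  simp only [coeff_boundedSeries, neg_mul, ← sub_eq_add_neg] at h
  exact h

lemma layerSum_zero (w q : ℂ) : layerSum w q 0 = 1 := by
  simp only [layerSum, layerCoeff_zero, ← boundedSum_zero w q, boundedSum]

lemma layerSum_succ (hw : ‖w‖ = 1) (hq : ‖q‖ ≤ 1 / 16) (m : ℕ) :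
    layerSum w q (m + 1) = boundedSum w q (m + 1) - boundedSum w q m := by
  have hs (m : ℕ) := summable_mul_pow_of_norm_le_two_pow hq (norm_boundedCoeff_le hw m)
  simp only [layerSum, boundedSum, layerCoeff_succ, sub_mul]
  exact (hs _).tsum_sub (hs _)

lemma summable_layerCoeff_mul_pow {z : ℂ} (hz : ‖z‖ = 1) (hq : ‖q‖ ≤ 1 / 16) :
    Summable fun p : ℕ × ℕ => z ^ p.1 * (layerCoeff z⁻¹ p.1 p.2 * q ^ p.2) := by
  refine Summable.of_norm_bounded (g := fun p : ℕ × ℕ => (1 / 2 : ℝ) ^ p.1 * (1 / 4 : ℝ) ^ p.2)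
    ?_ fun ⟨m, n⟩ => ?_
  · exact (summable_geometric_of_lt_one (by norm_num) (by norm_num)).mul_of_nonneg
      (summable_geometric_of_lt_one (by norm_num) (by norm_num)) (fun _ => by positivity)
      fun _ => by positivity
  · rcases lt_or_ge n m with h | h
    · rw [layerCoeff_eq_zero h, zero_mul, mul_zero, norm_zero]
      positivity
    · rw [norm_mul, norm_pow, hz, one_pow, one_mul, norm_mul, norm_pow]
      calc ‖layerCoeff z⁻¹ m n‖ * ‖q‖ ^ n ≤ 2 ^ n * (1 / 16) ^ n := by
            gcongr; exact norm_layerCoeff_le (by rw [norm_inv, hz, inv_one]) m n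
        _ = (1 / 2) ^ n * (1 / 4) ^ n := by rw [← mul_pow, ← mul_pow]; norm_num
        _ ≤ (1 / 2) ^ m * (1 / 4) ^ n := by
            gcongr ?_ * _
            exact pow_le_pow_of_le_one (by norm_num) (by norm_num) h

lemma summable_layerSum {z : ℂ} (hz : ‖z‖ = 1) (hq : ‖q‖ ≤ 1 / 16) :
    Summable fun m => z ^ m * layerSum z⁻¹ q m := by
  have h := (summable_layerCoeff_mul_pow hz hq).prod
  simpa only [layerSum, tsum_mul_left] using h

lemma hasSum_rankCoeff_layerSum {z : ℂ} (hz : ‖z‖ = 1) (hq : ‖q‖ ≤ 1 / 16) :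
    HasSum (fun n => rankCoeff z n * q ^ n) (∑' m, z ^ m * layerSum z⁻¹ q m) := by
  have hz0 : z ≠ 0 := by rintro rfl; simp at hz
  have hs := summable_layerCoeff_mul_pow hz hq
  have hrow (n : ℕ) :
      ∑' m, z ^ m * (layerCoeff z⁻¹ m n * q ^ n) = rankCoeff z n * q ^ n := by
    rw [tsum_eq_sum (s := Finset.range (n + 1)), rankCoeff_eq_sum_layerCoeff hz0, Finset.sum_mul]
    · simp only [mul_assoc]
    · intro m hm
      rw [layerCoeff_eq_zero (by rw [Finset.mem_range] at hm; omega), zero_mul, mul_zero]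
  have hsum : ∑' n, rankCoeff z n * q ^ n = ∑' m, z ^ m * layerSum z⁻¹ q m := by
    simp only [← hrow, layerSum, ← tsum_mul_left]
    exact hs.tsum_comm' (fun m => hs.prod_factor m) fun n => hs.prod_symm.prod_factor n
  rw [← hsum]
  have hcol := hs.prod_symm.prod
  simp only [Prod.fst_swap, Prod.snd_swap, hrow] at hcol
  exact hcol.hasSum

end PartitionSeries

section RankSeries

variable {z w q : ℂ}

/-- The quotient of the `(k + 1)`-st and the `k`-th term of the series `R2`. -/
noncomputable def rankRatio (z q : ℂ) (k : ℕ) : ℂ :=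
  q ^ (2 * k + 1) * (1 + q ^ (2 * k + 1)) /
    ((1 - z * q ^ (2 * k + 2)) * (1 - z⁻¹ * q ^ (2 * k + 2)))

/-- The term `q^(n²) (-q;q²)ₙ / ((zq²;q²)ₙ (q²/z;q²)ₙ)` of the series `R2`. -/
noncomputable def rankTerm (z q : ℂ) (n : ℕ) : ℂ := ∏ k ∈ Finset.range n, rankRatio z q k

/-- The M2-rank generating function, as a basic hypergeometric series. -/
noncomputable def R2 (z q : ℂ) : ℂ := ∑' n, rankTerm z q n

lemma norm_inv_eq_one (hz : ‖z‖ = 1) : ‖z⁻¹‖ = 1 := by rw [norm_inv, hz, inv_one]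

lemma one_sub_norm_le (hw : ‖w‖ = 1) (y : ℂ) : 1 - ‖y‖ ≤ ‖1 - w * y‖ := by
  simpa only [norm_one, norm_mul, hw, one_mul] using norm_sub_norm_le 1 (w * y)

lemma one_sub_mul_ne_zero (hw : ‖w‖ = 1) {y : ℂ} (hy : ‖y‖ < 1) : 1 - w * y ≠ 0 :=
  norm_pos_iff.1 ((sub_pos.2 hy).trans_le (one_sub_norm_le hw y))

lemma norm_pow_le_self (hq : ‖q‖ ≤ 1) {k : ℕ} (hk : k ≠ 0) : ‖q ^ k‖ ≤ ‖q‖ := by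
  rw [norm_pow]
  exact pow_le_of_le_one (norm_nonneg q) hq hk

lemma norm_pow_lt_one (hq : ‖q‖ < 1) {k : ℕ} (hk : k ≠ 0) : ‖q ^ k‖ < 1 :=
  (norm_pow_le_self hq.le hk).trans_lt hq

lemma one_sub_mul_pow_ne_zero (hw : ‖w‖ = 1) (hq : ‖q‖ < 1) (k : ℕ) :
    1 - w * q ^ (k + 1) ≠ 0 :=
  one_sub_mul_ne_zero hw (norm_pow_lt_one hq k.succ_ne_zero)

lemma norm_rankRatio_le (hz : ‖z‖ = 1) {r : ℝ} (hqr : ‖q‖ ≤ r) (hr : r < 1) (k : ℕ) :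
    ‖rankRatio z q k‖ ≤ r ^ (2 * k + 1) * (2 / (1 - r) ^ 2) := by
  have hq : ‖q‖ < 1 := hqr.trans_lt hr
  have hr0 : 0 ≤ r := (norm_nonneg _).trans hqr
  have : 0 < 1 - r := sub_pos.2 hr
  have hnum : ‖1 + q ^ (2 * k + 1)‖ ≤ 2 := by
    have h1 := norm_add_le 1 (q ^ (2 * k + 1))
    have h2 := norm_pow_lt_one hq (2 * k).succ_ne_zero
    rw [norm_one] at h1
    linarith
  have hden {w : ℂ} (hw : ‖w‖ = 1) : 1 - r ≤ ‖1 - w * q ^ (2 * k + 2)‖ := by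
    have h1 := norm_pow_le_self hq.le (2 * k + 1).succ_ne_zero
    have h2 := one_sub_norm_le hw (q ^ (2 * k + 2))
    linarith
  rw [rankRatio, norm_div, norm_mul, mul_div_assoc, norm_mul, norm_pow, sq]
  have := hden hz
  have := hden (norm_inv_eq_one hz)
  gcongr

lemma rankTerm_succ (z q : ℂ) (n : ℕ) :
    rankTerm z q (n + 1) = rankTerm z q n * rankRatio z q n :=
  Finset.prod_range_succ _ _

lemma norm_rankTerm_le (hz : ‖z‖ = 1) {r : ℝ} (hqr : ‖q‖ ≤ r) (hr : r < 1) (n : ℕ) :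
    ‖rankTerm z q n‖ ≤ r ^ n ^ 2 * (2 / (1 - r) ^ 2) ^ n := by
  have hr0 : 0 ≤ r := (norm_nonneg _).trans hqr
  induction n with
  | zero => simp [rankTerm]
  | succ n ih =>
    rw [rankTerm_succ, norm_mul]
    calc ‖rankTerm z q n‖ * ‖rankRatio z q n‖
        ≤ (r ^ n ^ 2 * (2 / (1 - r) ^ 2) ^ n) * (r ^ (2 * n + 1) * (2 / (1 - r) ^ 2)) := by
          gcongr
          exact norm_rankRatio_le hz hqr hr n
      _ = r ^ (n + 1) ^ 2 * (2 / (1 - r) ^ 2) ^ (n + 1) := by ring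

lemma summable_pow_sq_mul_pow {r D : ℝ} (hr0 : 0 ≤ r) (hr : r < 1) (hD : 0 ≤ D) :
    Summable fun n : ℕ => r ^ n ^ 2 * D ^ n := by
  have hlim : Tendsto (fun n : ℕ => r ^ n * D) atTop (𝓝 0) := by
    simpa using (tendsto_pow_atTop_nhds_zero_of_lt_one hr0 hr).mul_const D
  refine Summable.of_norm_bounded_eventually_nat summable_geometric_two ?_
  filter_upwards [hlim.eventually (gt_mem_nhds (half_pos one_pos))] with n hn
  rw [Real.norm_of_nonneg (by positivity), sq, pow_mul, ← mul_pow]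
  gcongr

lemma summable_rankTerm (hz : ‖z‖ = 1) (hq : ‖q‖ < 1) : Summable (rankTerm z q) :=
  Summable.of_norm_bounded (summable_pow_sq_mul_pow (norm_nonneg q) hq (by positivity))
    (norm_rankTerm_le hz le_rfl hq)

lemma differentiableOn_R2 (hz : ‖z‖ = 1) : DifferentiableOn ℂ (R2 z) (Metric.ball 0 1) := by
  intro q hq
  obtain ⟨r, hqr, hr⟩ := exists_between (mem_ball_zero_iff.1 hq)
  have hr0 : 0 ≤ r := (norm_nonneg q).trans hqr.le
  have hdiff : DifferentiableOn ℂ (R2 z) (Metric.ball 0 r) := by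
    refine differentiableOn_tsum_of_summable_norm
      (summable_pow_sq_mul_pow hr0 hr (D := 2 / (1 - r) ^ 2) (by positivity)) (fun n y hy => ?_)
      Metric.isOpen_ball fun n y hy => norm_rankTerm_le hz (mem_ball_zero_iff.1 hy).le hr n
    have hy1 : ‖y‖ < 1 := (mem_ball_zero_iff.1 hy).trans hr
    refine DifferentiableAt.differentiableWithinAt (DifferentiableAt.fun_finsetProd fun k _ => ?_)
    refine DifferentiableAt.fun_div (by fun_prop) (by fun_prop) (mul_ne_zero ?_ ?_)
    exacts [one_sub_mul_pow_ne_zero hz hy1 _, one_sub_mul_pow_ne_zero (norm_inv_eq_one hz) hy1 _]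
  exact (hdiff.differentiableAt
    (Metric.isOpen_ball.mem_nhds (mem_ball_zero_iff.2 hqr))).differentiableWithinAt

end RankSeries

section FineTransformation

variable {z q : ℂ}

/-- The product `(-q/z;q²)ₘ / (q^(2k+2)/z;q²)ₘ`. -/
noncomputable def fineProd (z q : ℂ) (k m : ℕ) : ℂ :=
  ∏ j ∈ Finset.range m, (1 + z⁻¹ * q ^ (2 * j + 1)) / (1 - z⁻¹ * q ^ (2 * k + 2 * j + 2))

/-- Fine's function `(1 - t) ∑ₘ fineProd z q k m tᵐ` at `t = z q^(2k)`, written as a telescoped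
series so that it also makes sense at `k = 0`, where `‖t‖ = 1`. -/
noncomputable def fineSum (z q : ℂ) (k : ℕ) : ℂ :=
  1 + ∑' m, (z * q ^ (2 * k)) ^ (m + 1) * (fineProd z q k (m + 1) - fineProd z q k m)

lemma fineProd_zero (z q : ℂ) (k : ℕ) : fineProd z q k 0 = 1 := Finset.prod_range_zero _

lemma fineProd_succ (z q : ℂ) (k m : ℕ) : fineProd z q k (m + 1) = fineProd z q k m *
    ((1 + z⁻¹ * q ^ (2 * m + 1)) / (1 - z⁻¹ * q ^ (2 * k + 2 * m + 2))) :=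
  Finset.prod_range_succ _ _

lemma fineProd_shift (hz : ‖z‖ = 1) (hq : ‖q‖ < 1) (k m : ℕ) :
    fineProd z q (k + 1) m = fineProd z q k m *
      ((1 - z⁻¹ * q ^ (2 * k + 2)) / (1 - z⁻¹ * q ^ (2 * k + 2 * m + 2))) := by
  have hne (j : ℕ) := one_sub_mul_pow_ne_zero (norm_inv_eq_one hz) hq j
  induction m with
  | zero => rw [fineProd_zero, fineProd_zero, mul_zero, add_zero, div_self (hne _), mul_one]
  | succ m ih =>
    have := hne (2 * k + 2 * m + 1)
    have := hne (2 * k + 2 * m + 3)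
    rw [fineProd_succ, fineProd_succ, ih, show 2 * (k + 1) + 2 * m + 2 = 2 * k + 2 * m + 4 by ring,
      show 2 * k + 2 * (m + 1) + 2 = 2 * k + 2 * m + 4 by ring]
    field_simp

lemma fineProd_succ_sub (hz : ‖z‖ = 1) (hq : ‖q‖ < 1) (k m : ℕ) :
    (z * q ^ (2 * k)) ^ (m + 1) * (fineProd z q k (m + 1) - fineProd z q k m) =
      q ^ (2 * k + 1) * (1 + q ^ (2 * k + 1)) / (1 - z⁻¹ * q ^ (2 * k + 2)) *
        ((z * q ^ (2 * (k + 1))) ^ m * fineProd z q (k + 1) m) := by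
  have hne (j : ℕ) := one_sub_mul_pow_ne_zero (norm_inv_eq_one hz) hq j
  have h1 := hne (2 * k + 2 * m + 1)
  have h2 := hne (2 * k + 1)
  have hzz : z * z⁻¹ = 1 := mul_inv_cancel₀ (norm_ne_zero_iff.1 (by rw [hz]; exact one_ne_zero))
  have hpow : (z * q ^ (2 * k)) ^ (m + 1) *
      ((1 + z⁻¹ * q ^ (2 * m + 1)) - (1 - z⁻¹ * q ^ (2 * k + 2 * m + 2))) =
      q ^ (2 * k + 1) * (1 + q ^ (2 * k + 1)) * (z * q ^ (2 * (k + 1))) ^ m := by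
    linear_combination (z ^ m * q ^ (2 * k * (m + 1)) * q ^ (2 * m + 1) *
      (1 + q ^ (2 * k + 1))) * hzz
  rw [fineProd_shift hz hq, fineProd_succ]
  calc _ = fineProd z q k m / (1 - z⁻¹ * q ^ (2 * k + 2 * m + 2)) * ((z * q ^ (2 * k)) ^ (m + 1) *
          ((1 + z⁻¹ * q ^ (2 * m + 1)) - (1 - z⁻¹ * q ^ (2 * k + 2 * m + 2)))) := by
        rw [mul_div_assoc', div_sub' h1]; ring
    _ = _ := by
        rw [hpow]
        generalize 1 - z⁻¹ * q ^ (2 * k + 2) = d at *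
        field_simp

lemma norm_fineProd_le (hz : ‖z‖ = 1) (hq : ‖q‖ ≤ 1 / 16) (k m : ℕ) :
    ‖fineProd z q k m‖ ≤ 2 ^ m := by
  have hz' := norm_inv_eq_one hz
  have hq1 : ‖q‖ ≤ 1 := by linarith
  rw [fineProd, norm_prod]
  refine (Finset.prod_le_prod (g := fun _ => (2 : ℝ)) (fun _ _ => norm_nonneg _) ?_).trans (by simp)
  intro j _
  have hnum : ‖1 + z⁻¹ * q ^ (2 * j + 1)‖ ≤ 17 / 16 := by
    have h1 := norm_add_le 1 (z⁻¹ * q ^ (2 * j + 1))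
    have h2 := norm_pow_le_self hq1 (2 * j).succ_ne_zero
    rw [norm_one, norm_mul, hz', one_mul] at h1
    linarith
  have hden : 15 / 16 ≤ ‖1 - z⁻¹ * q ^ (2 * k + 2 * j + 2)‖ := by
    have h1 := one_sub_norm_le hz' (q ^ (2 * k + 2 * j + 2))
    have h2 := norm_pow_le_self hq1 (2 * k + 2 * j + 1).succ_ne_zero
    linarith
  rw [norm_div, div_le_iff₀ (by linarith)]
  linarith

lemma norm_fineTerm_le (hz : ‖z‖ = 1) (hq : ‖q‖ ≤ 1 / 16) (k m : ℕ) :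
    ‖(z * q ^ (2 * (k + 1))) ^ m * fineProd z q (k + 1) m‖ ≤ (1 / 2) ^ m := by
  have hq1 : ‖q‖ ≤ 1 := by linarith
  rw [norm_mul, norm_pow, norm_mul, hz, one_mul]
  calc ‖q ^ (2 * (k + 1))‖ ^ m * ‖fineProd z q (k + 1) m‖ ≤ (1 / 16) ^ m * 2 ^ m := by
        gcongr
        · exact (norm_pow_le_self hq1 (by omega)).trans hq
        · exact norm_fineProd_le hz hq _ m
    _ = (1 / 8) ^ m := by rw [← mul_pow]; norm_num
    _ ≤ (1 / 2) ^ m := by gcongr; norm_num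

lemma summable_fineTerm (hz : ‖z‖ = 1) (hq : ‖q‖ ≤ 1 / 16) (k : ℕ) :
    Summable fun m => (z * q ^ (2 * (k + 1))) ^ m * fineProd z q (k + 1) m :=
  Summable.of_norm_bounded summable_geometric_two (norm_fineTerm_le hz hq k)

lemma fineSum_succ_eq (hz : ‖z‖ = 1) (hq : ‖q‖ ≤ 1 / 16) (k : ℕ) :
    fineSum z q (k + 1) = (1 - z * q ^ (2 * (k + 1))) *
      ∑' m, (z * q ^ (2 * (k + 1))) ^ m * fineProd z q (k + 1) m := by
  have hs := summable_fineTerm hz hq k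
  rw [fineSum]
  set t := z * q ^ (2 * (k + 1))
  have hsplit := hs.tsum_eq_zero_add
  rw [pow_zero, fineProd_zero, mul_one] at hsplit
  have hterm (m : ℕ) : t ^ (m + 1) * (fineProd z q (k + 1) (m + 1) - fineProd z q (k + 1) m) =
      t ^ (m + 1) * fineProd z q (k + 1) (m + 1) - t * (t ^ m * fineProd z q (k + 1) m) := by
    ring
  simp only [hterm]
  rw [((summable_nat_add_iff 1).2 hs).tsum_sub (hs.mul_left t), tsum_mul_left]
  linear_combination -hsplit

lemma fineSum_eq (hz : ‖z‖ = 1) (hq : ‖q‖ ≤ 1 / 16) (k : ℕ) :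
    fineSum z q k = 1 + rankRatio z q k * fineSum z q (k + 1) := by
  have hq1 : ‖q‖ < 1 := by linarith
  have h1 := one_sub_mul_pow_ne_zero hz hq1 (2 * k + 1)
  rw [fineSum_succ_eq hz hq, fineSum, rankRatio, mul_add_one 2 k]
  simp only [fineProd_succ_sub hz hq1, tsum_mul_left, mul_add_one 2 k]
  generalize 1 - z⁻¹ * q ^ (2 * k + 2) = d at *
  field_simp

lemma norm_fineSum_succ_le (hz : ‖z‖ = 1) (hq : ‖q‖ ≤ 1 / 16) (k : ℕ) :
    ‖fineSum z q (k + 1)‖ ≤ 2 * 2 := by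
  rw [fineSum_succ_eq hz hq, norm_mul]
  gcongr
  · have h1 := norm_sub_le 1 (z * q ^ (2 * (k + 1)))
    have h2 := norm_pow_le_self (show ‖q‖ ≤ 1 by linarith) (k := 2 * (k + 1)) (by omega)
    rw [norm_one, norm_mul, hz, one_mul] at h1
    linarith
  · exact tsum_of_norm_bounded hasSum_geometric_two (norm_fineTerm_le hz hq k)

lemma boundedSum_eq_fineProd (hz : ‖z‖ = 1) (hq : ‖q‖ ≤ 1 / 16) (m : ℕ) :
    boundedSum z⁻¹ q m = fineProd z q 0 m := by
  have hz' := norm_inv_eq_one hz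
  have hq1 : ‖q‖ < 1 := by linarith
  induction m with
  | zero => rw [boundedSum_zero, fineProd_zero]
  | succ m ih =>
    rw [fineProd_succ, ← ih, mul_zero, zero_add, mul_div_assoc',
      eq_div_iff (one_sub_mul_pow_ne_zero hz' hq1 _), boundedSum_succ hz' hq]

lemma tsum_layerSum_eq_fineSum (hz : ‖z‖ = 1) (hq : ‖q‖ ≤ 1 / 16) :
    ∑' m, z ^ m * layerSum z⁻¹ q m = fineSum z q 0 := by
  rw [(summable_layerSum hz hq).tsum_eq_zero_add, fineSum, layerSum_zero]
  simp only [layerSum_succ (norm_inv_eq_one hz) hq, boundedSum_eq_fineProd hz hq, mul_zero,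
    pow_zero, mul_one]

lemma fineSum_zero_eq_partialSum (hz : ‖z‖ = 1) (hq : ‖q‖ ≤ 1 / 16) (N : ℕ) :
    fineSum z q 0 = ∑ n ∈ Finset.range N, rankTerm z q n + rankTerm z q N * fineSum z q N := by
  induction N with
  | zero => simp [rankTerm]
  | succ N ih =>
    rw [ih, fineSum_eq hz hq N, Finset.sum_range_succ, rankTerm_succ]
    ring

lemma fineSum_zero_eq_R2 (hz : ‖z‖ = 1) (hq : ‖q‖ ≤ 1 / 16) : fineSum z q 0 = R2 z q := by
  have hs := summable_rankTerm hz (show ‖q‖ < 1 by linarith)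
  have hrem : Tendsto (fun N => rankTerm z q (N + 1) * fineSum z q (N + 1)) atTop (𝓝 0) := by
    have hterm := hs.tendsto_atTop_zero.comp (tendsto_add_atTop_nat 1)
    refine hterm.zero_mul_isBoundedUnder_le ?_
    exact isBoundedUnder_of ⟨2 * 2, norm_fineSum_succ_le hz hq⟩
  have hlim := (hs.hasSum.tendsto_sum_nat.comp (tendsto_add_atTop_nat 1)).add hrem
  rw [add_zero] at hlim
  refine tendsto_nhds_unique (tendsto_const_nhds.congr fun N => ?_) hlim
  exact fineSum_zero_eq_partialSum hz hq (N + 1)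

theorem hasSum_rankCoeff (hz : ‖z‖ = 1) (hq : ‖q‖ ≤ 1 / 16) :
    HasSum (fun n => rankCoeff z n * q ^ n) (R2 z q) := by
  rw [← fineSum_zero_eq_R2 hz hq, ← tsum_layerSum_eq_fineSum hz hq]
  exact hasSum_rankCoeff_layerSum hz hq

end FineTransformation

section Cauchy

lemma coeff_eq_circleIntegral {f : ℂ → ℂ} {a : ℕ → ℂ} {R : ℝ} (hR : 0 < R)
    (hf : DiffContOnCl ℂ f (Metric.ball 0 R))
    (hfa : ∀ᶠ q in 𝓝 0, HasSum (fun n => a n * q ^ n) (f q)) (n : ℕ) :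
    a n = (2 * π * I : ℂ)⁻¹ • ∮ q in C(0, R), (1 / (q - 0)) ^ n • (q - 0)⁻¹ • f q := by
  have hcauchy := hf.hasFPowerSeriesOnBall (R := ⟨R, hR.le⟩) hR
  have hseries : HasFPowerSeriesAt f (FormalMultilinearSeries.ofScalars ℂ a) 0 := by
    rw [hasFPowerSeriesAt_iff]
    filter_upwards [hfa] with q hq
    simpa only [FormalMultilinearSeries.coeff_ofScalars, smul_eq_mul, zero_add, mul_comm] using hq
  have heq := congrArg (fun p => p.coeff n)
    (hseries.eq_formalMultilinearSeries hcauchy.hasFPowerSeriesAt)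
  rw [FormalMultilinearSeries.coeff_ofScalars] at heq
  rw [heq, FormalMultilinearSeries.coeff]
  exact cauchyPowerSeries_apply f 0 R n 1

lemma coeff_eq_intervalIntegral {f : ℂ → ℂ} {a : ℕ → ℂ}
    (hf : DifferentiableOn ℂ f (Metric.ball 0 1))
    (hfa : ∀ᶠ q in 𝓝 0, HasSum (fun n => a n * q ^ n) (f q)) (n : ℕ) {t : ℝ} (ht : 0 < t) :
    a n = (1 / (2 * π) : ℂ) * ∫ φ in -π..π, f (exp (-(t - φ * I))) * exp (n * (t - φ * I)) := by
  set R : ℝ := Real.exp (-t) with hR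
  have hR0 : 0 < R := Real.exp_pos _
  have hR1 : R < 1 := Real.exp_lt_one_iff.2 (neg_neg_of_pos ht)
  have hcont : DiffContOnCl ℂ f (Metric.ball 0 R) :=
    (hf.mono (closure_ball (0 : ℂ) hR0.ne' ▸ Metric.closedBall_subset_ball hR1)).diffContOnCl
  have hper : Function.Periodic (fun θ : ℝ => deriv (circleMap 0 R) θ •
      ((1 / (circleMap 0 R θ - 0)) ^ n • (circleMap 0 R θ - 0)⁻¹ • f (circleMap 0 R θ)))
      (2 * π) := fun θ => by
    simp only [deriv_circleMap, periodic_circleMap 0 R θ]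
  have hshift := hper.intervalIntegral_add_eq 0 (-π)
  rw [zero_add, show -π + 2 * π = π by ring] at hshift
  rw [coeff_eq_circleIntegral hR0 hcont hfa n, circleIntegral, hshift,
    ← intervalIntegral.integral_smul, ← intervalIntegral.integral_const_mul]
  refine intervalIntegral.integral_congr fun φ _ => ?_
  have hcircle : circleMap 0 R φ = exp (-(t - φ * I)) := by
    rw [circleMap, zero_add, hR, ofReal_exp, ← exp_add]; congr 1; push_cast; ring
  have hpow : exp (n * (t - φ * I)) = (1 / exp (-(t - φ * I))) ^ n := by
    rw [exp_neg, one_div, inv_inv, ← exp_nat_mul]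
  simp only [deriv_circleMap, sub_zero, smul_eq_mul, hcircle, hpow]
  have hne := exp_ne_zero (-(t - φ * I))
  generalize exp (-(t - φ * I)) = y at *
  have hI := I_ne_zero
  have hπ : (π : ℂ) ≠ 0 := ofReal_ne_zero.2 Real.pi_ne_zero
  field_simp

lemma rankCoeff_eq_intervalIntegral {z : ℂ} (hz : ‖z‖ = 1) (n : ℕ) {t : ℝ} (ht : 0 < t) :
    rankCoeff z n = (1 / (2 * π) : ℂ) *
      ∫ φ in -π..π, R2 z (exp (-(t - φ * I))) * exp (n * (t - φ * I)) := by
  refine coeff_eq_intervalIntegral (differentiableOn_R2 hz) ?_ n ht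
  filter_upwards [Metric.closedBall_mem_nhds (0 : ℂ) (show (0 : ℝ) < 1 / 16 by norm_num)] with q hq
  exact hasSum_rankCoeff hz (mem_closedBall_zero_iff.1 hq)

end Cauchy

section BaileyPair

variable {z q : ℂ}

/-- The finite product `(q²; q²)_n`. -/
noncomputable def evenPochhammer (q : ℂ) (n : ℕ) : ℂ :=
  ∏ j ∈ Finset.range n, (1 - q ^ (2 * j + 2))

lemma evenPochhammer_zero (q : ℂ) : evenPochhammer q 0 = 1 := Finset.prod_range_zero _

lemma evenPochhammer_succ (q : ℂ) (n : ℕ) :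
    evenPochhammer q (n + 1) = evenPochhammer q n * (1 - q ^ (2 * n + 2)) :=
  Finset.prod_range_succ _ _

lemma one_sub_pow_ne_zero (hq : ‖q‖ < 1) {k : ℕ} (hk : k ≠ 0) : 1 - q ^ k ≠ 0 := by
  simpa only [one_mul] using one_sub_mul_ne_zero norm_one (norm_pow_lt_one hq hk)

lemma evenPochhammer_ne_zero (hq : ‖q‖ < 1) (n : ℕ) : evenPochhammer q n ≠ 0 :=
  Finset.prod_ne_zero_iff.2 fun _ _ => one_sub_pow_ne_zero hq (by omega)

lemma pow_le_norm_evenPochhammer (hq : ‖q‖ < 1) (n : ℕ) :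
    (1 - ‖q‖) ^ n ≤ ‖evenPochhammer q n‖ := by
  rw [evenPochhammer, norm_prod]
  calc (1 - ‖q‖) ^ n = ∏ _j ∈ Finset.range n, (1 - ‖q‖) := by
        rw [Finset.prod_const, Finset.card_range]
    _ ≤ _ := Finset.prod_le_prod (fun _ _ => sub_nonneg.2 hq.le) fun j _ => ?_
  have hpow := norm_pow_le_self hq.le (k := 2 * j + 2) (by omega)
  have hsub := one_sub_norm_le norm_one (q ^ (2 * j + 2))
  rw [one_mul] at hsub
  linarith

lemma norm_one_add_pow_le_two (hq : ‖q‖ < 1) (k : ℕ) : ‖1 + q ^ k‖ ≤ 2 := by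
  refine (norm_add_le _ _).trans ?_
  rw [norm_one, norm_pow]
  linarith [pow_le_one₀ (norm_nonneg q) hq.le (n := k)]

/-- The conjugate sequence `δ_n = q^{n²} (-q; q²)_n` of the Bailey transform. -/
noncomputable def baileyDelta (q : ℂ) (n : ℕ) : ℂ :=
  q ^ n ^ 2 * ∏ k ∈ Finset.range n, (1 + q ^ (2 * k + 1))

lemma baileyDelta_succ (q : ℂ) (n : ℕ) :
    baileyDelta q (n + 1) = baileyDelta q n * (q ^ (2 * n + 1) * (1 + q ^ (2 * n + 1))) := by
  rw [baileyDelta, Finset.prod_range_succ, baileyDelta,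
    show (n + 1) ^ 2 = n ^ 2 + (2 * n + 1) by ring, pow_add]
  ring

lemma norm_baileyDelta_le (hq : ‖q‖ < 1) (n : ℕ) : ‖baileyDelta q n‖ ≤ ‖q‖ ^ n ^ 2 * 2 ^ n := by
  rw [baileyDelta, norm_mul, norm_pow, norm_prod]
  gcongr
  refine (Finset.prod_le_prod (g := fun _ => (2 : ℝ)) (fun _ _ => norm_nonneg _)
    fun j _ => norm_one_add_pow_le_two hq _).trans_eq ?_
  rw [Finset.prod_const, Finset.card_range]

/-- The sequence `β_n = ∑_{r ≤ n} α_r / ((q²; q²)_{n-r} (q²; q²)_{n+r})` forming a Bailey pair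
(relative to `1`, in base `q²`) with `α`. -/
noncomputable def baileyBeta (α : ℕ → ℂ) (q : ℂ) (n : ℕ) : ℂ :=
  ∑ r ∈ Finset.range (n + 1), α r / (evenPochhammer q (n - r) * evenPochhammer q (n + r))

/-- The sequence `α` of the unit Bailey pair, whose `β` is `1, 0, 0, …`. -/
noncomputable def unitAlpha (q : ℂ) : ℕ → ℂ
  | 0 => 1
  | r + 1 => (-1) ^ (r + 1) * q ^ ((r + 1) * r) * (1 + q ^ (2 * r + 2))

/-- The sequence `α` of the Bailey pair attached to the M2-rank: its `β_n` is
`1 / ∏_{k ≤ n} (1 - z q^{2k}) (1 - z⁻¹ q^{2k})`. -/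
noncomputable def rankAlpha (z q : ℂ) : ℕ → ℂ
  | 0 => 1
  | r + 1 => (-1) ^ (r + 1) * q ^ ((r + 1) * (r + 2)) * (1 + q ^ (2 * r + 2)) *
      ((1 - z) * (1 - z⁻¹)) / ((1 - z * q ^ (2 * r + 2)) * (1 - z⁻¹ * q ^ (2 * r + 2)))

lemma sum_unitAlpha_div (hq : ‖q‖ < 1) {n : ℕ} (R s : ℕ) (hn : R + 1 + s = n) :
    (1 - q ^ (2 * n)) * ∑ r ∈ Finset.range (R + 1),
        unitAlpha q r / (evenPochhammer q (n - r) * evenPochhammer q (n + r)) =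
      (-1) ^ R * q ^ (R * (R + 1)) / (evenPochhammer q s * evenPochhammer q (n + R)) := by
  induction R generalizing s with
  | zero =>
    obtain rfl : n = s + 1 := by omega
    have := evenPochhammer_ne_zero hq s
    have := one_sub_pow_ne_zero hq (show 2 * s + 2 ≠ 0 by omega)
    simp only [zero_add, Finset.range_one, Finset.sum_singleton, unitAlpha, Nat.sub_zero, add_zero,
      evenPochhammer_succ]
    field_simp
    ring
  | succ R ih =>
    have := evenPochhammer_ne_zero hq s
    have := evenPochhammer_ne_zero hq (n + R)
    have := one_sub_pow_ne_zero hq (show 2 * s + 2 ≠ 0 by omega)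
    have := one_sub_pow_ne_zero hq (show 2 * (n + R) + 2 ≠ 0 by omega)
    rw [Finset.sum_range_succ, mul_add, ih (s + 1) (by omega), show n - (R + 1) = s + 1 by omega,
      unitAlpha, ← add_assoc n R 1, evenPochhammer_succ, evenPochhammer_succ]
    obtain rfl : n = R + 1 + 1 + s := by omega
    field_simp
    ring

lemma baileyBeta_unitAlpha (hq : ‖q‖ < 1) (n : ℕ) :
    baileyBeta (unitAlpha q) q n = if n = 0 then 1 else 0 := by
  rcases n with _ | n
  · simp [baileyBeta, unitAlpha, evenPochhammer]
  · rw [if_neg n.succ_ne_zero]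
    have h0 : 1 - q ^ (2 * (n + 1)) ≠ 0 := one_sub_pow_ne_zero hq (by omega)
    have := evenPochhammer_ne_zero hq (n + 1 + n)
    have := one_sub_pow_ne_zero hq (show 2 * (n + 1 + n) + 2 ≠ 0 by omega)
    apply mul_left_cancel₀ h0
    rw [baileyBeta, Finset.sum_range_succ, mul_add, sum_unitAlpha_div hq n 0 (add_zero _),
      mul_zero, unitAlpha, Nat.sub_self, evenPochhammer_zero,
      show n + 1 + (n + 1) = (n + 1 + n) + 1 by ring, evenPochhammer_succ]
    field_simp
    ring

lemma one_sub_mul_rankAlpha (hz : ‖z‖ = 1) (hq : ‖q‖ < 1) (r : ℕ) :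
    (1 - z * q ^ (2 * r)) * (1 - z⁻¹ * q ^ (2 * r)) * rankAlpha z q r =
      q ^ (2 * r) * ((1 - z) * (1 - z⁻¹)) * unitAlpha q r := by
  rcases r with _ | r
  · simp [rankAlpha, unitAlpha]
  · rw [rankAlpha, unitAlpha, mul_add_one 2 r, mul_div_cancel₀ _ (mul_ne_zero
      (one_sub_mul_pow_ne_zero hz hq _) (one_sub_mul_pow_ne_zero (norm_inv_eq_one hz) hq _))]
    ring

lemma rankAlpha_div_sub (hz : ‖z‖ = 1) (hq : ‖q‖ < 1) {n r : ℕ} (h : r ≤ n) :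
    rankAlpha z q r / (evenPochhammer q (n - r) * evenPochhammer q (n + r)) -
        (1 - z * q ^ (2 * n + 2)) * (1 - z⁻¹ * q ^ (2 * n + 2)) *
          (rankAlpha z q r / (evenPochhammer q (n + 1 - r) * evenPochhammer q (n + 1 + r))) =
      -q ^ (2 * n + 2) * ((1 - z) * (1 - z⁻¹)) *
        (unitAlpha q r / (evenPochhammer q (n + 1 - r) * evenPochhammer q (n + 1 + r))) := by
  obtain ⟨s, rfl⟩ := Nat.exists_eq_add_of_le h
  have hz0 : z ≠ 0 := norm_ne_zero_iff.1 (hz ▸ one_ne_zero)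
  have := evenPochhammer_ne_zero hq s
  have := evenPochhammer_ne_zero hq (r + s + r)
  have := one_sub_pow_ne_zero hq (show 2 * s + 2 ≠ 0 by omega)
  have := one_sub_pow_ne_zero hq (show 2 * (r + s + r) + 2 ≠ 0 by omega)
  have hα := one_sub_mul_rankAlpha hz hq r
  have hnum : ((1 - q ^ (2 * s + 2)) * (1 - q ^ (2 * (r + s + r) + 2)) -
      (1 - z * q ^ (2 * (r + s) + 2)) * (1 - z⁻¹ * q ^ (2 * (r + s) + 2))) * rankAlpha z q r =
      -q ^ (2 * (r + s) + 2) * ((1 - z) * (1 - z⁻¹)) * unitAlpha q r := by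
    rw [show q ^ (2 * (r + s) + 2) = q ^ (2 * s + 2) * q ^ (2 * r) by ring,
      show q ^ (2 * (r + s + r) + 2) = q ^ (2 * s + 2) * q ^ (2 * r) * q ^ (2 * r) by ring]
    linear_combination -q ^ (2 * s + 2) * hα + rankAlpha z q r *
      (q ^ (2 * s + 2) * (q ^ (2 * r)) ^ 2 - (q ^ (2 * s + 2) * q ^ (2 * r)) ^ 2) *
        mul_inv_cancel₀ hz0
  rw [show r + s - r = s by omega, show r + s + 1 - r = s + 1 by omega,
    show r + s + 1 + r = r + s + r + 1 by ring, evenPochhammer_succ, evenPochhammer_succ,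
    ← mul_div_assoc, ← mul_div_assoc, ← hnum]
  field_simp

lemma baileyBeta_rankAlpha_eq_mul_succ (hz : ‖z‖ = 1) (hq : ‖q‖ < 1) (n : ℕ) :
    baileyBeta (rankAlpha z q) q n = (1 - z * q ^ (2 * n + 2)) * (1 - z⁻¹ * q ^ (2 * n + 2)) *
      baileyBeta (rankAlpha z q) q (n + 1) := by
  have hunit := baileyBeta_unitAlpha hq (n + 1)
  rw [if_neg n.succ_ne_zero, baileyBeta, Finset.sum_range_succ] at hunit
  have hterms := Finset.sum_congr (rfl : Finset.range (n + 1) = _) fun r hr =>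
    rankAlpha_div_sub hz hq (Finset.mem_range_succ_iff.1 hr)
  rw [Finset.sum_sub_distrib, ← Finset.mul_sum, ← Finset.mul_sum] at hterms
  have hlast := one_sub_mul_rankAlpha hz hq (n + 1)
  rw [mul_add_one 2 n] at hlast
  rw [baileyBeta, baileyBeta, Finset.sum_range_succ _ (n + 1), mul_add]
  linear_combination hterms - q ^ (2 * n + 2) * ((1 - z) * (1 - z⁻¹)) * hunit -
    hlast / (evenPochhammer q (n + 1 - (n + 1)) * evenPochhammer q (n + 1 + (n + 1)))

lemma baileyDelta_mul_baileyBeta (hz : ‖z‖ = 1) (hq : ‖q‖ < 1) (n : ℕ) :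
    baileyDelta q n * baileyBeta (rankAlpha z q) q n = rankTerm z q n := by
  induction n with
  | zero => simp [baileyDelta, baileyBeta, rankTerm, rankAlpha, evenPochhammer]
  | succ n ih =>
    have h1 := one_sub_mul_pow_ne_zero hz hq (2 * n + 1)
    have h2 := one_sub_mul_pow_ne_zero (norm_inv_eq_one hz) hq (2 * n + 1)
    rw [rankTerm_succ, ← ih, baileyDelta_succ, baileyBeta_rankAlpha_eq_mul_succ hz hq n, rankRatio,
      ← mul_div_assoc, eq_div_iff (mul_ne_zero h1 h2)]
    ring

end BaileyPair

section BaileyTransform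

variable {z q : ℂ}

/-- The term `δ_{r+m} / ((q²; q²)_m (q²; q²)_{m+2r})` of the series `γ_r` of the Bailey
transform. -/
noncomputable def gammaTerm (q : ℂ) (r m : ℕ) : ℂ :=
  baileyDelta q (r + m) / (evenPochhammer q m * evenPochhammer q (m + 2 * r))

/-- The sequence `γ` conjugate to `baileyDelta` in the Bailey transform. -/
noncomputable def baileyGamma (q : ℂ) (r : ℕ) : ℂ := ∑' m, gammaTerm q r m

lemma norm_gammaTerm_le (hq : ‖q‖ < 1) (r m : ℕ) :
    ‖gammaTerm q r m‖ ≤ (‖q‖ ^ r ^ 2 * (2 / (1 - ‖q‖) ^ 2) ^ r) *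
      (‖q‖ ^ m ^ 2 * (2 / (1 - ‖q‖) ^ 2) ^ m) := by
  have : 0 < 1 - ‖q‖ := sub_pos.2 hq
  rw [gammaTerm, norm_div, norm_mul]
  calc ‖baileyDelta q (r + m)‖ / (‖evenPochhammer q m‖ * ‖evenPochhammer q (m + 2 * r)‖)
      ≤ (‖q‖ ^ (r + m) ^ 2 * 2 ^ (r + m)) / ((1 - ‖q‖) ^ m * (1 - ‖q‖) ^ (m + 2 * r)) := by
        gcongr
        exacts [norm_baileyDelta_le hq _, pow_le_norm_evenPochhammer hq _,
          pow_le_norm_evenPochhammer hq _]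
    _ = ‖q‖ ^ (r + m) ^ 2 * (2 / (1 - ‖q‖) ^ 2) ^ (r + m) := by
        rw [← pow_add, show m + (m + 2 * r) = 2 * (r + m) by ring, div_pow, pow_mul, mul_div_assoc]
    _ ≤ ‖q‖ ^ (r ^ 2 + m ^ 2) * (2 / (1 - ‖q‖) ^ 2) ^ (r + m) := by
        refine mul_le_mul_of_nonneg_right
          (pow_le_pow_of_le_one (norm_nonneg _) hq.le ?_) (by positivity)
        nlinarith [Nat.zero_le (r * m)]
    _ = _ := by rw [pow_add, pow_add]; ring

lemma summable_gammaBound (hq : ‖q‖ < 1) :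
    Summable fun n : ℕ => ‖q‖ ^ n ^ 2 * (2 / (1 - ‖q‖) ^ 2) ^ n :=
  summable_pow_sq_mul_pow (norm_nonneg q) hq (by positivity)

lemma summable_gammaTerm (hq : ‖q‖ < 1) (r : ℕ) : Summable (gammaTerm q r) :=
  .of_norm_bounded ((summable_gammaBound hq).mul_left _) (norm_gammaTerm_le hq r)

lemma one_sub_pow_mul_gammaTerm_succ_sub (hq : ‖q‖ < 1) (r m : ℕ) :
    (1 - q ^ (2 * r + 1)) * (1 - q ^ (2 * (m + 1))) * gammaTerm q r (m + 1) -
        (1 - q ^ (2 * r + 1)) * (1 - q ^ (2 * m)) * gammaTerm q r m =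
      q ^ (2 * r + 1) * gammaTerm q r m - (1 - q ^ (2 * m)) * baileyDelta q (r + m) /
        (evenPochhammer q m * evenPochhammer q (m + 2 * r + 1)) := by
  have := evenPochhammer_ne_zero hq m
  have := evenPochhammer_ne_zero hq (m + 2 * r)
  have := one_sub_pow_ne_zero hq (show 2 * m + 2 ≠ 0 by omega)
  have := one_sub_pow_ne_zero hq (show 2 * (m + 2 * r) + 2 ≠ 0 by omega)
  rw [gammaTerm, gammaTerm, evenPochhammer_succ, show m + 1 + 2 * r = m + 2 * r + 1 by ring,
    evenPochhammer_succ, ← add_assoc r m 1, baileyDelta_succ, show 2 * (m + 1) = 2 * m + 2 by ring]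
  field_simp
  ring

lemma hasSum_gammaTerm_shift (hq : ‖q‖ < 1) (r : ℕ) :
    HasSum (fun m => (1 - q ^ (2 * m)) * baileyDelta q (r + m) /
      (evenPochhammer q m * evenPochhammer q (m + 2 * r + 1))) (baileyGamma q (r + 1)) := by
  refine (hasSum_nat_add_iff' 1).1 ?_
  simp only [Finset.sum_range_one, mul_zero, pow_zero, sub_self, zero_mul, zero_div, sub_zero]
  refine (summable_gammaTerm hq (r + 1)).hasSum.congr_fun fun m => ?_
  have := evenPochhammer_ne_zero hq m
  have := evenPochhammer_ne_zero hq (m + 2 * r + 2)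
  have := one_sub_pow_ne_zero hq (show 2 * m + 2 ≠ 0 by omega)
  rw [gammaTerm, evenPochhammer_succ, show m + 1 + 2 * r + 1 = m + 2 * r + 2 by ring,
    show m + 2 * (r + 1) = m + 2 * r + 2 by ring, show r + (m + 1) = r + 1 + m by ring,
    show 2 * (m + 1) = 2 * m + 2 by ring]
  field_simp

lemma baileyGamma_succ (hq : ‖q‖ < 1) (r : ℕ) :
    baileyGamma q (r + 1) = q ^ (2 * r + 1) * baileyGamma q r := by
  set V : ℕ → ℂ := fun m => (1 - q ^ (2 * r + 1)) * (1 - q ^ (2 * m)) * gammaTerm q r m with hV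
  have hsum := summable_gammaTerm hq r
  have hVsum : Summable V := by
    have hle (k : ℕ) : ‖1 - q ^ k‖ ≤ 2 := by
      refine (norm_sub_le _ _).trans ?_
      rw [norm_one, norm_pow]
      linarith [pow_le_one₀ (norm_nonneg q) hq.le (n := k)]
    refine .of_norm_bounded (hsum.norm.mul_left (2 * 2)) fun m => ?_
    rw [hV, norm_mul, norm_mul]
    gcongr <;> exact hle _
  have htelescope : ∑' m, (V (m + 1) - V m) = 0 := by
    rw [((summable_nat_add_iff 1).2 hVsum).tsum_sub hVsum, hVsum.tsum_eq_zero_add]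
    simp [hV]
  simp_rw [hV, one_sub_pow_mul_gammaTerm_succ_sub hq r] at htelescope
  have hshift := hasSum_gammaTerm_shift hq r
  rw [(hsum.mul_left _).tsum_sub hshift.summable, tsum_mul_left, hshift.tsum_eq] at htelescope
  exact (sub_eq_zero.1 htelescope).symm

lemma baileyGamma_eq (hq : ‖q‖ < 1) (r : ℕ) : baileyGamma q r = q ^ r ^ 2 * baileyGamma q 0 := by
  induction r with
  | zero => simp
  | succ r ih =>
    rw [baileyGamma_succ hq, ih, show (r + 1) ^ 2 = r ^ 2 + (2 * r + 1) by ring, pow_add]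
    ring

lemma tsum_prod_eq_tsum_antidiagonal {F : ℕ × ℕ → ℂ} (hF : Summable F) :
    ∑' p, F p = ∑' n, ∑ p ∈ Finset.HasAntidiagonal.antidiagonal n, F p := by
  have hsigma := (Finset.HasAntidiagonal.sigmaAntidiagonalEquivProd.summable_iff.2 hF).tsum_sigma'
    fun n => (hasSum_fintype _).summable
  rw [← Finset.HasAntidiagonal.sigmaAntidiagonalEquivProd.tsum_eq F]
  refine hsigma.trans ?_
  refine tsum_congr fun n => ?_
  rw [tsum_fintype]
  exact Finset.sum_attach (Finset.HasAntidiagonal.antidiagonal n) F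

lemma tsum_baileyDelta_mul_baileyBeta (hq : ‖q‖ < 1) {α : ℕ → ℂ} {C : ℝ}
    (hα : ∀ r, ‖α r‖ ≤ C) :
    ∑' n, baileyDelta q n * baileyBeta α q n = baileyGamma q 0 * ∑' r, α r * q ^ r ^ 2 := by
  have hbound := summable_gammaBound hq
  have hF : Summable fun p : ℕ × ℕ => α p.1 * gammaTerm q p.1 p.2 := by
    refine .of_norm_bounded ((hbound.mul_of_nonneg hbound (fun n => by positivity)
      fun n => by positivity).mul_left C) fun p => ?_
    rw [norm_mul]
    exact mul_le_mul (hα _) (norm_gammaTerm_le hq _ _) (norm_nonneg _)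
      ((norm_nonneg _).trans (hα 0))
  have hdiag (n : ℕ) : ∑ p ∈ Finset.HasAntidiagonal.antidiagonal n, α p.1 * gammaTerm q p.1 p.2 =
      baileyDelta q n * baileyBeta α q n := by
    rw [Finset.Nat.sum_antidiagonal_eq_sum_range_succ_mk, baileyBeta, Finset.mul_sum]
    refine Finset.sum_congr rfl fun r hr => ?_
    have hr' : r ≤ n := Finset.mem_range_succ_iff.1 hr
    rw [gammaTerm, show r + (n - r) = n by omega, show n - r + 2 * r = n + r by omega]
    ring
  calc ∑' n, baileyDelta q n * baileyBeta α q n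
      = ∑' p : ℕ × ℕ, α p.1 * gammaTerm q p.1 p.2 := by
        rw [tsum_prod_eq_tsum_antidiagonal hF]
        simp_rw [hdiag]
    _ = ∑' r, α r * baileyGamma q r := by
        rw [hF.tsum_prod]
        simp_rw [tsum_mul_left, baileyGamma]
    _ = baileyGamma q 0 * ∑' r, α r * q ^ r ^ 2 := by
        rw [← tsum_mul_left]
        refine tsum_congr fun r => ?_
        rw [baileyGamma_eq hq]
        ring

/-- The theta series `∑ α_r q^{r²}` of the unit Bailey pair. -/
noncomputable def thetaSeries (q : ℂ) : ℂ := ∑' r, unitAlpha q r * q ^ r ^ 2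

/-- The Appell–Lerch type series `∑ α_r q^{r²}` of the M2-rank Bailey pair. -/
noncomputable def appellSeries (z q : ℂ) : ℂ := ∑' r, rankAlpha z q r * q ^ r ^ 2

lemma norm_neg_one_pow_mul_pow_mul_le (hq : ‖q‖ < 1) (a b c : ℕ) :
    ‖(-1) ^ a * q ^ b * (1 + q ^ c)‖ ≤ 2 := by
  rw [norm_mul, norm_mul, norm_pow, norm_neg, norm_one, one_pow, one_mul, norm_pow]
  calc ‖q‖ ^ b * ‖1 + q ^ c‖ ≤ 1 * 2 := by
        gcongr
        exacts [pow_le_one₀ (norm_nonneg q) hq.le, norm_one_add_pow_le_two hq c]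
    _ = 2 := one_mul 2

lemma norm_unitAlpha_le (hq : ‖q‖ < 1) (r : ℕ) : ‖unitAlpha q r‖ ≤ 2 := by
  rcases r with _ | r
  · simp [unitAlpha]
  · exact norm_neg_one_pow_mul_pow_mul_le hq _ _ _

lemma norm_rankAlpha_le (hz : ‖z‖ = 1) (hq : ‖q‖ < 1) (r : ℕ) :
    ‖rankAlpha z q r‖ ≤ 8 / (1 - ‖q‖) ^ 2 := by
  have : 0 < 1 - ‖q‖ := sub_pos.2 hq
  rcases r with _ | r
  · rw [rankAlpha, norm_one, le_div_iff₀ (by positivity)]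
    nlinarith [norm_nonneg q]
  · have hnum {w : ℂ} (hw : ‖w‖ = 1) : ‖1 - w‖ ≤ 2 := by
      linarith [norm_sub_le 1 w, norm_one (α := ℂ)]
    have hden {w : ℂ} (hw : ‖w‖ = 1) : 1 - ‖q‖ ≤ ‖1 - w * q ^ (2 * r + 2)‖ := by
      linarith [norm_pow_le_self hq.le (k := 2 * r + 2) (by omega),
        one_sub_norm_le hw (q ^ (2 * r + 2))]
    have hz' := norm_inv_eq_one hz
    rw [rankAlpha, norm_div, norm_mul, norm_mul (1 - z), norm_mul (1 - z * _)]
    calc _ ≤ 2 * (2 * 2) / ((1 - ‖q‖) * (1 - ‖q‖)) := by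
          gcongr
          exacts [norm_neg_one_pow_mul_pow_mul_le hq _ _ _, hnum hz, hnum hz', hden hz, hden hz']
      _ = 8 / (1 - ‖q‖) ^ 2 := by ring

lemma baileyGamma_mul_thetaSeries (hq : ‖q‖ < 1) : baileyGamma q 0 * thetaSeries q = 1 := by
  rw [thetaSeries, ← tsum_baileyDelta_mul_baileyBeta hq (norm_unitAlpha_le hq)]
  simp_rw [baileyBeta_unitAlpha hq]
  rw [tsum_eq_single 0 fun n hn => by rw [if_neg hn, mul_zero]]
  simp [baileyDelta]

lemma R2_mul_thetaSeries (hz : ‖z‖ = 1) (hq : ‖q‖ < 1) :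
    R2 z q * thetaSeries q = appellSeries z q := by
  have hR2 : R2 z q = baileyGamma q 0 * appellSeries z q := by
    rw [appellSeries, ← tsum_baileyDelta_mul_baileyBeta hq (norm_rankAlpha_le hz hq), R2]
    simp_rw [baileyDelta_mul_baileyBeta hz hq]
  rw [hR2, mul_right_comm, baileyGamma_mul_thetaSeries hq, one_mul]

end BaileyTransform

section PartialFractions

lemma pi_div_sin_eq_cot_sub_cot {x : ℂ} (hx : x ∈ integerComplement) :
    π / sin (π * x) = π * cot (π * (x / 2)) - π * cot (π * x) := by
  have hsin := sin_pi_mul_ne_zero hx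
  rw [cot, cot]
  rw [show (π : ℂ) * x = 2 * (π * (x / 2)) by ring, sin_two_mul] at hsin ⊢
  rw [cos_two_mul]
  have := right_ne_zero_of_mul hsin
  have := right_ne_zero_of_mul (left_ne_zero_of_mul hsin)
  field_simp
  ring

lemma hasSum_pi_div_sin {x : ℂ} (hx : x ∈ integerComplement) :
    HasSum (fun n : ℕ => (-1 : ℂ) ^ (n + 1) * (1 / (x - (n + 1)) + 1 / (x + (n + 1))))
      (π / sin (π * x) - 1 / x) := by
  have hx2 : x / 2 ∈ integerComplement := by
    rintro ⟨n, hn⟩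
    exact hx ⟨2 * n, by push_cast; rw [hn]; ring⟩
  set c : ℕ → ℂ := fun n => 1 / (x - (n + 1)) + 1 / (x + (n + 1)) with hc
  have hsum : Summable c := summable_cotTerm hx
  have heven : Summable fun k => c (2 * k) :=
    hsum.comp_injective (mul_right_injective₀ two_ne_zero)
  have hodd : Summable fun k => c (2 * k + 1) :=
    hsum.comp_injective fun a b h => by simpa using h
  have hhalf := cot_series_rep' hx2
  have hterm (n : ℕ) : 1 / (x / 2 - (n + 1)) + 1 / (x / 2 + (n + 1)) = 2 * c (2 * n + 1) := by
    simp only [hc]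
    push_cast
    rw [show x / 2 - (n + 1) = (x - (2 * n + 1 + 1)) / 2 by ring,
      show x / 2 + (n + 1) = (x + (2 * n + 1 + 1)) / 2 by ring, one_div_div, one_div_div]
    ring
  simp_rw [hterm] at hhalf
  rw [tsum_mul_left, one_div_div] at hhalf
  have hval : π / sin (π * x) - 1 / x = ∑' k, -c (2 * k) + ∑' k, c (2 * k + 1) := by
    rw [tsum_neg, pi_div_sin_eq_cot_sub_cot hx]
    linear_combination hhalf - cot_series_rep' hx + tsum_even_add_odd heven hodd
  rw [hval]
  refine .even_add_odd (heven.neg.hasSum.congr_fun fun k => ?_)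
    (hodd.hasSum.congr_fun fun k => ?_)
  · simp [hc, pow_succ, pow_mul]
  · simp [hc, pow_succ, pow_mul]

/-- The even meromorphic function of `u` that generalises `1 / cosh u` (the case `a = 1/2`); at
`u = r τ` it is, up to elementary factors, the `r`-th term of `appellSeries (e^{2πia}) (e^{-τ})`. -/
noncomputable def sechKernel (a : ℝ) (u : ℂ) : ℂ :=
  2 * sin (π * a) * cosh u / (cosh (2 * u) - cos (2 * (π * a)))

/-- The numbers `π (k + a)`; the poles of `sechKernel a` are `±i pole a k` and
`±i pole (1 - a) k`. -/
noncomputable def pole (a : ℝ) (k : ℕ) : ℝ := π * (k + a)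

lemma pole_pos {a : ℝ} (ha : 0 < a) (k : ℕ) : 0 < pole a k := by
  unfold pole
  positivity

lemma add_I_mul_div_pi_mem_integerComplement {a : ℝ} (ha : 0 < a) (ha' : a < 1) {u : ℂ}
    (hu : u = 0 ∨ u.re ≠ 0) : a + I * u / π ∈ integerComplement := by
  rintro ⟨n, hn⟩
  have him : u.re = 0 := by simpa [Real.pi_ne_zero] using (congrArg im hn).symm
  obtain rfl : u = 0 := hu.resolve_right (not_not.2 him)
  have hna : (n : ℝ) = a := by simpa using congrArg re hn
  have h0 : 0 < n := by exact_mod_cast hna ▸ ha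
  have h1 : n < 1 := by exact_mod_cast hna ▸ ha'
  omega

lemma sechKernel_eq_inv_sin_add_inv_sin {a : ℝ} {u : ℂ}
    (h₁ : a + I * u / π ∈ integerComplement) (h₂ : a + I * -u / π ∈ integerComplement) :
    sechKernel a u =
      (1 / 2) * (1 / sin (π * (a + I * u / π)) + 1 / sin (π * (a + I * -u / π))) := by
  have hπ : (π : ℂ) ≠ 0 := ofReal_ne_zero.2 Real.pi_ne_zero
  have := sin_pi_mul_ne_zero h₁
  have := sin_pi_mul_ne_zero h₂
  have hsin (w : ℂ) : sin (π * (a + I * w / π)) =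
      sin (π * a) * cosh w + cos (π * a) * (sinh w * I) := by
    rw [show (π : ℂ) * (a + I * w / π) = π * a + w * I by field_simp, sin_add, cos_mul_I,
      sin_mul_I]
  have hadd : 2 * sin (π * a) * cosh u =
      sin (π * (a + I * u / π)) + sin (π * (a + I * -u / π)) := by
    rw [hsin, hsin, cosh_neg, sinh_neg]
    ring
  have hmul : cosh (2 * u) - cos (2 * (π * a)) =
      2 * (sin (π * (a + I * u / π)) * sin (π * (a + I * -u / π))) := by
    rw [hsin, hsin, cosh_neg, sinh_neg, cosh_two_mul, cos_two_mul]
    linear_combination 2 * cos (π * a) ^ 2 * sinh u ^ 2 * I_sq +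
      (2 * cos (π * a) ^ 2 - 1) * cosh_sq u - 2 * cosh u ^ 2 * sin_sq_add_cos_sq (π * a)
  rw [sechKernel, hadd, hmul]
  generalize sin (π * (a + I * u / π)) = s₁, sin (π * (a + I * -u / π)) = s₂ at *
  field_simp
  ring

lemma pole_div_sq_add_sq {a : ℝ} {k : ℕ} {u : ℂ} (h₁ : k + a + I * u / π ≠ 0)
    (h₂ : k + a - I * u / π ≠ 0) : pole a k / (pole a k ^ 2 + u ^ 2) =
      1 / (2 * π) * (1 / (k + a + I * u / π) + 1 / (k + a - I * u / π)) := by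
  have hπ : (π : ℂ) ≠ 0 := ofReal_ne_zero.2 Real.pi_ne_zero
  have hden : (pole a k : ℂ) ^ 2 + u ^ 2 =
      π ^ 2 * ((k + a + I * u / π) * (k + a - I * u / π)) := by
    have hI : I ^ 2 = -1 := I_sq
    rw [pole]
    push_cast
    field_simp
    linear_combination u ^ 2 * hI
  have hsum : 1 / (k + a + I * u / π) + 1 / (k + a - I * u / π) =
      2 * (k + a) / ((k + a + I * u / π) * (k + a - I * u / π)) := by
    rw [one_div_add_one_div h₁ h₂]
    ring
  rw [hden, hsum, pole]
  generalize (k + a + I * u / π) * (k + a - I * u / π) = d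
  push_cast
  rcases eq_or_ne d 0 with rfl | hd
  · simp
  · field_simp

lemma tendsto_pole_div_sq_add_sq (a : ℝ) (u : ℂ) :
    Tendsto (fun k => (pole a k : ℂ) / (pole a k ^ 2 + u ^ 2)) atTop (𝓝 0) := by
  have hpole : Tendsto (pole a) atTop atTop :=
    (tendsto_atTop_add_const_right _ _ tendsto_natCast_atTop_atTop).const_mul_atTop Real.pi_pos
  have hinv : Tendsto (fun k => (pole a k : ℂ)⁻¹) atTop (𝓝 0) := by
    simpa [Function.comp_def] using
      (continuous_ofReal.tendsto 0).comp (tendsto_inv_atTop_zero.comp hpole)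
  have hlim : Tendsto (fun k => (pole a k : ℂ)⁻¹ / (1 + u ^ 2 * (pole a k : ℂ)⁻¹ ^ 2)) atTop
      (𝓝 (0 / (1 + u ^ 2 * 0 ^ 2))) :=
    hinv.div (((hinv.pow 2).const_mul _).const_add _) (by simp)
  rw [zero_div] at hlim
  refine hlim.congr' ?_
  filter_upwards [hpole.eventually_gt_atTop 0] with k hk
  have hk' : (pole a k : ℂ) ≠ 0 := ofReal_ne_zero.2 hk.ne'
  have hden : (pole a k : ℂ) ^ 2 + u ^ 2 =
      pole a k ^ 2 * (1 + u ^ 2 * (pole a k : ℂ)⁻¹ ^ 2) := by field_simp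
  rw [hden, ← div_div, sq (pole a k : ℂ), div_mul_cancel_left₀ hk']

lemma natCast_add_add_ne_zero {a : ℝ} (ha : 0 < a) {u : ℂ} (hu : u = 0 ∨ u.re ≠ 0) (k : ℕ) :
    (k : ℂ) + a + I * u / π ≠ 0 := by
  rintro h
  have him : u.re = 0 := by simpa [Real.pi_ne_zero] using congrArg im h
  obtain rfl : u = 0 := hu.resolve_right (not_not.2 him)
  have hre : (k : ℝ) + a = 0 := by simpa using congrArg re h
  linarith [(Nat.cast_nonneg k : (0 : ℝ) ≤ k)]

lemma pole_div_eq_sum_one_div {a : ℝ} (ha : 0 < a) {u : ℂ} (hu : u = 0 ∨ u.re ≠ 0) (k : ℕ) :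
    pole a k / (pole a k ^ 2 + u ^ 2) =
      1 / (2 * π) * (1 / (k + a + I * u / π) + 1 / (k + a + I * -u / π)) := by
  have hneg : -u = 0 ∨ (-u).re ≠ 0 := hu.imp neg_eq_zero.2 fun h => neg_ne_zero.2 h
  have h₂ := natCast_add_add_ne_zero ha hneg k
  rw [mul_neg, neg_div, ← sub_eq_add_neg] at h₂ ⊢
  exact pole_div_sq_add_sq (natCast_add_add_ne_zero ha hu k) h₂

lemma hasSum_sechKernel {a : ℝ} (ha : 0 < a) (ha' : a < 1) {u : ℂ} (hu : u = 0 ∨ u.re ≠ 0) :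
    HasSum (fun n : ℕ => (-1 : ℂ) ^ n * (pole (1 - a) n / (pole (1 - a) n ^ 2 + u ^ 2)) +
        (-1) ^ (n + 1) * (pole a (n + 1) / (pole a (n + 1) ^ 2 + u ^ 2)))
      (sechKernel a u - pole a 0 / (pole a 0 ^ 2 + u ^ 2)) := by
  have hneg : -u = 0 ∨ (-u).re ≠ 0 := hu.imp neg_eq_zero.2 fun h => neg_ne_zero.2 h
  have hπ : (π : ℂ) ≠ 0 := ofReal_ne_zero.2 Real.pi_ne_zero
  have h₁ := add_I_mul_div_pi_mem_integerComplement ha ha' hu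
  have h₂ := add_I_mul_div_pi_mem_integerComplement ha ha' hneg
  have hsum := ((hasSum_pi_div_sin h₁).add (hasSum_pi_div_sin h₂)).mul_left (1 / (2 * π) : ℂ)
  have hval : sechKernel a u - pole a 0 / (pole a 0 ^ 2 + u ^ 2) =
      1 / (2 * π) * (π / sin (π * (a + I * u / π)) - 1 / (a + I * u / π) +
        (π / sin (π * (a + I * -u / π)) - 1 / (a + I * -u / π))) := by
    rw [sechKernel_eq_inv_sin_add_inv_sin h₁ h₂, pole_div_eq_sum_one_div ha hu]
    push_cast
    rw [zero_add]
    field_simp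
    ring
  rw [hval]
  refine hsum.congr_fun fun n => ?_
  rw [pole_div_eq_sum_one_div (sub_pos.2 ha') hu, pole_div_eq_sum_one_div ha hu]
  push_cast
  rw [show a + I * u / π - (n + 1) = -(n + (1 - a) + I * -u / π) by ring,
    show a + I * -u / π - (n + 1) = -(n + (1 - a) + I * u / π) by ring,
    one_div_neg_eq_neg_one_div, one_div_neg_eq_neg_one_div,
    show a + I * u / π + (n + 1) = n + 1 + a + I * u / π by ring,
    show a + I * -u / π + (n + 1) = n + 1 + a + I * -u / π by ring, pow_succ]
  ring

lemma tendsto_sum_pole_div {a : ℝ} (ha : 0 < a) (ha' : a < 1) {u : ℂ}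
    (hu : u = 0 ∨ u.re ≠ 0) :
    Tendsto (fun N => ∑ k ∈ Finset.range N, (-1 : ℂ) ^ k * (pole a k / (pole a k ^ 2 + u ^ 2) +
      pole (1 - a) k / (pole (1 - a) k ^ 2 + u ^ 2))) atTop (𝓝 (sechKernel a u)) := by
  have hlast : Tendsto (fun N => (-1 : ℂ) ^ N * (pole a N / (pole a N ^ 2 + u ^ 2)))
      atTop (𝓝 0) := by
    rw [tendsto_zero_iff_norm_tendsto_zero]
    simpa using (tendsto_pole_div_sq_add_sq a u).norm
  have hlim := ((hasSum_sechKernel ha ha' hu).tendsto_sum_nat.add_const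
    ((pole a 0 : ℂ) / (pole a 0 ^ 2 + u ^ 2))).sub hlast
  rw [sub_add_cancel, sub_zero] at hlim
  refine hlim.congr fun N => ?_
  have hshift := (Finset.sum_range_succ' (fun k => (-1 : ℂ) ^ k *
    (pole a k / (pole a k ^ 2 + u ^ 2))) N).symm.trans (Finset.sum_range_succ _ N)
  simp only [mul_add, Finset.sum_add_distrib]
  linear_combination hshift

end PartialFractions

section FourierKernel

/-- The closed sector of the right half plane of slope `K`, on which the asymptotics at the cusp
`q = 1` are uniform. -/
def cone (K : ℝ) : Set ℂ := {s | 0 ≤ s.re ∧ |s.im| ≤ K * s.re}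

lemma ofReal_mul_mem_cone {K t : ℝ} (ht : 0 ≤ t) {s : ℂ} (hs : s ∈ cone K) :
    (t : ℂ) * s ∈ cone K := by
  refine ⟨by rw [re_ofReal_mul]; exact mul_nonneg ht hs.1, ?_⟩
  rw [re_ofReal_mul, im_ofReal_mul, abs_mul, abs_of_nonneg ht, mul_left_comm]
  exact mul_le_mul_of_nonneg_left hs.2 ht

lemma inv_mem_cone {K : ℝ} {s : ℂ} (hs : s ∈ cone K) : s⁻¹ ∈ cone K := by
  have hn := normSq_nonneg s
  refine ⟨by rw [inv_re]; exact div_nonneg hs.1 hn, ?_⟩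
  rw [inv_re, inv_im, abs_div, abs_neg, abs_of_nonneg hn, ← mul_div_assoc]
  exact div_le_div_of_nonneg_right hs.2 hn

lemma ofReal_div_mem_cone {K t : ℝ} (ht : 0 ≤ t) {s : ℂ} (hs : s ∈ cone K) :
    (t : ℂ) / s ∈ cone K := by
  rw [div_eq_mul_inv]
  exact ofReal_mul_mem_cone ht (inv_mem_cone hs)

lemma ofReal_div_re (t : ℝ) (s : ℂ) : ((t : ℂ) / s).re = t * (s⁻¹).re := by
  rw [div_eq_mul_inv, re_ofReal_mul]

lemma inv_re_pos {s : ℂ} (hs : 0 < s.re) : 0 < (s⁻¹).re := by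
  rw [inv_re]
  exact div_pos hs (normSq_pos.2 (ne_zero_of_re_pos hs))

lemma norm_exp_neg_ofReal_mul (t : ℝ) (s : ℂ) : ‖exp (-(t * s))‖ = Real.exp (-(t * s.re)) := by
  rw [norm_exp, neg_re, re_ofReal_mul]

lemma exists_le_norm_one_add_exp_neg {K : ℝ} (hK : 0 < K) :
    ∃ c > 0, ∀ s ∈ cone K, c ≤ ‖1 + exp (-s)‖ := by
  refine ⟨1 - Real.exp (-(π / (2 * K))), ?_, fun s hs => ?_⟩
  · have : 0 < π / (2 * K) := by positivity
    rwa [gt_iff_lt, sub_pos, Real.exp_lt_one_iff, neg_lt_zero]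
  rcases le_or_gt |s.im| (π / 2) with him | him
  · calc 1 - Real.exp (-(π / (2 * K))) ≤ 1 := sub_le_self _ (Real.exp_pos _).le
      _ ≤ 1 + Real.exp (-s.re) * Real.cos s.im :=
        le_add_of_nonneg_right (mul_nonneg (Real.exp_pos _).le
          (Real.cos_nonneg_of_mem_Icc (abs_le.1 him)))
      _ = (1 + exp (-s)).re := by
        rw [add_re, one_re, exp_re, neg_re, neg_im, Real.cos_neg]
      _ ≤ ‖1 + exp (-s)‖ := re_le_norm _
  · have hre : π / (2 * K) ≤ s.re := by
      rw [← div_div, div_le_iff₀' hK]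
      exact him.le.trans hs.2
    calc 1 - Real.exp (-(π / (2 * K))) ≤ 1 - Real.exp (-s.re) := by gcongr
      _ = ‖(1 : ℂ)‖ - ‖exp (-s)‖ := by rw [norm_one, norm_exp, neg_re]
      _ ≤ ‖1 + exp (-s)‖ := norm_sub_le_norm_add _ _

/-- The kernel whose cosine transform along the ray through `1 / τ` is `sechKernel a`, see
`integral_fourierKernel_mul_cos`. -/
noncomputable def fourierKernel (a : ℝ) (s : ℂ) : ℂ :=
  (exp (-((π * a : ℝ) * s)) + exp (-((π * (1 - a) : ℝ) * s))) / (1 + exp (-(π * s)))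

lemma one_add_exp_neg_pi_mul_ne_zero {K : ℝ} (hK : 0 < K) {s : ℂ} (hs : s ∈ cone K) :
    1 + exp (-(π * s)) ≠ 0 := by
  obtain ⟨c, hc, hle⟩ := exists_le_norm_one_add_exp_neg hK
  exact norm_pos_iff.1 (hc.trans_le (hle _ (ofReal_mul_mem_cone Real.pi_pos.le hs)))

lemma exists_norm_fourierKernel_le {K a : ℝ} (hK : 0 < K) (ha : a ≤ 1 / 2) :
    ∃ C > 0, ∀ s ∈ cone K, ‖fourierKernel a s‖ ≤ C * Real.exp (-(π * a * s.re)) := by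
  obtain ⟨c, hc, hle⟩ := exists_le_norm_one_add_exp_neg hK
  refine ⟨2 / c, by positivity, fun s hs => ?_⟩
  have hden := hle _ (ofReal_mul_mem_cone Real.pi_pos.le hs)
  have hre := hs.1
  have hnum : ‖exp (-((π * a : ℝ) * s)) + exp (-((π * (1 - a) : ℝ) * s))‖ ≤
      2 * Real.exp (-(π * a * s.re)) := by
    have hmono : Real.exp (-(π * (1 - a) * s.re)) ≤ Real.exp (-(π * a * s.re)) := by
      gcongr
      linarith
    refine (norm_add_le _ _).trans ?_
    rw [norm_exp_neg_ofReal_mul, norm_exp_neg_ofReal_mul]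
    linarith
  rw [fourierKernel, norm_div, div_mul_eq_mul_div]
  gcongr

lemma exists_norm_fourierKernel_sub_le {K a : ℝ} (hK : 0 < K) (ha : 0 ≤ a) :
    ∃ C > 0, ∀ s ∈ cone K, ‖fourierKernel a s - exp (-((π * a : ℝ) * s))‖ ≤
      C * Real.exp (-(π * (1 - a) * s.re)) := by
  obtain ⟨c, hc, hle⟩ := exists_le_norm_one_add_exp_neg hK
  refine ⟨2 / c, by positivity, fun s hs => ?_⟩
  have hden := hle _ (ofReal_mul_mem_cone Real.pi_pos.le hs)
  have hre := hs.1
  have hdiff : fourierKernel a s - exp (-((π * a : ℝ) * s)) =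
      (exp (-((π * (1 - a) : ℝ) * s)) - exp (-((π * (1 + a) : ℝ) * s))) /
        (1 + exp (-(π * s))) := by
    have hsplit : exp (-((π * (1 + a) : ℝ) * s)) =
        exp (-((π * a : ℝ) * s)) * exp (-(π * s)) := by
      rw [← exp_add]
      push_cast
      ring_nf
    have hne := one_add_exp_neg_pi_mul_ne_zero hK hs
    rw [fourierKernel, hsplit, eq_div_iff hne, sub_mul, div_mul_cancel₀ _ hne]
    ring
  have hnum : ‖exp (-((π * (1 - a) : ℝ) * s)) - exp (-((π * (1 + a) : ℝ) * s))‖ ≤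
      2 * Real.exp (-(π * (1 - a) * s.re)) := by
    have hmono : Real.exp (-(π * (1 + a) * s.re)) ≤ Real.exp (-(π * (1 - a) * s.re)) := by
      gcongr
      linarith
    refine (norm_sub_le _ _).trans ?_
    rw [norm_exp_neg_ofReal_mul, norm_exp_neg_ofReal_mul]
    linarith
  rw [hdiff, norm_div, div_mul_eq_mul_div]
  gcongr

lemma sum_exp_neg_pole_mul {a : ℝ} {s : ℂ} (hs : 1 + exp (-(π * s)) ≠ 0) (N : ℕ) :
    ∑ k ∈ Finset.range N, (-1 : ℂ) ^ k * (exp (-(pole a k * s)) + exp (-(pole (1 - a) k * s))) =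
      (1 - (-exp (-(π * s))) ^ N) * fourierKernel a s := by
  have hexp (b : ℝ) (k : ℕ) :
      exp (-(pole b k * s)) = exp (-(π * s)) ^ k * exp (-((π * b : ℝ) * s)) := by
    rw [← exp_nat_mul, ← exp_add, pole]
    push_cast
    ring_nf
  have hgeom := mul_neg_geom_sum (-exp (-(π * s))) N
  rw [sub_neg_eq_add] at hgeom
  rw [fourierKernel, ← hgeom, mul_right_comm, mul_div_cancel₀ _ hs, mul_comm, Finset.sum_mul]
  refine Finset.sum_congr rfl fun k _ => ?_
  rw [hexp, hexp, neg_pow]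
  ring

lemma measurable_fourierKernel (a : ℝ) (τ : ℂ) :
    Measurable fun σ : ℝ => fourierKernel a (σ / τ) := by
  unfold fourierKernel
  fun_prop

lemma integrableOn_exp_neg_mul_re {c : ℝ} (hc : 0 < c) {τ : ℂ} (hτ : 0 < τ.re) :
    MeasureTheory.IntegrableOn (fun σ : ℝ => Real.exp (-(c * (σ / τ : ℂ).re))) (Set.Ioi 0) := by
  refine (exp_neg_integrableOn_Ioi 0 (mul_pos hc (inv_re_pos hτ))).congr_fun (fun σ _ => ?_)
    measurableSet_Ioi
  simp only [ofReal_div_re]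
  ring_nf

lemma integrableOn_fourierKernel {K a : ℝ} (hK : 0 < K) (ha : 0 < a) (ha' : a ≤ 1 / 2) {τ : ℂ}
    (hτ : 0 < τ.re) (hτK : τ ∈ cone K) :
    MeasureTheory.IntegrableOn (fun σ : ℝ => fourierKernel a (σ / τ)) (Set.Ioi 0) := by
  obtain ⟨C, -, hC⟩ := exists_norm_fourierKernel_le hK ha'
  refine ((integrableOn_exp_neg_mul_re (mul_pos Real.pi_pos ha) hτ).const_mul C).mono'
    (measurable_fourierKernel a τ).aestronglyMeasurable ?_
  refine (MeasureTheory.ae_restrict_iff' measurableSet_Ioi).2 (.of_forall fun σ hσ => ?_)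
  exact hC _ (ofReal_div_mem_cone hσ.out.le hτK)

lemma exp_neg_mul_mul_cos (b : ℂ) (x σ : ℝ) : exp (-(b * σ)) * (Real.cos (x * σ) : ℂ) =
    1 / 2 * (exp ((-b + x * I) * σ) + exp ((-b - x * I) * σ)) := by
  rw [show (-b + x * I) * σ = -(b * σ) + x * σ * I by ring,
    show (-b - x * I) * σ = -(b * σ) + -(x * σ) * I by ring, exp_add, exp_add]
  push_cast
  rw [cos]
  ring

lemma integrableOn_exp_neg_mul_mul_cos {b : ℂ} (hb : 0 < b.re) (x : ℝ) :
    MeasureTheory.IntegrableOn (fun σ : ℝ => exp (-(b * σ)) * (Real.cos (x * σ) : ℂ))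
      (Set.Ioi 0) := by
  simp only [exp_neg_mul_mul_cos]
  exact ((integrableOn_exp_mul_complex_Ioi (by simpa using hb) 0).add
    (integrableOn_exp_mul_complex_Ioi (by simpa using hb) 0)).const_mul _

lemma integral_exp_neg_mul_mul_cos {b : ℂ} (hb : 0 < b.re) (x : ℝ) :
    ∫ σ in Set.Ioi (0 : ℝ), exp (-(b * σ)) * (Real.cos (x * σ) : ℂ) = b / (b ^ 2 + x ^ 2) := by
  have hadd : (-b + x * I).re < 0 := by simpa using hb
  have hsub : (-b - x * I).re < 0 := by simpa using hb
  have hadd' : -b + x * I ≠ 0 := fun h => by simp [h] at hadd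
  have hsub' : -b - x * I ≠ 0 := fun h => by simp [h] at hsub
  simp only [exp_neg_mul_mul_cos]
  rw [MeasureTheory.integral_const_mul, MeasureTheory.integral_add
    (integrableOn_exp_mul_complex_Ioi hadd 0) (integrableOn_exp_mul_complex_Ioi hsub 0),
    integral_exp_mul_complex_Ioi hadd, integral_exp_mul_complex_Ioi hsub,
    show b ^ 2 + x ^ 2 = (-b + x * I) * (-b - x * I) by linear_combination (x : ℂ) ^ 2 * I_sq]
  simp only [ofReal_zero, mul_zero, exp_zero]
  field_simp
  ring

lemma integrableOn_exp_neg_mul_div_mul_cos {p : ℝ} (hp : 0 < p) {τ : ℂ} (hτ : 0 < τ.re) (x : ℝ) :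
    MeasureTheory.IntegrableOn (fun σ : ℝ => exp (-(p * (σ / τ))) * (Real.cos (x * σ) : ℂ))
      (Set.Ioi 0) := by
  simp_rw [mul_div_left_comm (p : ℂ), mul_comm _ (p / τ : ℂ)]
  exact integrableOn_exp_neg_mul_mul_cos
    (by rw [ofReal_div_re]; exact mul_pos hp (inv_re_pos hτ)) x

lemma integral_exp_neg_mul_div_mul_cos {p : ℝ} (hp : 0 < p) {τ : ℂ} (hτ : 0 < τ.re) (x : ℝ) :
    ∫ σ in Set.Ioi (0 : ℝ), exp (-(p * (σ / τ))) * (Real.cos (x * σ) : ℂ) =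
      τ * (p / (p ^ 2 + (τ * x) ^ 2)) := by
  have hτ₀ := ne_zero_of_re_pos hτ
  simp_rw [mul_div_left_comm (p : ℂ), mul_comm _ (p / τ : ℂ)]
  rw [integral_exp_neg_mul_mul_cos (by rw [ofReal_div_re]; exact mul_pos hp (inv_re_pos hτ)),
    show (p / τ : ℂ) ^ 2 + x ^ 2 = (p ^ 2 + (τ * x) ^ 2) / τ ^ 2 by field_simp]
  field_simp

lemma integral_sum_exp_neg_pole_mul_cos {a : ℝ} (ha : 0 < a) (ha' : a < 1) {τ : ℂ}
    (hτ : 0 < τ.re) (x : ℝ) (N : ℕ) :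
    ∫ σ in Set.Ioi (0 : ℝ), (∑ k ∈ Finset.range N, (-1 : ℂ) ^ k *
        (exp (-(pole a k * (σ / τ))) + exp (-(pole (1 - a) k * (σ / τ))))) *
          (Real.cos (x * σ) : ℂ) =
      τ * ∑ k ∈ Finset.range N, (-1 : ℂ) ^ k * (pole a k / (pole a k ^ 2 + (τ * x) ^ 2) +
        pole (1 - a) k / (pole (1 - a) k ^ 2 + (τ * x) ^ 2)) := by
  have hi₁ k := integrableOn_exp_neg_mul_div_mul_cos (pole_pos ha k) hτ x
  have hi₂ k := integrableOn_exp_neg_mul_div_mul_cos (pole_pos (sub_pos.2 ha') k) hτ x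
  simp_rw [Finset.sum_mul, mul_assoc, add_mul]
  rw [MeasureTheory.integral_finsetSum, Finset.mul_sum]
  swap
  · exact fun k _ => ((hi₁ k).add (hi₂ k)).const_mul _
  refine Finset.sum_congr rfl fun k _ => ?_
  rw [MeasureTheory.integral_const_mul, MeasureTheory.integral_add (hi₁ k) (hi₂ k),
    integral_exp_neg_mul_div_mul_cos (pole_pos ha k) hτ,
    integral_exp_neg_mul_div_mul_cos (pole_pos (sub_pos.2 ha') k) hτ]
  ring

lemma norm_exp_neg_pi_mul_lt_one {s : ℂ} (hs : 0 < s.re) : ‖exp (-(π * s))‖ < 1 := by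
  rw [norm_exp_neg_ofReal_mul, Real.exp_lt_one_iff, neg_lt_zero]
  positivity

lemma integral_fourierKernel_mul_cos {K a : ℝ} (hK : 0 < K) (ha : 0 < a) (ha' : a ≤ 1 / 2) {τ : ℂ}
    (hτ : 0 < τ.re) (hτK : τ ∈ cone K) (n : ℤ) :
    ∫ σ in Set.Ioi (0 : ℝ), fourierKernel a (σ / τ) * (Real.cos (n * σ) : ℂ) =
      τ * sechKernel a (τ * n) := by
  have ha₁ : a < 1 := by linarith
  have hre (σ : ℝ) (hσ : σ ∈ Set.Ioi (0 : ℝ)) : 0 < (σ / τ : ℂ).re := by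
    rw [ofReal_div_re]
    exact mul_pos hσ (inv_re_pos hτ)
  have hu : τ * n = 0 ∨ (τ * n : ℂ).re ≠ 0 := by
    rcases eq_or_ne n 0 with rfl | hn
    · simp
    · simp [hτ.ne', hn]
  have hlim := (tendsto_sum_pole_div ha ha₁ hu).const_mul τ
  refine tendsto_nhds_unique ?_ hlim
  simp_rw [← ofReal_intCast (n := n), ← integral_sum_exp_neg_pole_mul_cos ha ha₁ hτ]
  refine MeasureTheory.tendsto_integral_of_dominated_convergence
    (fun σ => 2 * ‖fourierKernel a (σ / τ)‖) (fun N => ?_)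
    ((integrableOn_fourierKernel hK ha ha' hτ hτK).norm.const_mul 2) (fun N => ?_) ?_
  · exact Measurable.aestronglyMeasurable (by fun_prop)
  · refine (MeasureTheory.ae_restrict_iff' measurableSet_Ioi).2 (.of_forall fun σ hσ => ?_)
    rw [sum_exp_neg_pole_mul
      (one_add_exp_neg_pi_mul_ne_zero hK (ofReal_div_mem_cone hσ.out.le hτK)), norm_mul, norm_mul]
    have hcos : ‖(Real.cos (n * σ) : ℂ)‖ ≤ 1 := by
      rw [norm_real]
      exact Real.abs_cos_le_one _
    have hgeom : ‖1 - (-exp (-(π * (σ / τ : ℂ)))) ^ N‖ ≤ 2 := by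
      refine (norm_sub_le _ _).trans ?_
      rw [norm_one, norm_pow, norm_neg]
      linarith [pow_le_one₀ (n := N) (norm_nonneg _) (norm_exp_neg_pi_mul_lt_one (hre σ hσ)).le]
    calc _ ≤ 2 * ‖fourierKernel a (σ / τ)‖ * 1 := by gcongr
      _ = _ := mul_one _
  · refine (MeasureTheory.ae_restrict_iff' measurableSet_Ioi).2 (.of_forall fun σ hσ => ?_)
    have hgeom := tendsto_pow_atTop_nhds_zero_of_norm_lt_one
      ((norm_neg _).trans_lt (norm_exp_neg_pi_mul_lt_one (hre σ hσ)))
    simp_rw [sum_exp_neg_pole_mul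
      (one_add_exp_neg_pi_mul_ne_zero hK (ofReal_div_mem_cone hσ.out.le hτK))]
    simpa using ((hgeom.const_sub 1).mul_const (fourierKernel a (σ / τ))).mul_const
      (Real.cos (n * σ) : ℂ)

end FourierKernel

section ThetaTransformation

lemma summable_exp_neg_two_mul_sq {τ : ℂ} (hτ : 0 < τ.re) (b : ℂ) :
    Summable fun n : ℤ => exp (-2 * τ * n ^ 2 + b * n) := by
  have hπ : (π : ℂ) ≠ 0 := ofReal_ne_zero.2 Real.pi_ne_zero
  have him : 0 < (((2 / π : ℝ) : ℂ) * (τ * I)).im := by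
    rw [im_ofReal_mul, mul_I_im]
    positivity
  refine ((summable_jacobiTheta₂_term_iff (b / (2 * π * I)) _).2 him).congr fun n => ?_
  rw [jacobiTheta₂_term]
  congr 1
  push_cast
  field_simp
  linear_combination 2 * (n : ℂ) ^ 2 * τ * I_sq

/-- The `2π`-periodisation of the Gaussian `w ↦ exp (-w² / (8τ))`; the form which the theta
function takes after Poisson summation. -/
noncomputable def periodicGaussian (τ w : ℂ) : ℂ := ∑' n : ℤ, exp (-(2 * π * n - w) ^ 2 / (8 * τ))

/-- The automorphy factor `(2τ/π)^(-1/2)` in the transformation of the theta function. -/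
noncomputable def thetaFactor (τ : ℂ) : ℂ := 1 / ((2 / π : ℝ) * τ : ℂ) ^ (1 / 2 : ℂ)

lemma thetaFactor_ne_zero {τ : ℂ} (hτ : τ ≠ 0) : thetaFactor τ ≠ 0 := by
  have hπ : (2 / π : ℝ) ≠ 0 := by positivity
  refine one_div_ne_zero fun h => ?_
  exact mul_ne_zero (ofReal_ne_zero.2 hπ) hτ ((cpow_eq_zero_iff _ _).1 h).1

lemma hasSum_exp_neg_two_mul_sq {τ : ℂ} (hτ : 0 < τ.re) (w : ℂ) :
    HasSum (fun n : ℤ => exp (-2 * τ * n ^ 2 + I * w * n))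
      (thetaFactor τ * periodicGaussian τ w) := by
  have hπ : (π : ℂ) ≠ 0 := ofReal_ne_zero.2 Real.pi_ne_zero
  have hτ₀ := ne_zero_of_re_pos hτ
  have hpoisson := Complex.tsum_exp_neg_quadratic (a := (2 / π : ℝ) * τ)
    (by rw [re_ofReal_mul]; positivity) (I * w / (2 * π))
  have hleft (n : ℤ) : -(π : ℂ) * ((2 / π : ℝ) * τ : ℂ) * n ^ 2 +
      2 * π * (I * w / (2 * π)) * n = -2 * τ * n ^ 2 + I * w * n := by
    push_cast
    field_simp
  have hright (n : ℤ) : -(π : ℂ) / ((2 / π : ℝ) * τ : ℂ) * (n + I * (I * w / (2 * π))) ^ 2 =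
      -(2 * π * n - w) ^ 2 / (8 * τ) := by
    rw [← mul_div_assoc, ← mul_assoc, I_mul_I]
    push_cast
    field_simp
    ring
  simp_rw [hleft, hright] at hpoisson
  rw [thetaFactor, periodicGaussian, ← hpoisson]
  exact (summable_exp_neg_two_mul_sq hτ (I * w)).hasSum

lemma exp_quadratic_neg (τ : ℂ) (n : ℤ) : exp (-2 * τ * ((-n : ℤ) : ℂ) ^ 2 + I * π * (-n : ℤ)) =
    exp (-2 * τ * n ^ 2 + I * π * n) :=
  exp_eq_exp_iff_exists_int.2 ⟨-n, by push_cast; ring⟩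

lemma hasSum_exp_neg_two_mul_sq_mul_cos {τ : ℂ} (hτ : 0 < τ.re) (σ : ℝ) :
    HasSum (fun n : ℤ => exp (-2 * τ * n ^ 2 + I * π * n) * (Real.cos (n * σ) : ℂ))
      (thetaFactor τ * periodicGaussian τ (σ + π)) := by
  have hsum := hasSum_exp_neg_two_mul_sq hτ (σ + π)
  have hmean := (hsum.add ((Equiv.neg ℤ).hasSum_iff.2 hsum)).mul_left (1 / 2 : ℂ)
  rw [← two_mul, ← mul_assoc, one_div_mul_cancel two_ne_zero, one_mul] at hmean
  refine hmean.congr_fun fun n => ?_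
  have hsplit (m : ℤ) : exp (-2 * τ * m ^ 2 + I * (σ + π) * m) =
      exp (-2 * τ * m ^ 2 + I * π * m) * exp (m * σ * I) := by
    rw [← exp_add]
    ring_nf
  simp only [Function.comp_apply, Equiv.neg_apply]
  rw [hsplit, hsplit, exp_quadratic_neg, ofReal_cos, cos]
  push_cast
  ring_nf

lemma exp_neg_pow (τ : ℂ) (k : ℕ) : exp (-τ) ^ k = exp (-(k * τ)) := by
  rw [← exp_nat_mul, mul_neg]

lemma norm_exp_neg_lt_one {τ : ℂ} (hτ : 0 < τ.re) : ‖exp (-τ)‖ < 1 := by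
  rw [norm_exp, neg_re, Real.exp_lt_one_iff]
  linarith

lemma exp_I_mul_pi_mul_natCast (n : ℕ) : exp (I * π * n) = (-1) ^ n := by
  rw [mul_comm, exp_nat_mul, mul_comm, exp_pi_mul_I]

lemma hasSum_nat_of_hasSum_int {f : ℤ → ℂ} {g : ℕ → ℂ} {m : ℂ} (hf : HasSum f m)
    (hzero : g 0 = f 0) (hsucc : ∀ r : ℕ, g (r + 1) = f (r + 1 : ℕ) + f (-(r + 1 : ℕ))) :
    HasSum g m := by
  have hfold := hf.nat_add_neg.sub (hasSum_ite_eq 0 (f 0))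
  rw [add_sub_cancel_right] at hfold
  refine hfold.congr_fun fun r => ?_
  rcases r with _ | r
  · simp [hzero]
  · simp [hsucc]

lemma thetaSeries_exp_neg {τ : ℂ} (hτ : 0 < τ.re) :
    thetaSeries (exp (-τ)) = thetaFactor τ * periodicGaussian τ (π + I * τ) := by
  refine (hasSum_nat_of_hasSum_int (hasSum_exp_neg_two_mul_sq hτ _) ?_ fun r => ?_).tsum_eq
  · simp [unitAlpha]
  have hsplit (n : ℤ) : exp (-2 * τ * n ^ 2 + I * (π + I * τ) * n) =
      exp (-2 * τ * n ^ 2 + I * π * n) * exp (-(n * τ)) := by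
    rw [← exp_add]
    congr 1
    linear_combination τ * n * I_sq
  have hsq : exp (-2 * τ * ((r + 1 : ℕ) : ℤ) ^ 2 + I * π * ((r + 1 : ℕ) : ℤ)) =
      (-1) ^ (r + 1) * exp (-(((2 * (r + 1) ^ 2 : ℕ) : ℂ) * τ)) := by
    rw [← exp_I_mul_pi_mul_natCast, ← exp_add]
    push_cast
    ring_nf
  have hpos : exp (-(((2 * (r + 1) ^ 2 : ℕ) : ℂ) * τ)) * exp (-(((r + 1 : ℕ) : ℤ) * τ)) =
      exp (-τ) ^ ((r + 1) * r) * exp (-τ) ^ (2 * r + 2) * exp (-τ) ^ (r + 1) ^ 2 := by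
    simp only [exp_neg_pow, ← exp_add]
    push_cast
    ring_nf
  have hneg : exp (-(((2 * (r + 1) ^ 2 : ℕ) : ℂ) * τ)) * exp (-((-(r + 1 : ℕ) : ℤ) * τ)) =
      exp (-τ) ^ ((r + 1) * r) * exp (-τ) ^ (r + 1) ^ 2 := by
    simp only [exp_neg_pow, ← exp_add]
    push_cast
    ring_nf
  rw [hsplit, hsplit, exp_quadratic_neg, hsq, unitAlpha]
  linear_combination -(-1) ^ (r + 1) * (hpos + hneg)

lemma sin_mul_sechKernel (a : ℝ) (u : ℂ) : 2 * sin (π * a) * sechKernel a u =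
    (1 - exp (2 * π * I * a)) * (1 - (exp (2 * π * I * a))⁻¹) *
      (exp (-u) * (1 + exp (-u) ^ 2)) /
      ((1 - exp (2 * π * I * a) * exp (-u) ^ 2) *
        (1 - (exp (2 * π * I * a))⁻¹ * exp (-u) ^ 2)) := by
  have hw : exp (2 * π * I * a) = exp (π * a * I) ^ 2 := by
    rw [← exp_nat_mul]
    push_cast
    ring_nf
  have hc : cos (2 * (π * a)) = (exp (π * a * I) ^ 2 + (exp (π * a * I))⁻¹ ^ 2) / 2 := by
    rw [cos, ← exp_neg, ← exp_nat_mul, ← exp_nat_mul]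
    push_cast
    ring_nf
  have hch : cosh (2 * u) = ((exp (-u))⁻¹ ^ 2 + exp (-u) ^ 2) / 2 := by
    rw [cosh, ← exp_neg, ← exp_nat_mul, ← exp_nat_mul]
    push_cast
    ring_nf
  rw [sechKernel, hw, hc, hch, sin, cosh, neg_mul, exp_neg (_ * I), ← neg_neg u, exp_neg (-u),
    neg_neg]
  have hx := exp_ne_zero (-u)
  have hy := exp_ne_zero (π * a * I)
  generalize exp (-u) = x, exp (π * a * I) = y at *
  have hden : (x⁻¹ ^ 2 + x ^ 2) / 2 - (y ^ 2 + y⁻¹ ^ 2) / 2 =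
      (1 - y ^ 2 * x ^ 2) * (1 - (y ^ 2)⁻¹ * x ^ 2) / (2 * x ^ 2) := by
    field_simp
    ring
  rw [hden]
  generalize (1 - y ^ 2 * x ^ 2) * (1 - (y ^ 2)⁻¹ * x ^ 2) = d
  rw [div_div_eq_mul_div]
  field_simp
  linear_combination (y ^ 2 - 1) ^ 2 * (1 + x ^ 2) / d * I_sq

lemma sin_mul_sechKernel_zero {a : ℝ} (ha : sin (π * a) ≠ 0) :
    sin (π * a) * sechKernel a 0 = 1 := by
  have hcos : cosh (2 * 0) - cos (2 * (π * a)) = 2 * sin (π * a) ^ 2 := by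
    rw [mul_zero, cosh_zero, cos_two_mul, cos_sq']
    ring
  rw [sechKernel, hcos, cosh_zero]
  field_simp

lemma sechKernel_neg (a : ℝ) (u : ℂ) : sechKernel a (-u) = sechKernel a u := by simp [sechKernel]

lemma appellSeries_eq_of_hasSum {a : ℝ} (ha : sin (π * a) ≠ 0) {τ m : ℂ}
    (hm : HasSum (fun n : ℤ => exp (-2 * τ * n ^ 2 + I * π * n) * sechKernel a (τ * n)) m) :
    appellSeries (exp (2 * π * I * a)) (exp (-τ)) = sin (π * a) * m := by
  refine (hasSum_nat_of_hasSum_int (hm.mul_left (sin (π * a))) ?_ fun r => ?_).tsum_eq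
  · simp [rankAlpha, sin_mul_sechKernel_zero ha]
  have hsq : exp (-2 * τ * ((r + 1 : ℕ) : ℤ) ^ 2 + I * π * ((r + 1 : ℕ) : ℤ)) =
      (-1) ^ (r + 1) * exp (-τ) ^ (2 * (r + 1) ^ 2) := by
    rw [exp_neg_pow, ← exp_I_mul_pi_mul_natCast, ← exp_add]
    push_cast
    ring_nf
  have hkernel := sin_mul_sechKernel a (τ * ((r + 1 : ℕ) : ℤ))
  rw [show -(τ * ((r + 1 : ℕ) : ℤ)) = -(((r + 1 : ℕ) : ℂ) * τ) by push_cast; ring,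
    ← exp_neg_pow, ← pow_mul] at hkernel
  rw [exp_quadratic_neg, hsq, Int.cast_neg, mul_neg, sechKernel_neg]
  have hcollect (s e k : ℂ) : s * (e * k) + s * (e * k) = e * (2 * s * k) := by ring
  rw [hcollect, hkernel, rankAlpha, show (r + 1) * 2 = 2 * r + 2 by ring]
  ring

lemma sin_pi_mul_ne_zero_of_mem_Ioo {a : ℝ} (ha : 0 < a) (ha' : a < 1) :
    sin ((π : ℂ) * a) ≠ 0 := by
  have hsin : 0 < Real.sin (π * a) :=
    Real.sin_pos_of_pos_of_lt_pi (by positivity) (mul_lt_of_lt_one_right Real.pi_pos ha')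
  exact_mod_cast hsin.ne'

lemma mul_appellSeries_eq_integral {K a : ℝ} (hK : 0 < K) (ha : 0 < a) (ha' : a ≤ 1 / 2) {τ : ℂ}
    (hτ : 0 < τ.re) (hτK : τ ∈ cone K) :
    τ * appellSeries (exp (2 * π * I * a)) (exp (-τ)) = sin (π * a) * (thetaFactor τ *
      ∫ σ in Set.Ioi (0 : ℝ), fourierKernel a (σ / τ) * periodicGaussian τ (σ + π)) := by
  have hkernel := integrableOn_fourierKernel hK ha ha' hτ hτK
  set F : ℤ → ℝ → ℂ := fun n σ => exp (-2 * τ * n ^ 2 + I * π * n) *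
    (fourierKernel a (σ / τ) * (Real.cos (n * σ) : ℂ)) with hF
  have hcos (n : ℤ) (σ : ℝ) : ‖(Real.cos (n * σ) : ℂ)‖ ≤ 1 := by
    rw [norm_real]
    exact Real.abs_cos_le_one _
  have hFint (n : ℤ) : MeasureTheory.IntegrableOn (F n) (Set.Ioi 0) :=
    (hkernel.mul_bdd (Measurable.aestronglyMeasurable (by fun_prop))
      (.of_forall (hcos n))).const_mul _
  have hFsum : Summable fun n => ∫ σ in Set.Ioi (0 : ℝ), ‖F n σ‖ := by
    refine ((summable_exp_neg_two_mul_sq hτ (I * π)).norm.mul_right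
      (∫ σ in Set.Ioi (0 : ℝ), ‖fourierKernel a (σ / τ)‖)).of_nonneg_of_le
        (fun n => MeasureTheory.integral_nonneg fun σ => norm_nonneg _) fun n => ?_
    rw [← MeasureTheory.integral_const_mul]
    refine MeasureTheory.integral_mono (hFint n).norm (hkernel.norm.const_mul _) fun σ => ?_
    simp only [hF, norm_mul]
    gcongr
    exact mul_le_of_le_one_right (norm_nonneg _) (hcos n σ)
  have hinterchange := MeasureTheory.hasSum_integral_of_summable_integral_norm hFint hFsum
  have hterm (n : ℤ) : ∫ σ in Set.Ioi (0 : ℝ), F n σ =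
      τ * (exp (-2 * τ * n ^ 2 + I * π * n) * sechKernel a (τ * n)) := by
    rw [MeasureTheory.integral_const_mul, integral_fourierKernel_mul_cos hK ha ha' hτ hτK]
    ring
  have htsum (σ : ℝ) : ∑' n, F n σ =
      thetaFactor τ * (fourierKernel a (σ / τ) * periodicGaussian τ (σ + π)) := by
    rw [mul_left_comm, ← (hasSum_exp_neg_two_mul_sq_mul_cos hτ σ).tsum_eq, ← tsum_mul_left]
    exact tsum_congr fun n => mul_left_comm _ _ _
  simp_rw [hterm, htsum] at hinterchange
  rw [MeasureTheory.integral_const_mul] at hinterchange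
  have hτ₀ := ne_zero_of_re_pos hτ
  have hdiv := hinterchange.mul_left τ⁻¹
  simp_rw [inv_mul_cancel_left₀ hτ₀] at hdiv
  rw [appellSeries_eq_of_hasSum (sin_pi_mul_ne_zero_of_mem_Ioo ha (by linarith)) hdiv,
    mul_left_comm, mul_inv_cancel_left₀ hτ₀]

end ThetaTransformation

section ConeAsymptotics

lemma norm_tsum_int_sub_le {f : ℤ → ℂ} (hf : Summable f) {A r : ℝ} (hr : 0 ≤ r) (hr' : r ≤ 1 / 2)
    (hpos : ∀ j : ℕ, ‖f (j + 2)‖ ≤ A * r ^ j) (hneg : ∀ j : ℕ, ‖f (-(j + 1))‖ ≤ A * r ^ j) :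
    ‖∑' n, f n - (f 0 + f 1)‖ ≤ 4 * A := by
  have hA : 0 ≤ A := (norm_nonneg _).trans (by simpa using hpos 0)
  have hgeom : HasSum (fun j => A * r ^ j) (A * (1 - r)⁻¹) :=
    (hasSum_geometric_of_lt_one hr (by linarith)).mul_left A
  have hgeom_le : A * (1 - r)⁻¹ ≤ A * 2 := by
    gcongr
    rw [inv_le_comm₀ (by linarith) two_pos]
    linarith
  have hnat : Summable fun n : ℕ => f n := hf.comp_injective Nat.cast_injective
  have hneg_summable : Summable fun n : ℕ => f (-(n + 1)) :=
    hf.comp_injective (i := fun n : ℕ => (-(n + 1) : ℤ)) fun a b h => by simpa using h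
  have hpos_le : ‖∑' n : ℕ, f ((n + 2 : ℕ) : ℤ)‖ ≤ A * (1 - r)⁻¹ :=
    tsum_of_norm_bounded hgeom fun j => by simpa using hpos j
  have hneg_le : ‖∑' n : ℕ, f (-(n + 1))‖ ≤ A * (1 - r)⁻¹ := tsum_of_norm_bounded hgeom hneg
  rw [tsum_of_nat_of_neg_add_one hnat hneg_summable, ← hnat.sum_add_tsum_nat_add 2,
    Finset.sum_range_succ, Finset.sum_range_one, Nat.cast_zero, Nat.cast_one, add_assoc,
    add_sub_cancel_left]
  exact (norm_add_le _ _).trans (by linarith)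

lemma exp_neg_le_half {x : ℝ} (hx : 1 ≤ x) : Real.exp (-x) ≤ 1 / 2 := by
  rw [Real.exp_neg, inv_le_comm₀ (Real.exp_pos _) (by norm_num)]
  linarith [Real.add_one_le_exp x]

lemma summable_periodicGaussian {τ : ℂ} (hτ : 0 < τ.re) (w : ℂ) :
    Summable fun n : ℤ => exp (-(2 * π * n - w) ^ 2 / (8 * τ)) := by
  have hτ₀ := ne_zero_of_re_pos hτ
  have hre : 0 < (((π ^ 2 / 4 : ℝ) : ℂ) / τ).re := by
    rw [ofReal_div_re]
    have := inv_re_pos hτ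
    positivity
  refine ((summable_exp_neg_two_mul_sq hre (π * w / (2 * τ))).mul_left
    (exp (-w ^ 2 / (8 * τ)))).congr fun n => ?_
  rw [← exp_add]
  congr 1
  push_cast
  field_simp
  ring

/-- The quotient `thetaSeries (e^{-τ}) e^{π²/(8τ)} / thetaFactor τ`, which stays bounded as `τ`
tends to `0` in a cone. -/
noncomputable def thetaCofactor (τ : ℂ) : ℂ :=
  periodicGaussian τ (π + I * τ) * exp (π ^ 2 / (8 * τ))

lemma exp_add_exp_eq_sqrt_two :
    exp ((-(π / 4) : ℝ) * I) + exp ((π / 4 : ℝ) * I) = (√2 : ℝ) := by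
  rw [add_comm, ofReal_neg, ← two_cos, ← ofReal_cos, Real.cos_pi_div_four]
  push_cast
  ring

lemma exp_shifted_gaussian_mul {τ : ℂ} (hτ : τ ≠ 0) (n : ℤ) :
    exp (-(2 * π * n - (π + I * τ)) ^ 2 / (8 * τ)) * exp (π ^ 2 / (8 * τ)) =
      exp ((-(n * (n - 1) / 2 * π ^ 2) : ℝ) / τ) * exp (τ / 8) *
        exp (((2 * n - 1) * (π / 4) : ℝ) * I) := by
  rw [← exp_add, ← exp_add, ← exp_add]
  congr 1
  push_cast
  field_simp
  linear_combination -8 * τ ^ 2 * I_sq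

lemma norm_thetaCofactor_sub_le {τ : ℂ} (hτ : 0 < τ.re) (hρ : 1 ≤ (τ⁻¹).re) :
    ‖thetaCofactor τ - (√2 : ℝ) * exp (τ / 8)‖ ≤
      4 * (Real.exp (τ.re / 8) * Real.exp (-(π ^ 2 * (τ⁻¹).re))) := by
  have hτ₀ := ne_zero_of_re_pos hτ
  have hx₁ : 1 ≤ π ^ 2 * (τ⁻¹).re := by nlinarith [Real.pi_gt_three]
  set x := π ^ 2 * (τ⁻¹).re
  set g : ℤ → ℂ := fun n =>
    exp (-(2 * π * n - (π + I * τ)) ^ 2 / (8 * τ)) * exp (π ^ 2 / (8 * τ)) with hg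
  have hnorm (n : ℤ) (j : ℕ) (hn : (j : ℝ) + 1 ≤ n * (n - 1) / 2) :
      ‖g n‖ ≤ Real.exp (τ.re / 8) * Real.exp (-x) * Real.exp (-x) ^ j := by
    simp only [hg]
    rw [exp_shifted_gaussian_mul hτ₀, norm_mul, norm_mul, norm_exp_ofReal_mul_I, mul_one,
      norm_exp, norm_exp, ofReal_div_re, div_ofNat_re, ← Real.exp_nat_mul, ← Real.exp_add,
      ← Real.exp_add, ← Real.exp_add]
    refine Real.exp_le_exp.2 ?_
    nlinarith [mul_le_mul_of_nonneg_right hn (zero_le_one.trans hx₁)]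
  have hmain : g 0 + g 1 = (√2 : ℝ) * exp (τ / 8) := by
    simp only [hg]
    rw [exp_shifted_gaussian_mul hτ₀, exp_shifted_gaussian_mul hτ₀, ← exp_add_exp_eq_sqrt_two]
    norm_num
    ring
  rw [thetaCofactor, periodicGaussian, ← tsum_mul_right, ← hmain]
  refine norm_tsum_int_sub_le ((summable_periodicGaussian hτ _).mul_right _) (Real.exp_pos _).le
    (exp_neg_le_half hx₁) (fun j => hnorm _ j ?_) (fun j => hnorm _ j ?_) <;>
  · push_cast
    nlinarith [(Nat.cast_nonneg j : (0 : ℝ) ≤ j)]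

/-- The part of `fourierKernel (1 / 6) (σ / τ) * periodicGaussian τ (σ + π)` that determines the
size of its integral over `σ`: the first exponential of the kernel times the Gaussian centred at
`σ = π`. -/
noncomputable def leadingIntegrand (τ : ℂ) (σ : ℝ) : ℂ :=
  exp (-((π * (1 / 6) : ℝ) * (σ / τ))) * exp (-(2 * π * (1 : ℤ) - (σ + π)) ^ 2 / (8 * τ))

lemma leadingIntegrand_eq {τ : ℂ} (hτ : τ ≠ 0) (σ : ℝ) : leadingIntegrand τ σ =
    exp (((-1 / 8 : ℝ) / τ) * σ ^ 2 + π / (12 * τ) * σ + -(π ^ 2 / (8 * τ))) := by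
  rw [leadingIntegrand, ← exp_add]
  congr 1
  push_cast
  field_simp
  ring

lemma re_neg_eighth_div_neg {τ : ℂ} (hτ : 0 < τ.re) : (((-1 / 8 : ℝ) : ℂ) / τ).re < 0 := by
  rw [ofReal_div_re]
  linarith [inv_re_pos hτ]

lemma integrable_leadingIntegrand {τ : ℂ} (hτ : 0 < τ.re) :
    MeasureTheory.Integrable (leadingIntegrand τ) := by
  simp_rw [funext (leadingIntegrand_eq (ne_zero_of_re_pos hτ))]
  exact integrable_cexp_quadratic' (re_neg_eighth_div_neg hτ) _ _

lemma integral_leadingIntegrand {τ : ℂ} (hτ : 0 < τ.re) :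
    ∫ σ, leadingIntegrand τ σ = (8 * π * τ) ^ (1 / 2 : ℂ) * exp (-(π ^ 2 / (9 * τ))) := by
  have hτ₀ := ne_zero_of_re_pos hτ
  simp_rw [leadingIntegrand_eq hτ₀]
  rw [integral_cexp_quadratic (re_neg_eighth_div_neg hτ)]
  congr 2 <;> push_cast <;> field_simp
  ring

lemma norm_exp_gaussian (τ : ℂ) (σ : ℝ) (n : ℤ) :
    ‖exp (-(2 * π * n - (σ + π)) ^ 2 / (8 * τ))‖ =
      Real.exp (-((2 * π * n - (σ + π)) ^ 2 / 8 * (τ⁻¹).re)) := by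
  have hreal : -(2 * π * n - (σ + π)) ^ 2 / (8 * τ) =
      (-((2 * π * n - (σ + π)) ^ 2 / 8) : ℝ) / τ := by
    push_cast
    ring
  rw [hreal, norm_exp, ofReal_div_re, neg_mul]

lemma gaussian_exponent_ge_of_two_le {σ : ℝ} (j : ℕ) :
    π / 12 * σ + π ^ 2 / 8 + j * (π ^ 2 / 6) ≤
      π * (1 / 6) * σ + (2 * π * ((j + 2 : ℤ) : ℝ) - (σ + π)) ^ 2 / 8 := by
  have : (0 : ℝ) ≤ j := j.cast_nonneg
  push_cast
  nlinarith [sq_nonneg (σ - (2 * j + 3) * π + π / 3), sq_nonneg π]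

lemma gaussian_exponent_ge_of_neg {σ : ℝ} (hσ : 0 ≤ σ) (j : ℕ) :
    π / 12 * σ + π ^ 2 / 8 + j * (π ^ 2 / 6) ≤
      π * (1 / 6) * σ + (2 * π * ((-(j + 1) : ℤ) : ℝ) - (σ + π)) ^ 2 / 8 := by
  have hj : (0 : ℝ) ≤ j := j.cast_nonneg
  have hπσ : 0 ≤ π * σ := by positivity
  push_cast
  nlinarith [mul_nonneg hπσ hj, mul_nonneg (sq_nonneg π) hj,
    mul_nonneg (sq_nonneg π) (mul_nonneg hj hj), sq_nonneg σ, sq_nonneg π]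

lemma norm_kernel_mul_gaussian_le {C : ℝ} {τ : ℂ} (hτ : 0 < τ.re) {σ : ℝ}
    (hC : ‖fourierKernel (1 / 6) (σ / τ)‖ ≤ C * Real.exp (-(π * (1 / 6) * (σ / τ : ℂ).re)))
    {n : ℤ} {j : ℕ} (hn : π / 12 * σ + π ^ 2 / 8 + j * (π ^ 2 / 6) ≤
      π * (1 / 6) * σ + (2 * π * n - (σ + π)) ^ 2 / 8) :
    ‖fourierKernel (1 / 6) (σ / τ) * exp (-(2 * π * n - (σ + π)) ^ 2 / (8 * τ))‖ ≤
      C * Real.exp (-((π / 12 * σ + π ^ 2 / 8) * (τ⁻¹).re)) *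
        Real.exp (-(π ^ 2 / 6 * (τ⁻¹).re)) ^ j := by
  have hC₀ : 0 ≤ C := nonneg_of_mul_nonneg_left ((norm_nonneg _).trans hC) (Real.exp_pos _)
  rw [ofReal_div_re] at hC
  rw [norm_mul, norm_exp_gaussian]
  refine (mul_le_mul_of_nonneg_right hC (Real.exp_pos _).le).trans ?_
  rw [mul_assoc C, mul_assoc C, ← Real.exp_nat_mul, ← Real.exp_add, ← Real.exp_add]
  refine mul_le_mul_of_nonneg_left (Real.exp_le_exp.2 ?_) hC₀
  nlinarith [mul_le_mul_of_nonneg_right hn (inv_re_pos hτ).le]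

lemma norm_kernel_sub_exp_mul_gaussian_le {C : ℝ} {τ : ℂ} (hτ : 0 < τ.re) {σ : ℝ} (hσ : 0 ≤ σ)
    (hC : ‖fourierKernel (1 / 6) (σ / τ) - exp (-((π * (1 / 6) : ℝ) * (σ / τ)))‖ ≤
      C * Real.exp (-(π * (1 - 1 / 6) * (σ / τ : ℂ).re))) :
    ‖fourierKernel (1 / 6) (σ / τ) * exp (-(2 * π * (1 : ℤ) - (σ + π)) ^ 2 / (8 * τ)) -
        leadingIntegrand τ σ‖ ≤
      C * Real.exp (-((π / 12 * σ + π ^ 2 / 8) * (τ⁻¹).re)) := by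
  have hC₀ : 0 ≤ C := nonneg_of_mul_nonneg_left ((norm_nonneg _).trans hC) (Real.exp_pos _)
  have hexponent : π / 12 * σ + π ^ 2 / 8 ≤
      π * (1 - 1 / 6) * σ + (2 * π * (1 : ℤ) - (σ + π)) ^ 2 / 8 := by
    have : 0 ≤ π * σ := by positivity
    push_cast
    nlinarith [sq_nonneg σ]
  rw [ofReal_div_re] at hC
  rw [leadingIntegrand, ← sub_mul, norm_mul, norm_exp_gaussian]
  refine (mul_le_mul_of_nonneg_right hC (Real.exp_pos _).le).trans ?_
  rw [mul_assoc C, ← Real.exp_add]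
  gcongr
  nlinarith [mul_le_mul_of_nonneg_right hexponent (inv_re_pos hτ).le]

lemma exists_norm_integrand_sub_leadingIntegrand_le {K : ℝ} (hK : 0 < K) :
    ∃ C > 0, ∀ τ ∈ cone K, 0 < τ.re → 1 ≤ (τ⁻¹).re → ∀ σ : ℝ, 0 ≤ σ →
      ‖fourierKernel (1 / 6) (σ / τ) * periodicGaussian τ (σ + π) - leadingIntegrand τ σ‖ ≤
        C * Real.exp (-((π / 12 * σ + π ^ 2 / 8) * (τ⁻¹).re)) := by
  obtain ⟨C₁, hC₁, hle₁⟩ := exists_norm_fourierKernel_le (a := 1 / 6) hK (by norm_num)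
  obtain ⟨C₂, hC₂, hle₂⟩ := exists_norm_fourierKernel_sub_le (a := 1 / 6) hK (by norm_num)
  refine ⟨4 * C₁ + C₁ + C₂, by positivity, fun τ hτK hτ hρ σ hσ => ?_⟩
  have hcone := ofReal_div_mem_cone hσ hτK
  set f : ℤ → ℂ := fun n =>
    fourierKernel (1 / 6) (σ / τ) * exp (-(2 * π * n - (σ + π)) ^ 2 / (8 * τ))
  set E := Real.exp (-((π / 12 * σ + π ^ 2 / 8) * (τ⁻¹).re))
  have hterm {n : ℤ} {j : ℕ} (hn : π / 12 * σ + π ^ 2 / 8 + j * (π ^ 2 / 6) ≤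
      π * (1 / 6) * σ + (2 * π * n - (σ + π)) ^ 2 / 8) :
      ‖f n‖ ≤ C₁ * E * Real.exp (-(π ^ 2 / 6 * (τ⁻¹).re)) ^ j :=
    norm_kernel_mul_gaussian_le hτ (hle₁ _ hcone) hn
  have htail : ‖∑' n, f n - (f 0 + f 1)‖ ≤ 4 * (C₁ * E) :=
    norm_tsum_int_sub_le ((summable_periodicGaussian hτ _).mul_left _) (Real.exp_pos _).le
      (exp_neg_le_half (by nlinarith [Real.pi_gt_three]))
      (fun j => hterm (gaussian_exponent_ge_of_two_le j))
      (fun j => hterm (gaussian_exponent_ge_of_neg hσ j))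
  have hzero : ‖f 0‖ ≤ C₁ * E := by
    have hπσ : 0 ≤ π * σ := by positivity
    simpa using hterm (n := 0) (j := 0) (by push_cast; nlinarith [sq_nonneg σ])
  have hone : ‖f 1 - leadingIntegrand τ σ‖ ≤ C₂ * E :=
    norm_kernel_sub_exp_mul_gaussian_le hτ hσ (hle₂ _ hcone)
  rw [periodicGaussian, ← tsum_mul_left]
  calc ‖∑' n, f n - leadingIntegrand τ σ‖
      = ‖(∑' n, f n - (f 0 + f 1)) + f 0 + (f 1 - leadingIntegrand τ σ)‖ := by ring_nf
    _ ≤ 4 * (C₁ * E) + C₁ * E + C₂ * E :=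
      (norm_add_le _ _).trans (add_le_add ((norm_add_le _ _).trans (add_le_add htail hzero)) hone)
    _ = (4 * C₁ + C₁ + C₂) * E := by ring

lemma measurable_periodicGaussian {τ : ℂ} (hτ : 0 < τ.re) :
    Measurable fun σ : ℝ => periodicGaussian τ (σ + π) := by
  refine measurable_of_tendsto_metrizable' atTop
    (f := fun (s : Finset ℤ) (σ : ℝ) => ∑ n ∈ s, exp (-(2 * π * n - (σ + π)) ^ 2 / (8 * τ)))
    (fun s => by fun_prop) ?_
  rw [tendsto_pi_nhds]
  exact fun σ => (summable_periodicGaussian hτ _).hasSum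

lemma exp_neg_linear_eq (ρ σ : ℝ) : Real.exp (-((π / 12 * σ + π ^ 2 / 8) * ρ)) =
    Real.exp (-(π ^ 2 / 8 * ρ)) * Real.exp (-(π / 12 * ρ) * σ) := by
  rw [← Real.exp_add]
  ring_nf

lemma integrableOn_exp_neg_linear {ρ : ℝ} (hρ : 0 < ρ) : MeasureTheory.IntegrableOn
    (fun σ : ℝ => Real.exp (-((π / 12 * σ + π ^ 2 / 8) * ρ))) (Set.Ioi 0) := by
  simp_rw [exp_neg_linear_eq]
  exact (exp_neg_integrableOn_Ioi 0 (by positivity)).const_mul _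

lemma integral_exp_neg_linear_le {ρ : ℝ} (hρ : 1 ≤ ρ) :
    ∫ σ in Set.Ioi (0 : ℝ), Real.exp (-((π / 12 * σ + π ^ 2 / 8) * ρ)) ≤
      Real.exp (-(π ^ 2 / 8 * ρ)) * 4 := by
  have hneg : -(π / 12 * ρ) < 0 := by
    rw [neg_lt_zero]
    positivity
  simp_rw [exp_neg_linear_eq]
  rw [MeasureTheory.integral_const_mul, integral_exp_mul_Ioi hneg, mul_zero, Real.exp_zero,
    neg_div_neg_eq]
  gcongr
  rw [div_le_iff₀ (by positivity)]
  nlinarith [Real.pi_gt_three]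

lemma norm_integral_Iic_leadingIntegrand_le {τ : ℂ} (hτ : 0 < τ.re) (hρ : 1 ≤ (τ⁻¹).re) :
    ‖∫ σ in Set.Iic (0 : ℝ), leadingIntegrand τ σ‖ ≤
      Real.exp (-(π ^ 2 / 8 * (τ⁻¹).re)) * 4 := by
  rw [← neg_zero, ← integral_comp_neg_Ioi]
  refine (MeasureTheory.norm_integral_le_of_norm_le (integrableOn_exp_neg_linear (inv_re_pos hτ))
    ((MeasureTheory.ae_restrict_iff' measurableSet_Ioi).2 (.of_forall fun σ hσ => ?_))).trans
      (integral_exp_neg_linear_le hρ)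
  have hexponent : π / 12 * σ + π ^ 2 / 8 ≤
      π * (1 / 6) * -σ + (2 * π * (1 : ℤ) - (-σ + π)) ^ 2 / 8 := by
    have : 0 ≤ π * σ := mul_nonneg Real.pi_pos.le hσ.out.le
    push_cast
    nlinarith [sq_nonneg σ]
  rw [leadingIntegrand, norm_mul, norm_exp_gaussian, norm_exp_neg_ofReal_mul, ofReal_div_re,
    ← Real.exp_add]
  gcongr
  nlinarith [mul_le_mul_of_nonneg_right hexponent (inv_re_pos hτ).le]

lemma exists_norm_integral_sub_le {K : ℝ} (hK : 0 < K) :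
    ∃ C > 0, ∀ τ ∈ cone K, 0 < τ.re → 1 ≤ (τ⁻¹).re →
      ‖(∫ σ in Set.Ioi (0 : ℝ), fourierKernel (1 / 6) (σ / τ) * periodicGaussian τ (σ + π)) -
        (8 * π * τ) ^ (1 / 2 : ℂ) * exp (-(π ^ 2 / (9 * τ)))‖ ≤
          C * Real.exp (-(π ^ 2 / 8 * (τ⁻¹).re)) := by
  obtain ⟨C, hC, hle⟩ := exists_norm_integrand_sub_leadingIntegrand_le hK
  refine ⟨4 * C + 4, by positivity, fun τ hτK hτ hρ => ?_⟩
  set F : ℝ → ℂ := fun σ => fourierKernel (1 / 6) (σ / τ) * periodicGaussian τ (σ + π)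
  have hlead := integrable_leadingIntegrand hτ
  have hbound : ∀ᵐ σ ∂MeasureTheory.volume.restrict (Set.Ioi (0 : ℝ)),
      ‖F σ - leadingIntegrand τ σ‖ ≤
        C * Real.exp (-((π / 12 * σ + π ^ 2 / 8) * (τ⁻¹).re)) :=
    (MeasureTheory.ae_restrict_iff' measurableSet_Ioi).2
      (.of_forall fun σ hσ => hle τ hτK hτ hρ σ hσ.out.le)
  have hdom := (integrableOn_exp_neg_linear (inv_re_pos hτ)).const_mul C
  have hF : MeasureTheory.IntegrableOn F (Set.Ioi 0) := by
    have hmeas : Measurable F :=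
      (measurable_fourierKernel _ τ).mul (measurable_periodicGaussian hτ)
    have hdiff := hdom.mono' (hmeas.aestronglyMeasurable.sub
      hlead.integrableOn.aestronglyMeasurable) hbound
    simpa [MeasureTheory.IntegrableOn] using hdiff.add hlead.integrableOn
  have hIoi : ‖∫ σ in Set.Ioi (0 : ℝ), (F σ - leadingIntegrand τ σ)‖ ≤
      C * (Real.exp (-(π ^ 2 / 8 * (τ⁻¹).re)) * 4) := by
    refine (MeasureTheory.norm_integral_le_of_norm_le hdom hbound).trans ?_
    rw [MeasureTheory.integral_const_mul]
    exact mul_le_mul_of_nonneg_left (integral_exp_neg_linear_le hρ) hC.le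
  rw [← integral_leadingIntegrand hτ,
    ← intervalIntegral.integral_Iic_add_Ioi hlead.integrableOn hlead.integrableOn,
    add_comm, ← sub_sub, ← MeasureTheory.integral_sub hF hlead.integrableOn]
  refine (norm_sub_le _ _).trans ((add_le_add hIoi
    (norm_integral_Iic_leadingIntegrand_le hτ hρ)).trans_eq ?_)
  ring

/-- The primitive sixth root of unity `e^{πi/3}`. -/
noncomputable def zetaSix : ℂ := exp (2 * π * I * (1 / 6 : ℝ))

lemma norm_zetaSix : ‖zetaSix‖ = 1 := by simp [zetaSix, norm_exp]

lemma R2_zetaSix_mul_thetaCofactor {K : ℝ} (hK : 0 < K) {τ : ℂ} (hτK : τ ∈ cone K)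
    (hτ : 0 < τ.re) :
    R2 zetaSix (exp (-τ)) * (2 * τ) * thetaCofactor τ = exp (π ^ 2 / (8 * τ)) *
      ∫ σ in Set.Ioi (0 : ℝ), fourierKernel (1 / 6) (σ / τ) * periodicGaussian τ (σ + π) := by
  have hsin : sin (π * (1 / 6 : ℝ)) = 1 / 2 := by
    rw [← ofReal_mul, ← ofReal_sin, mul_one_div, Real.sin_pi_div_six]
    norm_num
  have happell := mul_appellSeries_eq_integral hK (a := 1 / 6) (by norm_num) (by norm_num) hτ hτK
  rw [hsin, ← zetaSix, ← R2_mul_thetaSeries norm_zetaSix (norm_exp_neg_lt_one hτ),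
    thetaSeries_exp_neg hτ] at happell
  rw [thetaCofactor]
  apply mul_left_cancel₀ (thetaFactor_ne_zero (ne_zero_of_re_pos hτ))
  linear_combination 2 * exp (π ^ 2 / (8 * τ)) * happell

theorem exists_norm_R2_zetaSix_sub_le {K : ℝ} (hK : 0 < K) :
    ∃ C > 0, ∀ τ ∈ cone K, 0 < τ.re → 1 ≤ (τ⁻¹).re →
      ‖R2 zetaSix (exp (-τ)) * (2 * τ) * thetaCofactor τ -
        (8 * π * τ) ^ (1 / 2 : ℂ) * exp ((π ^ 2 / 72 : ℝ) / τ)‖ ≤ C := by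
  obtain ⟨C, hC, hle⟩ := exists_norm_integral_sub_le hK
  refine ⟨C, hC, fun τ hτK hτ hρ => ?_⟩
  have hnorm : ‖exp (π ^ 2 / (8 * τ))‖ = Real.exp (π ^ 2 / 8 * (τ⁻¹).re) := by
    rw [← ofReal_div_re, norm_exp]
    push_cast
    rw [div_div]
  have hexp : exp ((π ^ 2 / 72 : ℝ) / τ) = exp (π ^ 2 / (8 * τ)) * exp (-(π ^ 2 / (9 * τ))) := by
    rw [← exp_add]
    push_cast
    congr 1
    field_simp
    ring
  rw [R2_zetaSix_mul_thetaCofactor hK hτK hτ, hexp, mul_left_comm,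
    ← mul_sub, norm_mul, hnorm]
  refine (mul_le_mul_of_nonneg_left (hle τ hτK hτ hρ) (Real.exp_pos _).le).trans_eq ?_
  rw [mul_left_comm, ← Real.exp_add, add_neg_cancel, Real.exp_zero, mul_one]

end ConeAsymptotics

section LogarithmicSeries

variable {z q τ : ℂ} {m : ℕ}

/-- The truncated geometric series `x + x² + ⋯ + xⁿ`. -/
noncomputable def powerSum (x : ℂ) (n : ℕ) : ℂ := ∑ j ∈ Finset.range n, x ^ (j + 1)

/-- The weight of `powerSum (q^(2m)) n / m` in the Taylor series of the logarithm of
`rankTerm z q n`. -/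
noncomputable def logWeight (z q : ℂ) (m : ℕ) : ℂ := (-1) ^ (m + 1) * q⁻¹ ^ m + (z ^ m + z⁻¹ ^ m)

/-- The `m`-th term of the Taylor series of the logarithm of `rankTerm z q n / q^(n²)`. -/
noncomputable def logCoeff (z q : ℂ) (n m : ℕ) : ℂ := logWeight z q m * powerSum (q ^ (2 * m)) n / m

lemma logCoeff_zero_right (z q : ℂ) (n : ℕ) : logCoeff z q n 0 = 0 := by simp [logCoeff]

lemma logCoeff_succ (hq : q ≠ 0) (n m : ℕ) : logCoeff z q (n + 1) m = logCoeff z q n m +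
    ((-1) ^ (m + 1) * (q ^ (2 * n + 1)) ^ m / m + (z * q ^ (2 * n + 2)) ^ m / m +
      (z⁻¹ * q ^ (2 * n + 2)) ^ m / m) := by
  have hodd : q⁻¹ ^ m * (q ^ (2 * m)) ^ (n + 1) = (q ^ (2 * n + 1)) ^ m := by
    rw [inv_pow, ← pow_mul, ← pow_mul, inv_mul_eq_iff_eq_mul₀ (pow_ne_zero m hq), ← pow_add]
    ring_nf
  have heven : (q ^ (2 * m)) ^ (n + 1) = (q ^ (2 * n + 2)) ^ m := by
    rw [← pow_mul, ← pow_mul]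
    ring_nf
  simp only [logCoeff, logWeight, powerSum, Finset.sum_range_succ, mul_pow z, mul_pow z⁻¹, ← heven,
    ← hodd]
  ring

lemma exists_hasSum_logCoeff (hz : ‖z‖ = 1) (hq : ‖q‖ < 1) (hq₀ : q ≠ 0) (n : ℕ) :
    ∃ E, HasSum (logCoeff z q n) E ∧ rankTerm z q n = q ^ n ^ 2 * exp E := by
  induction n with
  | zero =>
    exact ⟨0, hasSum_zero.congr_fun fun m => by simp [logCoeff, powerSum], by simp [rankTerm]⟩
  | succ n ih =>
    obtain ⟨E, hE, hterm⟩ := ih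
    have hodd : ‖q ^ (2 * n + 1)‖ < 1 := norm_pow_lt_one hq (by lia)
    have hne {w : ℂ} (hw : ‖w‖ = 1) := one_sub_mul_pow_ne_zero hw hq (2 * n + 1)
    have hne₁ : 1 + q ^ (2 * n + 1) ≠ 0 := by
      simpa using one_sub_mul_pow_ne_zero (w := -1) (by simp) hq (2 * n)
    have hlog {w : ℂ} (hw : ‖w‖ = 1) := hasSum_taylorSeries_neg_log (z := w * q ^ (2 * n + 2))
      (by simpa [hw] using norm_pow_lt_one hq (k := 2 * n + 2) (by lia))
    have hz' := norm_inv_eq_one hz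
    refine ⟨_, (hE.add (((hasSum_taylorSeries_log hodd).add (hlog hz)).add
      (hlog hz'))).congr_fun (logCoeff_succ hq₀ n), ?_⟩
    rw [rankTerm_succ, hterm, rankRatio, exp_add, exp_add, exp_add, exp_neg, exp_neg, exp_log hne₁,
      exp_log (hne hz), exp_log (hne hz'), mul_assoc (1 + _), ← mul_inv]
    ring

lemma powerSum_mul_one_sub (x : ℂ) (n : ℕ) : powerSum x n * (1 - x) = x * (1 - x ^ n) := by
  rw [powerSum, Finset.sum_congr rfl fun j _ => pow_succ' x j, ← Finset.mul_sum, mul_assoc,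
    geom_sum_mul_neg]

lemma norm_one_sub_pow_le_two {x : ℂ} (hx : ‖x‖ ≤ 1) (n : ℕ) : ‖1 - x ^ n‖ ≤ 2 := by
  refine (norm_sub_le _ _).trans ?_
  rw [norm_one, norm_pow]
  linarith [pow_le_one₀ (n := n) (norm_nonneg x) hx]

lemma norm_powerSum_mul_norm_one_sub_le {x : ℂ} (hx : ‖x‖ ≤ 1) (n : ℕ) :
    ‖powerSum x n‖ * ‖1 - x‖ ≤ 2 := by
  rw [← norm_mul, powerSum_mul_one_sub, norm_mul]
  simpa using mul_le_mul hx (norm_one_sub_pow_le_two hx n) (norm_nonneg _) zero_le_one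

lemma sum_exp_neg_odd_mul_le {b : ℝ} (hb : 0 < b) (n : ℕ) :
    ∑ j ∈ Finset.range n, Real.exp (-((2 * j + 1) * b)) ≤ 1 / (2 * b) := by
  have htelescope : (∑ j ∈ Finset.range n, Real.exp (-((2 * j + 1) * b))) *
      (Real.exp b - Real.exp (-b)) = 1 - Real.exp (-(2 * n * b)) := by
    refine (Finset.sum_mul ..).trans ((Finset.sum_congr rfl fun j _ => ?_).trans
      ((Finset.sum_range_sub' (fun j : ℕ => Real.exp (-(2 * j * b))) n).trans (by simp)))
    rw [mul_sub, ← Real.exp_add, ← Real.exp_add]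
    push_cast
    ring_nf
  have hsinh : b ≤ Real.sinh b := Real.self_le_sinh_iff.2 hb.le
  rw [Real.sinh_eq] at hsinh
  rw [le_div_iff₀ (by positivity)]
  have hsum : 0 ≤ ∑ j ∈ Finset.range n, Real.exp (-((2 * j + 1) * b)) :=
    Finset.sum_nonneg fun _ _ => (Real.exp_pos _).le
  nlinarith [Real.exp_pos (-(2 * n * b))]

lemma norm_inv_pow_mul_powerSum_le (hτ : 0 < τ.re) (hm : m ≠ 0) (n : ℕ) :
    ‖(exp (-τ))⁻¹ ^ m * powerSum (exp (-τ) ^ (2 * m)) n‖ ≤ 1 / (2 * (m * τ.re)) := by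
  have hterm (j : ℕ) : (exp (-τ))⁻¹ ^ m * (exp (-τ) ^ (2 * m)) ^ (j + 1) =
      exp (-((2 * j + 1) * (m * τ))) := by
    rw [← exp_neg, ← exp_nat_mul, ← exp_nat_mul, ← exp_nat_mul, ← exp_add]
    push_cast
    ring_nf
  rw [powerSum, Finset.mul_sum]
  refine (norm_sum_le _ _).trans (le_trans (Finset.sum_le_sum fun j _ => ?_)
    (sum_exp_neg_odd_mul_le (by positivity) n))
  rw [hterm, norm_exp]
  exact le_of_eq (by congr 1; simp)

lemma norm_exp_neg_pow_le_one (hτ : 0 < τ.re) (m : ℕ) : ‖exp (-τ) ^ m‖ ≤ 1 := by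
  rw [norm_pow]
  exact pow_le_one₀ (norm_nonneg _) (norm_exp_neg_lt_one hτ).le

lemma norm_powerSum_le (hτ : 0 < τ.re) (hm : m ≠ 0) (n : ℕ) :
    ‖powerSum (exp (-τ) ^ (2 * m)) n‖ ≤ 1 / (2 * (m * τ.re)) := by
  have hcancel : exp (-τ) ^ m * ((exp (-τ))⁻¹ ^ m * powerSum (exp (-τ) ^ (2 * m)) n) =
      powerSum (exp (-τ) ^ (2 * m)) n := by
    rw [inv_pow, mul_inv_cancel_left₀ (pow_ne_zero m (exp_ne_zero _))]
  rw [← hcancel, norm_mul]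
  exact (mul_le_of_le_one_left (norm_nonneg _) (norm_exp_neg_pow_le_one hτ m)).trans
    (norm_inv_pow_mul_powerSum_le hτ hm n)

lemma norm_pow_add_inv_pow_le (hz : ‖z‖ = 1) (m : ℕ) : ‖z ^ m + z⁻¹ ^ m‖ ≤ 2 := by
  refine (norm_add_le _ _).trans ?_
  rw [norm_pow, norm_pow, hz, norm_inv_eq_one hz, one_pow]
  norm_num

lemma norm_logWeight_le (hz : ‖z‖ = 1) (q : ℂ) (m : ℕ) : ‖logWeight z q m‖ ≤ ‖q‖⁻¹ ^ m + 2 := by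
  refine (norm_add_le _ _).trans (add_le_add (le_of_eq ?_) (norm_pow_add_inv_pow_le hz m))
  simp

lemma norm_logCoeff_le_mul (z q : ℂ) (n m : ℕ) :
    ‖logCoeff z q n m‖ ≤ ‖logWeight z q m‖ * ‖powerSum (q ^ (2 * m)) n‖ := by
  rcases eq_or_ne m 0 with rfl | hm
  · rw [logCoeff_zero_right, norm_zero]
    positivity
  · rw [logCoeff, norm_div, norm_mul, norm_natCast]
    exact div_le_self (by positivity) (by exact_mod_cast Nat.one_le_iff_ne_zero.2 hm)

lemma norm_logCoeff_le (hz : ‖z‖ = 1) (hτ : 0 < τ.re) (n m : ℕ) :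
    ‖logCoeff z (exp (-τ)) n m‖ ≤ 3 / (2 * τ.re) * ((m : ℝ) ^ 2)⁻¹ := by
  rcases eq_or_ne m 0 with rfl | hm
  · simp [logCoeff_zero_right]
  have hweighted : ‖logWeight z (exp (-τ)) m * powerSum (exp (-τ) ^ (2 * m)) n‖ ≤
      1 / (2 * (m * τ.re)) + 2 * (1 / (2 * (m * τ.re))) := by
    rw [logWeight, add_mul, mul_assoc]
    refine (norm_add_le _ _).trans (add_le_add ?_ ?_)
    · rw [norm_mul, norm_pow, norm_neg, norm_one, one_pow, one_mul]
      exact norm_inv_pow_mul_powerSum_le hτ hm n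
    · rw [norm_mul]
      exact mul_le_mul (norm_pow_add_inv_pow_le hz m) (norm_powerSum_le hτ hm n) (norm_nonneg _)
        two_pos.le
  rw [logCoeff, norm_div, norm_natCast]
  refine (div_le_div_of_nonneg_right hweighted m.cast_nonneg).trans_eq ?_
  field_simp
  norm_num

lemma re_le_sum_logCoeff_add (hz : ‖z‖ = 1) (hτ : 0 < τ.re) {n : ℕ} {E : ℂ}
    (hE : HasSum (logCoeff z (exp (-τ)) n) E) {N : ℕ} (hN : N ≠ 0) :
    E.re ≤ ∑ m ∈ Finset.range (N + 1), (logCoeff z (exp (-τ)) n m).re + 3 / (2 * τ.re * N) := by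
  refine le_of_tendsto ((hasSum_re hE).tendsto_sum_nat.comp (tendsto_add_atTop_nat 1)) ?_
  filter_upwards [eventually_ge_atTop N] with M hM
  have htail : ∑ m ∈ Finset.Ioc N M, (logCoeff z (exp (-τ)) n m).re ≤ 3 / (2 * τ.re * N) :=
    calc ∑ m ∈ Finset.Ioc N M, (logCoeff z (exp (-τ)) n m).re
        ≤ ∑ m ∈ Finset.Ioc N M, 3 / (2 * τ.re) * ((m : ℝ) ^ 2)⁻¹ :=
          Finset.sum_le_sum fun m _ => (re_le_norm _).trans (norm_logCoeff_le hz hτ n m)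
      _ = 3 / (2 * τ.re) * ∑ m ∈ Finset.Ioc N M, ((m : ℝ) ^ 2)⁻¹ := (Finset.mul_sum ..).symm
      _ ≤ 3 / (2 * τ.re) * (N : ℝ)⁻¹ := by
          gcongr
          exact (sum_Ioc_inv_sq_le_sub hN hM).trans (sub_le_self _ (by positivity))
      _ = 3 / (2 * τ.re * N) := by rw [← div_eq_mul_inv, div_div]
  rw [Function.comp_apply, ← Finset.sum_range_add_sum_Ico _ (Nat.add_le_add_right hM 1),
    Finset.Ico_add_one_add_one_eq_Ioc]
  gcongr

end LogarithmicSeries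

section DampedWave

variable {A B x : ℝ}

lemma exp_neg_mul_wave_le (hA : 0 < A) (hB : 0 ≤ B) (hx : 0 ≤ x) (hxB : x * B ≤ π) :
    Real.exp (-(x * A)) * (A * Real.cos (x * B) - B * Real.sin (x * B)) ≤ A := by
  have hsin : 0 ≤ B * Real.sin (x * B) :=
    mul_nonneg hB (Real.sin_nonneg_of_nonneg_of_le_pi (by positivity) hxB)
  have hexp : Real.exp (-(x * A)) ≤ 1 := Real.exp_le_one_iff.2 (neg_nonpos.2 (by positivity))
  calc Real.exp (-(x * A)) * (A * Real.cos (x * B) - B * Real.sin (x * B))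
      ≤ Real.exp (-(x * A)) * A := by
        gcongr
        nlinarith [Real.cos_le_one (x * B)]
    _ ≤ A := mul_le_of_le_one_left hA.le hexp

lemma exp_neg_mul_add_three_mul_le (hA : 0 < A) (hB : 0 < B) (hxB : π < x * B) :
    Real.exp (-(x * A)) * (B + 3 * A) ≤ B := by
  have hle : 3 * A ≤ B * (x * A) := by nlinarith [Real.pi_gt_three]
  rw [Real.exp_neg, inv_mul_le_iff₀ (Real.exp_pos _)]
  nlinarith [mul_le_mul_of_nonneg_left (Real.add_one_le_exp (x * A)) hB.le]

lemma exp_neg_mul_wave_mul_le (hA : 0 < A) (hB : 0 < B) (hxB : π < x * B) :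
    Real.exp (-(x * A)) * (A * Real.cos (x * B) - B * Real.sin (x * B)) * (B + 3 * A) ≤
      B ^ 2 + A ^ 2 / 2 := by
  have hcos : A * Real.cos (x * B) - B * Real.sin (x * B) ≤ √(A ^ 2 + B ^ 2) := by
    refine Real.le_sqrt_of_sq_le ?_
    nlinarith [sq_nonneg (A * Real.sin (x * B) + B * Real.cos (x * B)),
      Real.sin_sq_add_cos_sq (x * B)]
  calc Real.exp (-(x * A)) * (A * Real.cos (x * B) - B * Real.sin (x * B)) * (B + 3 * A)
      = Real.exp (-(x * A)) * (B + 3 * A) *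
          (A * Real.cos (x * B) - B * Real.sin (x * B)) := by ring
    _ ≤ Real.exp (-(x * A)) * (B + 3 * A) * √(A ^ 2 + B ^ 2) := by gcongr
    _ ≤ B * √(A ^ 2 + B ^ 2) := by
        gcongr
        exact exp_neg_mul_add_three_mul_le hA hB hxB
    _ ≤ B ^ 2 + A ^ 2 / 2 := by
        refine (abs_le_of_sq_le_sq' ?_ (by positivity)).2
        rw [mul_pow, Real.sq_sqrt (by positivity)]
        nlinarith [sq_nonneg (A ^ 2)]

lemma mul_sub_wave_ge (hA : 0 < A) (B : ℝ) (hx : 0 ≤ x) : -(A ^ 2 + B ^ 2) / 8 ≤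
    A * (A - Real.exp (-(x * A)) * (A * Real.cos (x * B) - B * Real.sin (x * B))) := by
  wlog hB : 0 ≤ B generalizing B
  · simpa using this (-B) (by linarith)
  rcases le_or_gt (x * B) π with hxB | hxB
  · have := mul_nonneg hA.le (sub_nonneg.2 (exp_neg_mul_wave_le hA hB hx hxB))
    nlinarith [sq_nonneg A, sq_nonneg B]
  · have hB₀ : 0 < B := hB.lt_of_ne' fun h => by simp [h, Real.pi_pos.not_gt] at hxB
    have hwave := exp_neg_mul_wave_mul_le hA hB₀ hxB
    set Y := Real.exp (-(x * A)) * (A * Real.cos (x * B) - B * Real.sin (x * B))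
    have hquad : 0 ≤ B * (B ^ 2 - 5 * A * B + 9 * A ^ 2) :=
      mul_nonneg hB (by nlinarith [sq_nonneg (2 * B - 5 * A), sq_nonneg A])
    have hprod : 0 ≤ (A * (A - Y) - -(A ^ 2 + B ^ 2) / 8) * (B + 3 * A) := by
      nlinarith [mul_le_mul_of_nonneg_left hwave hA.le, pow_pos hA 3]
    exact sub_nonneg.1 (nonneg_of_mul_nonneg_left hprod (by positivity))

end DampedWave

section ExpNearZero

variable {z : ℂ}

lemma norm_div_two_le_norm_exp_sub_one (hz : ‖z‖ ≤ 1 / 2) : ‖z‖ / 2 ≤ ‖exp z - 1‖ := by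
  have htaylor := norm_exp_sub_one_sub_id_le (x := z) (by linarith)
  have htriangle := norm_sub_norm_le z (z - (exp z - 1))
  rw [sub_sub_cancel, norm_sub_rev z] at htriangle
  nlinarith [norm_nonneg z]

lemma norm_inv_exp_sub_one_sub_inv_le (hz : ‖z‖ ≤ 1 / 2) (hz₀ : z ≠ 0) :
    ‖(exp z - 1)⁻¹ - z⁻¹‖ ≤ 2 := by
  have htaylor := norm_exp_sub_one_sub_id_le (x := z) (by linarith)
  have hlower := norm_div_two_le_norm_exp_sub_one hz
  have hpos := norm_pos_iff.2 hz₀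
  have hne : exp z - 1 ≠ 0 := norm_pos_iff.1 (by linarith)
  rw [inv_sub_inv hne hz₀, norm_div, norm_mul, norm_sub_rev, div_le_iff₀ (by positivity)]
  nlinarith

lemma re_mul_re_one_sub_exp_pow_mul_inv_ge (n : ℕ) (hz : 0 < z.re) :
    -1 / 8 ≤ z.re * ((1 - exp (-z) ^ n) * z⁻¹).re := by
  have hnormSq : 0 < normSq z := normSq_pos.2 (ne_zero_of_re_pos hz)
  have hre : ((1 - exp (-z) ^ n) * z⁻¹).re = (z.re - Real.exp (-(n * z.re)) *
      (z.re * Real.cos (n * z.im) - z.im * Real.sin (n * z.im))) / normSq z := by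
    rw [← exp_nat_mul, mul_re, inv_re, inv_im, sub_re, sub_im, exp_re, exp_im, one_re, one_im]
    simp only [mul_neg, neg_re, neg_im, ← ofReal_natCast, re_ofReal_mul, im_ofReal_mul,
      Real.cos_neg, Real.sin_neg]
    ring
  rw [hre, ← mul_div_assoc, le_div_iff₀ hnormSq, normSq_apply, ← sq, ← sq]
  linarith [mul_sub_wave_ge hz z.im n.cast_nonneg]

lemma re_mul_re_powerSum_exp_neg_ge (n : ℕ) (hre : 0 < z.re) (hz : ‖z‖ ≤ 1 / 2) :
    -1 / 8 - 4 * z.re ≤ z.re * (powerSum (exp (-z)) n).re := by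
  have hz₀ : z ≠ 0 := ne_zero_of_re_pos hre
  have hne : exp z - 1 ≠ 0 := by
    have := norm_div_two_le_norm_exp_sub_one hz
    have := norm_pos_iff.2 hz₀
    exact norm_pos_iff.1 (by linarith)
  set x := exp (-z) ^ n with hx
  have hgeom : powerSum (exp (-z)) n = (1 - x) * z⁻¹ + (1 - x) * ((exp z - 1)⁻¹ - z⁻¹) := by
    have hmul := powerSum_mul_one_sub (exp (-z)) n
    have hexp : exp z * exp (-z) = 1 := by rw [← exp_add, add_neg_cancel, exp_zero]
    rw [← mul_add, add_sub_cancel, eq_mul_inv_iff_mul_eq₀ hne, hx]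
    linear_combination exp z * hmul + (powerSum (exp (-z)) n + 1 - exp (-z) ^ n) * hexp
  have herror : ‖(1 - x) * ((exp z - 1)⁻¹ - z⁻¹)‖ ≤ 2 * 2 := by
    rw [norm_mul]
    exact mul_le_mul (norm_one_sub_pow_le_two (norm_exp_neg_lt_one hre).le n)
      (norm_inv_exp_sub_one_sub_inv_le hz hz₀) (norm_nonneg _) two_pos.le
  have herror_re := (abs_le.1 ((abs_re_le_norm _).trans herror)).1
  have hmain := re_mul_re_one_sub_exp_pow_mul_inv_ge n hre
  rw [hgeom, add_re, mul_add]
  nlinarith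

end ExpNearZero

section Resonance

variable {z τ₀ : ℂ} {m : ℕ}

lemma continuousAt_logWeight (z τ₀ : ℂ) (m : ℕ) :
    ContinuousAt (fun τ => logWeight z (exp (-τ)) m) τ₀ := by
  have hne : exp (-τ₀) ≠ 0 := exp_ne_zero _
  unfold logWeight
  fun_prop (disch := assumption)

lemma norm_exp_neg_of_re_eq_zero (hτ₀ : τ₀.re = 0) : ‖exp (-τ₀)‖ = 1 := by simp [norm_exp, hτ₀]

lemma norm_logWeight_exp_neg_le (hz : ‖z‖ = 1) (hτ₀ : τ₀.re = 0) (m : ℕ) :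
    ‖logWeight z (exp (-τ₀)) m‖ ≤ 3 := by
  refine (norm_logWeight_le hz _ m).trans_eq ?_
  rw [norm_exp_neg_of_re_eq_zero hτ₀, inv_one, one_pow]
  norm_num

lemma eventually_re_mul_logCoeff_le_of_pow_ne_one (hτ₀ : τ₀.re = 0)
    (hpow : exp (-τ₀) ^ (2 * m) ≠ 1) {η : ℝ} (hη : 0 < η) :
    ∀ᶠ τ in 𝓝 τ₀, 0 < τ.re → ∀ n, τ.re * (logCoeff z (exp (-τ)) n m).re ≤ η := by
  have hcont : ContinuousAt (fun τ : ℂ =>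
      τ.re * (‖logWeight z (exp (-τ)) m‖ * (2 / ‖1 - exp (-τ) ^ (2 * m)‖))) τ₀ := by
    have hweight := continuousAt_logWeight z τ₀ m
    have hne : ‖1 - exp (-τ₀) ^ (2 * m)‖ ≠ 0 := norm_ne_zero_iff.2 (sub_ne_zero.2 hpow.symm)
    have hre := continuous_re.continuousAt (x := τ₀)
    fun_prop (disch := assumption)
  have hne : ContinuousAt (fun τ : ℂ => exp (-τ) ^ (2 * m)) τ₀ := by fun_prop
  have hlt := hcont.eventually (eventually_lt_nhds (b := η) (by simpa [hτ₀] using hη))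
  filter_upwards [hlt, hne.eventually_ne hpow] with τ hlt hne hτ n
  refine le_trans (mul_le_mul_of_nonneg_left ?_ hτ.le) hlt.le
  refine (re_le_norm _).trans ((norm_logCoeff_le_mul z _ n m).trans ?_)
  gcongr
  rw [le_div_iff₀ (norm_pos_iff.2 (sub_ne_zero.2 hne.symm))]
  exact norm_powerSum_mul_norm_one_sub_le (norm_exp_neg_pow_le_one hτ _) n

lemma eventually_re_mul_logCoeff_le_of_le_abs_im (hz : ‖z‖ = 1) {K : ℝ} (hK : 0 < K) (m : ℕ) :
    ∀ᶠ τ in 𝓝 (0 : ℂ), 0 < τ.re → K * τ.re ≤ |τ.im| →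
      ∀ n, τ.re * (logCoeff z (exp (-τ)) n m).re ≤ 8 / K := by
  rcases eq_or_ne m 0 with rfl | hm
  · refine .of_forall fun τ _ _ n => ?_
    rw [logCoeff_zero_right, zero_re, mul_zero]
    positivity
  have hm₁ : (1 : ℝ) ≤ m := by exact_mod_cast Nat.one_le_iff_ne_zero.2 hm
  have hweight := (continuousAt_logWeight z 0 m).norm.eventually
    (gt_mem_nhds ((norm_logWeight_exp_neg_le hz zero_re m).trans_lt (by norm_num : (3 : ℝ) < 4)))
  have hsmall : ∀ᶠ τ : ℂ in 𝓝 0, ‖-((2 * m : ℕ) * τ)‖ < 1 / 2 :=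
    (show ContinuousAt (fun τ : ℂ => ‖-((2 * m : ℕ) * τ)‖) 0 by fun_prop).eventually
      (gt_mem_nhds (by simp))
  filter_upwards [hweight, hsmall] with τ hweight hsmall hτ hKτ n
  have hgap : m * |τ.im| ≤ ‖1 - exp (-τ) ^ (2 * m)‖ := by
    rw [norm_sub_rev, ← exp_nat_mul, mul_neg]
    refine le_trans ?_ (norm_div_two_le_norm_exp_sub_one hsmall.le)
    rw [norm_neg, norm_mul, Complex.norm_natCast]
    push_cast
    nlinarith [abs_im_le_norm τ]
  have hsum : ‖powerSum (exp (-τ) ^ (2 * m)) n‖ * (K * τ.re) ≤ 2 :=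
    calc ‖powerSum (exp (-τ) ^ (2 * m)) n‖ * (K * τ.re)
        ≤ ‖powerSum (exp (-τ) ^ (2 * m)) n‖ * ‖1 - exp (-τ) ^ (2 * m)‖ := by
          gcongr
          nlinarith [abs_nonneg τ.im]
      _ ≤ 2 := norm_powerSum_mul_norm_one_sub_le (norm_exp_neg_pow_le_one hτ _) n
  have hcoeff : (logCoeff z (exp (-τ)) n m).re ≤ 4 * ‖powerSum (exp (-τ) ^ (2 * m)) n‖ :=
    (re_le_norm _).trans ((norm_logCoeff_le_mul z _ n m).trans (by gcongr))
  rw [le_div_iff₀ hK]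
  nlinarith [mul_le_mul_of_nonneg_right hcoeff (mul_pos hK hτ).le]

lemma mul_re_powerSum_le_max (hm : m ≠ 0) {d : ℝ} (hd : |d| ≤ 3) {τ σ : ℂ} (hτ : 0 < τ.re)
    (hσ : σ.re = τ.re) (hsmall : ‖(2 * m : ℕ) * σ‖ ≤ 1 / 2)
    (hpow : exp (-τ) ^ (2 * m) = exp (-((2 * m : ℕ) * σ))) (n : ℕ) :
    d * (2 * (m * τ.re) * (powerSum (exp (-τ) ^ (2 * m)) n).re) ≤
      max d (-d / 8) + 24 * (m * τ.re) := by
  have hre : ((2 * m : ℕ) * σ : ℂ).re = 2 * (m * τ.re) := by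
    rw [← ofReal_natCast, re_ofReal_mul, hσ]
    push_cast
    ring
  have hmτ : 0 < m * τ.re := by positivity
  have hlower := re_mul_re_powerSum_exp_neg_ge n (by rw [hre]; positivity) hsmall
  have hupper := (re_le_norm _).trans (norm_powerSum_le hτ hm n)
  rw [le_div_iff₀ (by positivity)] at hupper
  rw [← hpow, hre] at hlower
  rcases le_total 0 d with h | h
  · nlinarith [le_max_left d (-d / 8)]
  · nlinarith [le_max_right d (-d / 8), abs_le.1 hd]

lemma re_mul_logCoeff_mul_two_sq_le {τ : ℂ} (hm : m ≠ 0) (hτ : 0 < τ.re) (d : ℝ) (n : ℕ) :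
    τ.re * (logCoeff z (exp (-τ)) n m).re * (2 * m ^ 2) ≤
      d * (2 * (m * τ.re) * (powerSum (exp (-τ) ^ (2 * m)) n).re) +
        ‖logWeight z (exp (-τ)) m - d‖ := by
  have hsum := norm_powerSum_le hτ hm n
  set S := powerSum (exp (-τ) ^ (2 * m)) n with hS
  set W := logWeight z (exp (-τ)) m with hW
  rw [le_div_iff₀ (by positivity)] at hsum
  have hcoeff : logCoeff z (exp (-τ)) n m = ((d : ℝ) * S + (W - d) * S) / (m : ℝ) := by
    rw [logCoeff, ← hS, ← hW, ofReal_natCast]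
    ring
  have hrest : 2 * (m * τ.re) * ((W - d) * S).re ≤ ‖W - d‖ :=
    calc 2 * (m * τ.re) * ((W - d) * S).re ≤ 2 * (m * τ.re) * (‖W - d‖ * ‖S‖) := by
          gcongr
          exact (re_le_norm _).trans_eq (norm_mul _ _)
      _ = ‖W - d‖ * (‖S‖ * (2 * (m * τ.re))) := by ring
      _ ≤ ‖W - d‖ := mul_le_of_le_one_right (norm_nonneg _) hsum
  calc τ.re * (logCoeff z (exp (-τ)) n m).re * (2 * m ^ 2)
      = d * (2 * (m * τ.re) * S.re) + 2 * (m * τ.re) * ((W - d) * S).re := by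
        rw [hcoeff, div_ofReal_re, add_re, re_ofReal_mul]
        field_simp
    _ ≤ d * (2 * (m * τ.re) * S.re) + ‖W - d‖ := by gcongr

lemma eventually_re_mul_logCoeff_le_of_pow_eq_one (hz : ‖z‖ = 1) (hm : m ≠ 0) (hτ₀ : τ₀.re = 0)
    (hpow : exp (-τ₀) ^ (2 * m) = 1) {d : ℝ} (hd : logWeight z (exp (-τ₀)) m = d) {η : ℝ}
    (hη : 0 < η) :
    ∀ᶠ τ in 𝓝 τ₀, 0 < τ.re → ∀ n,
      τ.re * (logCoeff z (exp (-τ)) n m).re ≤ max d (-d / 8) / (2 * m ^ 2) + η := by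
  have hm₁ : (1 : ℝ) ≤ m := by exact_mod_cast Nat.one_le_iff_ne_zero.2 hm
  have hd₃ : |d| ≤ 3 := by
    rw [← Real.norm_eq_abs, ← norm_real, ← hd]
    exact norm_logWeight_exp_neg_le hz hτ₀ m
  have herror :
      ContinuousAt (fun τ : ℂ => 24 * (m * τ.re) + ‖logWeight z (exp (-τ)) m - d‖) τ₀ := by
    have hweight := continuousAt_logWeight z τ₀ m
    have hre := continuous_re.continuousAt (x := τ₀)
    fun_prop
  have hsmall : ∀ᶠ τ in 𝓝 τ₀, ‖(2 * m : ℕ) * (τ - τ₀)‖ < 1 / 2 :=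
    (show ContinuousAt (fun τ : ℂ => ‖(2 * m : ℕ) * (τ - τ₀)‖) τ₀ by fun_prop).eventually
      (gt_mem_nhds (by simp))
  filter_upwards [herror.eventually (gt_mem_nhds (by simpa [hd, hτ₀] using hη)), hsmall]
    with τ herror hsmall hτ n
  have hpowτ : exp (-τ) ^ (2 * m) = exp (-((2 * m : ℕ) * (τ - τ₀))) := by
    calc exp (-τ) ^ (2 * m) = exp (-((2 * m : ℕ) * (τ - τ₀))) * exp (-τ₀) ^ (2 * m) := by
          rw [← exp_nat_mul, ← exp_nat_mul, ← exp_add]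
          ring_nf
      _ = exp (-((2 * m : ℕ) * (τ - τ₀))) := by rw [hpow, mul_one]
  have hmain := mul_re_powerSum_le_max hm hd₃ hτ (by simp [hτ₀]) hsmall.le hpowτ n
  have hscaled : τ.re * (logCoeff z (exp (-τ)) n m).re * (2 * m ^ 2) ≤ max d (-d / 8) + η := by
    linarith [re_mul_logCoeff_mul_two_sq_le (z := z) hm hτ d n]
  have hη_le : η ≤ η * (2 * m ^ 2) := le_mul_of_one_le_right hη.le (by nlinarith)
  rw [← sub_le_iff_le_add, le_div_iff₀ (by positivity), sub_mul]
  linarith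

end Resonance

section MinorArcs

lemma zetaSix_pow_three : zetaSix ^ 3 = -1 := by
  rw [zetaSix, ← exp_nat_mul, ← exp_pi_mul_I]
  congr 1
  push_cast
  ring

lemma zetaSix_sq : zetaSix ^ 2 = zetaSix - 1 := by
  have hne : zetaSix + 1 ≠ 0 := by
    intro h
    have him := congrArg im h
    have hpi : (2 * π * I * (1 / 6 : ℝ) : ℂ) = (π / 3 : ℝ) * I := by
      push_cast
      ring
    rw [zetaSix, hpi, add_im, exp_ofReal_mul_I_im, Real.sin_pi_div_three] at him
    simp at him
  refine mul_left_cancel₀ hne ?_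
  linear_combination zetaSix_pow_three

lemma zetaSix_inv : zetaSix⁻¹ = 1 - zetaSix :=
  inv_eq_of_mul_eq_one_right (by linear_combination -zetaSix_sq)

lemma zetaSix_pow_six : zetaSix ^ 6 = 1 := by
  linear_combination (zetaSix ^ 3 - 1) * zetaSix_pow_three

/-- The integer `ζ ^ m + ζ⁻¹ ^ m` for a primitive sixth root of unity `ζ`, in a computable form. -/
def sixthTrace (m : ℕ) : ℤ :=
  match m % 6 with
  | 0 => 2
  | 1 | 5 => 1
  | 2 | 4 => -1
  | _ => -2

lemma zetaSix_pow_add_inv_pow (m : ℕ) : zetaSix ^ m + zetaSix⁻¹ ^ m = sixthTrace m := by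
  have hinv : zetaSix⁻¹ ^ 6 = 1 := by rw [inv_pow, zetaSix_pow_six, inv_one]
  rw [pow_eq_pow_mod m zetaSix_pow_six, pow_eq_pow_mod m hinv, sixthTrace, zetaSix_inv]
  have hsq := zetaSix_sq
  have hlt : m % 6 < 6 := Nat.mod_lt _ (by norm_num)
  generalize m % 6 = r at hlt
  interval_cases r
  · norm_num
  · norm_num
  · norm_num; linear_combination 2 * hsq
  · norm_num; linear_combination 3 * hsq
  · norm_num; linear_combination (2 * zetaSix ^ 2 - 2 * zetaSix + 2) * hsq
  · norm_num; linear_combination (5 * zetaSix ^ 2 - 5 * zetaSix) * hsq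

/-- The value of `logWeight zetaSix w m` at a root of unity `w` with `w ^ k = s = ±1` and
`k ∣ m`. -/
def resonanceWeight (k : ℕ) (s : ℤ) (m : ℕ) : ℤ := (-1) ^ (m + 1) * s ^ (m / k) + sixthTrace m

/-- The limiting upper bound for `τ.re * (logCoeff zetaSix (exp (-τ)) n m).re`, uniform in `n`, as
`exp (-τ)` tends radially or tangentially to a root of unity `w` such that `w ^ 2` has order `k` and
`w ^ k = s`. -/
def resonanceBound (k : ℕ) (s : ℤ) (m : ℕ) : ℚ :=
  if k ∣ m then max (resonanceWeight k s m : ℚ) (-(resonanceWeight k s m : ℚ) / 8) / (2 * m ^ 2)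
  else 0

set_option maxRecDepth 100000 in
lemma forall_sum_resonanceBound_le : ∀ k < 61, ∀ s ∈ ({1, -1} : Finset ℤ),
    s = -1 ∨ Odd k ∧ k ≠ 1 → ∑ m ∈ Finset.range 61, resonanceBound k s m ≤ 1 / 10 := by
  decide +kernel

lemma odd_orderOf_sq {M : Type*} [Monoid M] {w : M} (hk : orderOf (w ^ 2) ≠ 0)
    (hw : w ^ orderOf (w ^ 2) = 1) : Odd (orderOf (w ^ 2)) := by
  by_contra heven
  obtain ⟨j, hj⟩ := even_iff_two_dvd.1 (Nat.not_odd_iff_even.1 heven)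
  have hdvd : orderOf (w ^ 2) ∣ j := orderOf_dvd_of_pow_eq_one (by rw [← pow_mul, ← hj, hw])
  have hle := Nat.le_of_dvd (by lia) hdvd
  lia

lemma exists_sign_pow_orderOf_sq {w : ℂ} (hw : w ≠ 1) (hk : orderOf (w ^ 2) ≠ 0) :
    ∃ s ∈ ({1, -1} : Finset ℤ), w ^ orderOf (w ^ 2) = s ∧
      (s = -1 ∨ Odd (orderOf (w ^ 2)) ∧ orderOf (w ^ 2) ≠ 1) := by
  have hsq : (w ^ orderOf (w ^ 2)) ^ 2 = 1 := by
    rw [← pow_mul, mul_comm, pow_mul, pow_orderOf_eq_one]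
  rcases sq_eq_one_iff.1 hsq with h | h
  · refine ⟨1, by simp, by simpa using h, Or.inr ⟨odd_orderOf_sq hk h, fun hone => hw ?_⟩⟩
    rwa [hone, pow_one] at h
  · exact ⟨-1, by simp, by simpa using h, Or.inl rfl⟩

lemma logWeight_zetaSix_eq_resonanceWeight {w : ℂ} {k m : ℕ} {s : ℤ}
    (hs : s ∈ ({1, -1} : Finset ℤ)) (hw : w ^ k = s) (hkm : k ∣ m) :
    logWeight zetaSix w m = (resonanceWeight k s m : ℝ) := by
  have hpow : w⁻¹ ^ m = (s : ℂ) ^ (m / k) := by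
    rw [inv_pow, ← Nat.mul_div_cancel' hkm, pow_mul, hw, Nat.mul_div_cancel' hkm, ← inv_pow]
    rcases Finset.mem_insert.1 hs with rfl | hs
    · simp
    · rw [Finset.mem_singleton.1 hs]
      norm_num
  rw [logWeight, hpow, zetaSix_pow_add_inv_pow, resonanceWeight]
  push_cast
  ring

lemma eventually_re_mul_logCoeff_le_resonanceBound {τ₀ : ℂ} (hτ₀ : τ₀.re = 0) {s : ℤ}
    (hs : s ∈ ({1, -1} : Finset ℤ))
    (hw : exp (-τ₀) ^ orderOf (exp (-τ₀) ^ 2) = s) {η : ℝ} (hη : 0 < η) (m : ℕ) :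
    ∀ᶠ τ in 𝓝 τ₀, 0 < τ.re → ∀ n, τ.re * (logCoeff zetaSix (exp (-τ)) n m).re ≤
      resonanceBound (orderOf (exp (-τ₀) ^ 2)) s m + η := by
  rcases eq_or_ne m 0 with rfl | hm
  · refine .of_forall fun τ _ n => ?_
    rw [logCoeff_zero_right, zero_re, mul_zero]
    simpa [resonanceBound] using hη.le
  by_cases hkm : orderOf (exp (-τ₀) ^ 2) ∣ m
  · have hpow : exp (-τ₀) ^ (2 * m) = 1 := by rw [pow_mul, orderOf_dvd_iff_pow_eq_one.1 hkm]
    have hres := eventually_re_mul_logCoeff_le_of_pow_eq_one norm_zetaSix hm hτ₀ hpow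
      (logWeight_zetaSix_eq_resonanceWeight hs hw hkm) hη
    filter_upwards [hres] with τ hres hτ n
    refine (hres hτ n).trans_eq ?_
    rw [resonanceBound, if_pos hkm]
    push_cast
    rfl
  · have hpow : exp (-τ₀) ^ (2 * m) ≠ 1 := by rwa [pow_mul, Ne, ← orderOf_dvd_iff_pow_eq_one]
    simpa [resonanceBound, hkm] using eventually_re_mul_logCoeff_le_of_pow_ne_one hτ₀ hpow hη

lemma eventually_re_mul_logCoeff_le_of_lt_orderOf {z τ₀ : ℂ} (hτ₀ : τ₀.re = 0) {m : ℕ}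
    (hm : orderOf (exp (-τ₀) ^ 2) = 0 ∨ m < orderOf (exp (-τ₀) ^ 2)) {η : ℝ} (hη : 0 < η) :
    ∀ᶠ τ in 𝓝 τ₀, 0 < τ.re → ∀ n, τ.re * (logCoeff z (exp (-τ)) n m).re ≤ η := by
  rcases eq_or_ne m 0 with rfl | hm₀
  · refine .of_forall fun τ _ n => ?_
    rw [logCoeff_zero_right, zero_re, mul_zero]
    exact hη.le
  refine eventually_re_mul_logCoeff_le_of_pow_ne_one hτ₀ (fun hpow => ?_) hη
  rw [pow_mul] at hpow
  rcases hm with hm | hm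
  · exact (orderOf_eq_zero_iff'.1 hm) m (Nat.pos_of_ne_zero hm₀) hpow
  · exact pow_ne_one_of_lt_orderOf hm₀ hm hpow

lemma exists_eventually_re_mul_logCoeff_le {τ₀ : ℂ} (hτ₀ : τ₀.re = 0) (hne : exp (-τ₀) ≠ 1) :
    ∃ b : ℕ → ℝ, ∑ m ∈ Finset.range 61, b m ≤ 1 / 10 ∧ ∀ m ∈ Finset.range 61, ∀ᶠ τ in 𝓝 τ₀,
      0 < τ.re → ∀ n, τ.re * (logCoeff zetaSix (exp (-τ)) n m).re ≤ b m + 1 / 30000 := by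
  by_cases hk : orderOf (exp (-τ₀) ^ 2) = 0 ∨ 61 ≤ orderOf (exp (-τ₀) ^ 2)
  · refine ⟨0, by simp, fun m hm => ?_⟩
    have hm' := hk.imp_right (Finset.mem_range.1 hm).trans_le
    simpa using eventually_re_mul_logCoeff_le_of_lt_orderOf hτ₀ hm' (by norm_num)
  · push Not at hk
    obtain ⟨s, hs, hpow, hsign⟩ := exists_sign_pow_orderOf_sq hne hk.1
    refine ⟨fun m => resonanceBound (orderOf (exp (-τ₀) ^ 2)) s m, ?_, fun m _ =>
      eventually_re_mul_logCoeff_le_resonanceBound hτ₀ hs hpow (by norm_num) m⟩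
    have hsum := (Rat.cast_le (K := ℝ)).2 (forall_sum_resonanceBound_le _ hk.2 s hs hsign)
    push_cast at hsum
    exact hsum

lemma eventually_re_mul_sum_logCoeff_le {φ : ℝ} (hφ : φ ∈ Set.Icc (-π) π) :
    ∀ᶠ τ in 𝓝 (0 - φ * I : ℂ), 0 < τ.re → 8000 * τ.re ≤ |τ.im| → ∀ n,
      τ.re * ∑ m ∈ Finset.range 61, (logCoeff zetaSix (exp (-τ)) n m).re ≤ 103 / 1000 := by
  by_cases hone : exp (-(0 - φ * I)) = 1
  · have hφ₀ : φ = 0 := by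
      have hcos : Real.cos φ = 1 := by
        have hre := congrArg re hone
        rwa [zero_sub, neg_neg, exp_ofReal_mul_I_re, one_re] at hre
      refine (Real.cos_eq_one_iff_of_lt_of_lt ?_ ?_).1 hcos <;>
        linarith [hφ.1, hφ.2, Real.pi_pos]
    have hterms := (eventually_all_finset (Finset.range 61)).2 fun m _ =>
      eventually_re_mul_logCoeff_le_of_le_abs_im norm_zetaSix (K := 8000) (by norm_num) m
    rw [hφ₀, ofReal_zero, zero_mul, sub_zero]
    filter_upwards [hterms] with τ hterms hτ hK n
    rw [Finset.mul_sum]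
    refine (Finset.sum_le_sum fun m hm => hterms m hm hτ hK n).trans ?_
    norm_num
  · obtain ⟨b, hb, hterms⟩ := exists_eventually_re_mul_logCoeff_le (by simp) hone
    filter_upwards [(eventually_all_finset _).2 hterms] with τ hterms hτ _ n
    rw [Finset.mul_sum]
    refine (Finset.sum_le_sum fun m hm => hterms m hm hτ n).trans ?_
    rw [Finset.sum_add_distrib, Finset.sum_const, Finset.card_range]
    norm_num at hb ⊢
    linarith

lemma norm_rankTerm_le_of_sum_logCoeff_le {z τ : ℂ} (hz : ‖z‖ = 1) (hτ : 0 < τ.re) {N : ℕ}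
    (hN : N ≠ 0) {B : ℝ} {n : ℕ}
    (hB : τ.re * ∑ m ∈ Finset.range (N + 1), (logCoeff z (exp (-τ)) n m).re ≤ B) :
    ‖rankTerm z (exp (-τ)) n‖ ≤ ‖exp (-τ)‖ ^ n * Real.exp ((B + 3 / (2 * N)) / τ.re) := by
  obtain ⟨E, hE, hterm⟩ :=
    exists_hasSum_logCoeff hz (norm_exp_neg_lt_one hτ) (exp_ne_zero _) n
  have hre : E.re ≤ (B + 3 / (2 * N)) / τ.re :=
    calc E.re ≤ _ := re_le_sum_logCoeff_add hz hτ hE hN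
      _ ≤ B / τ.re + 3 / (2 * τ.re * N) := by
          gcongr
          rwa [le_div_iff₀' hτ]
      _ = (B + 3 / (2 * N)) / τ.re := by field_simp
  rw [hterm, norm_mul, norm_pow, norm_exp E]
  refine mul_le_mul ?_ (Real.exp_le_exp.2 hre) (Real.exp_pos _).le (by positivity)
  exact pow_le_pow_of_le_one (norm_nonneg _) (norm_exp_neg_lt_one hτ).le
    (Nat.le_self_pow two_ne_zero n)

lemma exp_neg_le_one_sub_half {x : ℝ} (hx₀ : 0 ≤ x) (hx₁ : x ≤ 1) : Real.exp (-x) ≤ 1 - x / 2 := by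
  have hmul : Real.exp (-x) * Real.exp x = 1 := by
    rw [← Real.exp_add, neg_add_cancel, Real.exp_zero]
  nlinarith [Real.add_one_le_exp x, Real.exp_pos (-x)]

lemma norm_R2_le_of_sum_logCoeff_le {z τ : ℂ} (hz : ‖z‖ = 1) (hτ : 0 < τ.re) (hτ₁ : τ.re ≤ 1)
    {N : ℕ} (hN : N ≠ 0) {B : ℝ}
    (hB : ∀ n, τ.re * ∑ m ∈ Finset.range (N + 1), (logCoeff z (exp (-τ)) n m).re ≤ B) :
    ‖R2 z (exp (-τ))‖ ≤ 2 / τ.re * Real.exp ((B + 3 / (2 * N)) / τ.re) := by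
  have hgeom := (hasSum_geometric_of_lt_one (norm_nonneg _) (norm_exp_neg_lt_one hτ)).mul_right
    (Real.exp ((B + 3 / (2 * N)) / τ.re))
  refine (tsum_of_norm_bounded hgeom fun n =>
    norm_rankTerm_le_of_sum_logCoeff_le hz hτ hN (hB n)).trans ?_
  gcongr
  rw [norm_exp, neg_re, ← inv_div]
  refine inv_anti₀ (by positivity) ?_
  linarith [exp_neg_le_one_sub_half hτ.le hτ₁]

theorem eventually_norm_R2_zetaSix_le : ∀ᶠ t : ℝ in 𝓝[>] 0, ∀ φ ∈ Set.Icc (-π) π,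
    8000 * t ≤ |φ| → ‖R2 zetaSix (exp (-(t - φ * I)))‖ ≤ 2 / t * Real.exp (13 / 100 / t) := by
  have hlocal : ∀ φ ∈ Set.Icc (-π) π, ∀ᶠ p : ℝ × ℝ in 𝓝 (0, φ), 0 < p.1 → 8000 * p.1 ≤ |p.2| →
      ∀ n, p.1 * ∑ m ∈ Finset.range 61,
        (logCoeff zetaSix (exp (-(p.1 - p.2 * I))) n m).re ≤ 103 / 1000 := by
    intro φ hφ
    have hcont : Continuous fun p : ℝ × ℝ => (p.1 - p.2 * I : ℂ) := by fun_prop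
    have hmap : Tendsto (fun p : ℝ × ℝ => (p.1 - p.2 * I : ℂ)) (𝓝 (0, φ)) (𝓝 (0 - φ * I)) := by
      simpa using hcont.tendsto (0, φ)
    simpa using hmap.eventually (eventually_re_mul_sum_logCoeff_le hφ)
  have hunif := isCompact_Icc.eventually_forall_of_forall_eventually
    (P := fun t φ : ℝ => 0 < t → 8000 * t ≤ |φ| → ∀ n, t * ∑ m ∈ Finset.range 61,
      (logCoeff zetaSix (exp (-(t - φ * I))) n m).re ≤ 103 / 1000) hlocal
  filter_upwards [nhdsWithin_le_nhds hunif, nhdsWithin_le_nhds (eventually_le_nhds zero_lt_one),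
    self_mem_nhdsWithin] with t hunif ht₁ ht φ hφ hK
  have hre : ((t : ℂ) - φ * I).re = t := by simp
  have hbound := norm_R2_le_of_sum_logCoeff_le norm_zetaSix (τ := t - φ * I) (N := 60)
    (B := 103 / 1000) (by rwa [hre]) (by rwa [hre]) (by norm_num)
    (by simpa only [hre] using hunif φ hφ ht hK)
  rw [hre] at hbound
  refine hbound.trans ?_
  have ht₀ : 0 < t := ht
  gcongr
  norm_num

end MinorArcs

section CircleMethod

/-- The point `1 - i x / √L` at which `u + u⁻¹ = 2 - x ^ 2 / (L u)`: the coordinate in which the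
saddle point of `exp (L (u + u⁻¹))` at `u = 1` becomes a Gaussian in `x`. -/
noncomputable def saddleCoord (L x : ℝ) : ℂ := 1 - (x / √L : ℝ) * I

/-- `F τ` divided by the model singularity `τ ^ (-1 / 2) * exp (β / τ)`. -/
noncomputable def singularRatio (F : ℂ → ℂ) (β : ℝ) (τ : ℂ) : ℂ :=
  F τ * τ ^ (1 / 2 : ℂ) * exp (-(β / τ))

/-- The integrand of the major arc in the saddle point coordinate `x`, normalized so that it
converges as `L → ∞`. -/
noncomputable def saddleIntegrand (F : ℂ → ℂ) (β L x : ℝ) : ℂ :=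
  singularRatio F β ((β / L : ℝ) * saddleCoord L x) * (saddleCoord L x ^ (1 / 2 : ℂ))⁻¹ *
    exp (-(x ^ 2 : ℝ) * (saddleCoord L x)⁻¹)

variable {F : ℂ → ℂ} {A : ℂ} {β K L : ℝ}

lemma saddleCoord_re (L x : ℝ) : (saddleCoord L x).re = 1 := by simp [saddleCoord]

lemma saddleCoord_im (L x : ℝ) : (saddleCoord L x).im = -(x / √L) := by
  rw [saddleCoord, sub_im, im_ofReal_mul, one_im, I_im, mul_one, zero_sub]

lemma saddleCoord_mem_slitPlane (L x : ℝ) : saddleCoord L x ∈ slitPlane :=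
  Or.inl (by rw [saddleCoord_re]; exact one_pos)

lemma saddleCoord_ne_zero (L x : ℝ) : saddleCoord L x ≠ 0 :=
  slitPlane_ne_zero (saddleCoord_mem_slitPlane L x)

lemma ofReal_mul_saddleCoord_re (t L x : ℝ) : (t * saddleCoord L x).re = t := by
  rw [re_ofReal_mul, saddleCoord_re, mul_one]

lemma abs_saddleCoord_im_le (hL : 0 < L) {x : ℝ} (hx : |x| ≤ K * √L) :
    |(saddleCoord L x).im| ≤ K := by
  have hL' := Real.sqrt_pos.2 hL
  rwa [saddleCoord_im, abs_neg, abs_div, abs_of_pos hL', div_le_iff₀ hL']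

lemma saddleCoord_mem_cone (hL : 0 < L) {x : ℝ} (hx : |x| ≤ K * √L) : saddleCoord L x ∈ cone K := by
  refine ⟨by rw [saddleCoord_re]; exact zero_le_one, ?_⟩
  rw [saddleCoord_re, mul_one]
  exact abs_saddleCoord_im_le hL hx

lemma norm_saddleCoord_le (hL : 0 < L) {x : ℝ} (hx : |x| ≤ K * √L) :
    ‖saddleCoord L x‖ ≤ 1 + K := by
  refine (norm_le_abs_re_add_abs_im _).trans ?_
  rw [saddleCoord_re, abs_one]
  exact add_le_add_right (abs_saddleCoord_im_le hL hx) 1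

lemma norm_saddleCoord_cpow_half_inv_le (L x : ℝ) : ‖(saddleCoord L x ^ (1 / 2 : ℂ))⁻¹‖ ≤ 1 := by
  have hle : 1 ≤ ‖saddleCoord L x‖ := by
    simpa only [saddleCoord_re] using re_le_norm (saddleCoord L x)
  rw [norm_inv, show (1 / 2 : ℂ) = (1 / 2 : ℝ) by push_cast; rfl, norm_cpow_real]
  exact inv_le_one_of_one_le₀ (Real.one_le_rpow hle (by norm_num))

lemma le_saddleCoord_inv_re (hL : 0 < L) {x : ℝ} (hx : |x| ≤ K * √L) :
    1 / (1 + K ^ 2) ≤ ((saddleCoord L x)⁻¹).re := by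
  have him := sq_le_sq' (neg_le_of_abs_le (abs_saddleCoord_im_le hL hx))
    (le_of_abs_le (abs_saddleCoord_im_le hL hx))
  rw [inv_re, normSq_apply, saddleCoord_re, one_mul, ← sq]
  gcongr

lemma tendsto_saddleCoord (x : ℝ) : Tendsto (saddleCoord · x) atTop (𝓝 1) := by
  have hdiv : Tendsto (fun L : ℝ => x / √L) atTop (𝓝 0) :=
    Real.tendsto_sqrt_atTop.const_div_atTop x
  have hmul := ((continuous_ofReal.tendsto 0).comp hdiv).mul_const I
  simpa [saddleCoord] using hmul.const_sub 1

lemma eventually_abs_le_mul_sqrt (hK : 0 < K) (x : ℝ) : ∀ᶠ L in atTop, |x| ≤ K * √L :=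
  (Real.tendsto_sqrt_atTop.const_mul_atTop hK).eventually_ge_atTop |x|

lemma eventually_forall_saddleCoord (hβ : 0 < β) {P : ℂ → Prop}
    (hP : ∀ᶠ τ in 𝓝[cone K ∩ {τ | 0 < τ.re}] 0, P τ) :
    ∀ᶠ L : ℝ in atTop, ∀ x, |x| ≤ K * √L → P ((β / L : ℝ) * saddleCoord L x) := by
  obtain ⟨δ, hδ, hball⟩ := Metric.mem_nhdsWithin_iff.1 hP
  have hsmall : Tendsto (fun L : ℝ => β / L * (1 + K)) atTop (𝓝 0) := by
    simpa using (tendsto_id.const_div_atTop β).mul_const (1 + K)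
  filter_upwards [hsmall.eventually (gt_mem_nhds hδ), eventually_gt_atTop 0] with L hlt hL x hx
  have ht : 0 < β / L := by positivity
  refine hball ⟨?_, ofReal_mul_mem_cone ht.le (saddleCoord_mem_cone hL hx), ?_⟩
  · rw [mem_ball_zero_iff, norm_mul, Complex.norm_of_nonneg ht.le]
    exact (mul_le_mul_of_nonneg_left (norm_saddleCoord_le hL hx) ht.le).trans_lt hlt
  · rwa [Set.mem_ofPred_eq, ofReal_mul_saddleCoord_re]

lemma tendsto_saddleIntegrand (hβ : 0 < β) (hK : 0 < K)
    (hA : Tendsto (singularRatio F β) (𝓝[cone K ∩ {τ | 0 < τ.re}] 0) (𝓝 A)) (x : ℝ) :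
    Tendsto (saddleIntegrand F β · x) atTop (𝓝 (A * Real.exp (-x ^ 2))) := by
  have hratio : Tendsto (fun L : ℝ => singularRatio F β ((β / L : ℝ) * saddleCoord L x)) atTop
      (𝓝 A) := by
    refine tendsto_def.2 fun s hs => ?_
    filter_upwards [eventually_forall_saddleCoord hβ (hA hs), eventually_abs_le_mul_sqrt hK x]
      with L hmem hx using hmem x hx
  have hcoord := tendsto_saddleCoord x
  have hpow := (hcoord.cpow (tendsto_const_nhds (x := (1 / 2 : ℂ))) one_mem_slitPlane).inv₀
    (by simp)
  have hexp := ((hcoord.inv₀ one_ne_zero).const_mul (-(x ^ 2 : ℝ) : ℂ)).cexp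
  simpa [saddleIntegrand] using (hratio.mul hpow).mul hexp

lemma eventually_norm_saddleIntegrand_le (hβ : 0 < β)
    (hA : Tendsto (singularRatio F β) (𝓝[cone K ∩ {τ | 0 < τ.re}] 0) (𝓝 A)) :
    ∀ᶠ L : ℝ in atTop, ∀ x, |x| ≤ K * √L →
      ‖saddleIntegrand F β L x‖ ≤ (‖A‖ + 1) * Real.exp (-(1 / (1 + K ^ 2)) * x ^ 2) := by
  have hbound := hA.norm.eventually (ge_mem_nhds (lt_add_one ‖A‖))
  filter_upwards [eventually_forall_saddleCoord hβ hbound, eventually_gt_atTop 0] with L hle hL x hx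
  have hexp : ‖exp (-(x ^ 2 : ℝ) * (saddleCoord L x)⁻¹)‖ ≤
      Real.exp (-(1 / (1 + K ^ 2)) * x ^ 2) := by
    rw [norm_exp, ← ofReal_neg, re_ofReal_mul, Real.exp_le_exp]
    nlinarith [le_saddleCoord_inv_re hL hx, sq_nonneg x]
  rw [saddleIntegrand, norm_mul, norm_mul]
  refine mul_le_mul ?_ hexp (norm_nonneg _) (by positivity)
  exact (mul_le_of_le_one_right (norm_nonneg _) (norm_saddleCoord_cpow_half_inv_le L x)).trans
    (hle x hx)

lemma mul_saddleCoord_eq (hL : 0 < L) (x : ℝ) :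
    L * saddleCoord L x =
      2 * L + -(L * (saddleCoord L x)⁻¹) + -(x ^ 2 : ℝ) * (saddleCoord L x)⁻¹ := by
  have hsq : (((x / √L) ^ 2 * L : ℝ) : ℂ) = (x ^ 2 : ℝ) := by
    rw [div_pow, Real.sq_sqrt hL.le, div_mul_cancel₀ _ hL.ne']
  have hcoord : L * (saddleCoord L x - 1) ^ 2 = -(x ^ 2 : ℝ) := by
    rw [← hsq, saddleCoord]
    push_cast
    linear_combination (x / √L : ℂ) ^ 2 * L * I_sq
  have hne := saddleCoord_ne_zero L x
  field_simp
  linear_combination hcoord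

lemma ofReal_mul_cpow_half {r : ℝ} (hr : 0 < r) {w : ℂ} (hw : w ≠ 0) :
    (r * w) ^ (1 / 2 : ℂ) = √r * w ^ (1 / 2 : ℂ) := by
  have hr' : (r : ℂ) ≠ 0 := ofReal_ne_zero.2 hr.ne'
  have hsqrt : (√r : ℂ) = exp (Real.log r * (1 / 2)) := by
    rw [Real.sqrt_eq_rpow, ofReal_cpow hr.le, cpow_def_of_ne_zero hr', ofReal_log hr.le]
    push_cast
    rfl
  rw [cpow_def_of_ne_zero (mul_ne_zero hr' hw), cpow_def_of_ne_zero hw, log_ofReal_mul hr hw,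
    add_mul, exp_add, hsqrt]

lemma mul_exp_eq_saddleIntegrand (hβ : 0 < β) (hL : 0 < L) (x : ℝ) :
    F ((β / L : ℝ) * saddleCoord L x) * exp (L * saddleCoord L x) =
      (√(β / L) : ℂ)⁻¹ * Real.exp (2 * L) * saddleIntegrand F β L x := by
  have ht : 0 < β / L := div_pos hβ hL
  have hne := saddleCoord_ne_zero L x
  have hpow : saddleCoord L x ^ (1 / 2 : ℂ) ≠ 0 := by simp [cpow_eq_zero_iff, hne]
  have hsqrt : (√(β / L) : ℂ) ≠ 0 := ofReal_ne_zero.2 (Real.sqrt_pos.2 ht).ne'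
  have hinv : (β / ((β / L : ℝ) * saddleCoord L x) : ℂ) = L * (saddleCoord L x)⁻¹ := by
    have hβ' : (β : ℂ) ≠ 0 := ofReal_ne_zero.2 hβ.ne'
    push_cast
    field_simp
  rw [saddleIntegrand, singularRatio, hinv, ofReal_mul_cpow_half ht hne, mul_saddleCoord_eq hL,
    exp_add, exp_add]
  push_cast
  field_simp

lemma continuous_saddleIntegrand (hF : ContinuousOn F {τ | 0 < τ.re}) (hβ : 0 < β) (hL : 0 < L) :
    Continuous (saddleIntegrand F β L) := by
  have ht : 0 < β / L := div_pos hβ hL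
  have hcoord : Continuous (saddleCoord L) := by unfold saddleCoord; fun_prop
  have hτ : Continuous fun x => F ((β / L : ℝ) * saddleCoord L x) :=
    hF.comp_continuous (by fun_prop) fun x => by rwa [Set.mem_ofPred_eq, ofReal_mul_saddleCoord_re]
  have hsqrt : (√(β / L) : ℂ) ≠ 0 := ofReal_ne_zero.2 (Real.sqrt_pos.2 ht).ne'
  have heq : saddleIntegrand F β L = fun x => √(β / L) * exp (-(2 * L)) *
      (F ((β / L : ℝ) * saddleCoord L x) * exp (L * saddleCoord L x)) := by
    funext x
    rw [mul_exp_eq_saddleIntegrand hβ hL, exp_neg]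
    push_cast
    field_simp
  rw [heq]
  exact continuous_const.mul (hτ.mul (continuous_const.mul hcoord).cexp)

theorem tendsto_integral_saddleIntegrand (hF : ContinuousOn F {τ | 0 < τ.re}) (hβ : 0 < β)
    (hK : 0 < K) (hA : Tendsto (singularRatio F β) (𝓝[cone K ∩ {τ | 0 < τ.re}] 0) (𝓝 A)) :
    Tendsto (fun L => ∫ x in -(K * √L)..K * √L, saddleIntegrand F β L x) atTop (𝓝 (A * √π)) := by
  have hset : ∀ L, ∫ x in -(K * √L)..K * √L, saddleIntegrand F β L x =
      ∫ x, (Set.Icc (-(K * √L)) (K * √L)).indicator (saddleIntegrand F β L) x := fun L => by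
    rw [MeasureTheory.integral_indicator measurableSet_Icc,
      MeasureTheory.integral_Icc_eq_integral_Ioc, intervalIntegral.integral_of_le]
    linarith [mul_nonneg hK.le (Real.sqrt_nonneg L)]
  have hgauss : ∫ x : ℝ, A * Real.exp (-x ^ 2) = A * √π := by
    rw [MeasureTheory.integral_const_mul, integral_complex_ofReal]
    simpa using congrArg (fun y : ℝ => A * y) (integral_gaussian 1)
  simp_rw [hset, ← hgauss]
  refine MeasureTheory.tendsto_integral_filter_of_dominated_convergence
    (fun x => (‖A‖ + 1) * Real.exp (-(1 / (1 + K ^ 2)) * x ^ 2)) ?_ ?_ ?_ ?_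
  · filter_upwards [eventually_gt_atTop 0] with L hL
    exact (continuous_saddleIntegrand hF hβ hL).aestronglyMeasurable.indicator measurableSet_Icc
  · filter_upwards [eventually_norm_saddleIntegrand_le hβ hA] with L hle
    refine .of_forall fun x => ?_
    by_cases hx : x ∈ Set.Icc (-(K * √L)) (K * √L)
    · rw [Set.indicator_of_mem hx]
      exact hle x (abs_le.2 hx)
    · rw [Set.indicator_of_notMem hx, norm_zero]
      positivity
  · exact (integrable_exp_neg_mul_sq (by positivity)).const_mul _
  · refine .of_forall fun x => (tendsto_saddleIntegrand hβ hK hA x).congr' ?_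
    filter_upwards [eventually_abs_le_mul_sqrt hK x] with L hx
    rw [Set.indicator_of_mem (Set.mem_Icc.2 (abs_le.1 hx))]

lemma integral_majorArc (hβ : 0 < β) (hL : 0 < L) {ν : ℝ} (hν : ν * (β / L) = L) :
    ∫ φ in -(K * (β / L))..K * (β / L), F ((β / L : ℝ) - φ * I) * exp (ν * ((β / L : ℝ) - φ * I)) =
      (√ν : ℂ)⁻¹ * Real.exp (2 * L) * ∫ x in -(K * √L)..K * √L, saddleIntegrand F β L x := by
  have := Real.sqrt_pos.2 hL
  have ht : 0 < β / L := div_pos hβ hL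
  have hν₀ : 0 < ν := pos_of_mul_pos_left (hL.trans_eq hν.symm) ht.le
  have hscale : K * (β / L) = β / L / √L * (K * √L) := by field_simp
  rw [hscale, ← mul_neg, ← intervalIntegral.smul_integral_comp_mul_left,
    ← intervalIntegral.integral_const_mul, ← intervalIntegral.integral_smul]
  refine intervalIntegral.integral_congr fun x _ => ?_
  have hτ : ((β / L : ℝ) - (β / L / √L * x : ℝ) * I : ℂ) = (β / L : ℝ) * saddleCoord L x := by
    rw [saddleCoord]
    push_cast
    ring
  have hconst : β / L / √L * (√(β / L))⁻¹ = (√ν)⁻¹ := by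
    have hsν : √(β / L) = √L / √ν := by
      rw [← Real.sqrt_div hL.le, ← hν, mul_div_cancel_left₀ _ hν₀.ne', hν]
    have hsq := Real.mul_self_sqrt ht.le
    rw [hsν] at hsq ⊢
    rw [← hsq]
    field_simp
  rw [hτ, ← mul_assoc, ← ofReal_mul, hν, mul_exp_eq_saddleIntegrand hβ hL, real_smul, ← ofReal_inv,
    ← ofReal_inv, ← hconst]
  push_cast
  ring

lemma norm_integral_sub_integral_le {f : ℝ → ℂ} (hf : Continuous f) {T a M : ℝ} (hT : 0 ≤ T)
    (hTa : T ≤ a) (hM : ∀ φ ∈ Set.Icc (-a) a, T ≤ |φ| → ‖f φ‖ ≤ M) :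
    ‖(∫ φ in -a..a, f φ) - ∫ φ in -T..T, f φ‖ ≤ 2 * a * M := by
  have hM₀ : 0 ≤ M := (norm_nonneg _).trans (hM a ⟨by linarith, le_rfl⟩ (hTa.trans (le_abs_self a)))
  have hint : ∀ b c, IntervalIntegrable f MeasureTheory.volume b c := hf.intervalIntegrable
  have hleft : ‖∫ φ in -a..-T, f φ‖ ≤ M * (a - T) := by
    refine (intervalIntegral.norm_integral_le_of_norm_le_const (C := M) fun φ hφ => ?_).trans_eq
      (by rw [abs_of_nonneg (by linarith)]; ring)
    rw [Set.uIoc_of_le (by linarith)] at hφ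
    exact hM φ ⟨hφ.1.le, by linarith [hφ.2]⟩ (le_abs.2 (Or.inr (by linarith [hφ.2])))
  have hright : ‖∫ φ in T..a, f φ‖ ≤ M * (a - T) := by
    refine (intervalIntegral.norm_integral_le_of_norm_le_const (C := M) fun φ hφ => ?_).trans_eq
      (by rw [abs_of_nonneg (by linarith)])
    rw [Set.uIoc_of_le hTa] at hφ
    exact hM φ ⟨by linarith [hφ.1], hφ.2⟩ (le_abs.2 (Or.inl hφ.1.le))
  rw [← intervalIntegral.integral_add_adjacent_intervals (hint (-a) (-T)) (hint (-T) a),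
    ← intervalIntegral.integral_add_adjacent_intervals (hint (-T) T) (hint T a),
    add_sub_assoc, add_sub_cancel_left]
  refine (norm_add_le _ _).trans ((add_le_add hleft hright).trans ?_)
  nlinarith

lemma norm_sub_majorArc_le (hF : ContinuousOn F {τ | 0 < τ.re}) {t : ℝ} (ht : 0 < t)
    (hKt₀ : 0 ≤ K * t) (hKt : K * t ≤ π) {B : ℝ}
    (hB : ∀ φ ∈ Set.Icc (-π) π, K * t ≤ |φ| → ‖F (t - φ * I)‖ ≤ B) (ν : ℝ) :
    ‖(∫ φ in -π..π, F (t - φ * I) * exp (ν * (t - φ * I))) -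
      ∫ φ in -(K * t)..K * t, F (t - φ * I) * exp (ν * (t - φ * I))‖ ≤
        2 * π * (B * Real.exp (ν * t)) := by
  have hcont : Continuous fun φ : ℝ => F (t - φ * I) :=
    hF.comp_continuous (by fun_prop) fun φ => by simpa using ht
  have hprod : Continuous fun φ : ℝ => F (t - φ * I) * exp (ν * (t - φ * I)) :=
    hcont.mul (by fun_prop)
  refine norm_integral_sub_integral_le hprod hKt₀ hKt fun φ hφ hle => ?_
  have hre : (ν * (t - φ * I) : ℂ).re = ν * t := by simp
  rw [norm_mul, norm_exp, hre]
  gcongr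
  exact hB φ hφ hle

lemma tendsto_sqrt_mul_natCast (hβ : 0 < β) : Tendsto (fun n : ℕ => √(β * n)) atTop atTop :=
  Real.tendsto_sqrt_atTop.comp (tendsto_natCast_atTop_atTop.const_mul_atTop hβ)

lemma mul_div_sqrt_mul (β ν : ℝ) : ν * (β / √(β * ν)) = √(β * ν) := by
  rw [← mul_div_assoc, mul_comm ν, Real.div_sqrt]

lemma eventually_norm_minorArc_le (hF : ContinuousOn F {τ | 0 < τ.re}) (hβ : 0 < β) (hK : 0 < K)
    {c M : ℝ} (hminor : ∀ᶠ t : ℝ in 𝓝[>] 0, ∀ φ ∈ Set.Icc (-π) π, K * t ≤ |φ| →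
      ‖F (t - φ * I)‖ ≤ M / t * Real.exp (c / t)) :
    ∀ᶠ L : ℝ in atTop, ∀ ν : ℝ, ν * (β / L) = L →
      ‖(∫ φ in -π..π, F ((β / L : ℝ) - φ * I) * exp (ν * ((β / L : ℝ) - φ * I))) -
        ∫ φ in -(K * (β / L))..K * (β / L),
          F ((β / L : ℝ) - φ * I) * exp (ν * ((β / L : ℝ) - φ * I))‖ ≤
        2 * π * (M / (β / L) * Real.exp (c / (β / L)) * Real.exp L) := by
  have hradius : Tendsto (fun L : ℝ => β / L) atTop (𝓝[>] 0) := tendsto_nhdsWithin_iff.2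
    ⟨tendsto_id.const_div_atTop β, (eventually_gt_atTop 0).mono fun L hL => div_pos hβ hL⟩
  have hsmall : ∀ᶠ t : ℝ in 𝓝[>] 0, K * t ≤ π :=
    (eventually_le_nhds (by positivity : (0 : ℝ) < π / K)).filter_mono nhdsWithin_le_nhds |>.mono
      fun t ht => by rwa [le_div_iff₀' hK] at ht
  filter_upwards [hradius.eventually (hminor.and hsmall), eventually_gt_atTop 0]
    with L ⟨hle, hKt⟩ hL ν hν
  have ht : 0 < β / L := div_pos hβ hL
  exact (norm_sub_majorArc_le hF ht (mul_pos hK ht).le hKt hle ν).trans_eq (by rw [hν])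

lemma tendsto_minorArc (hF : ContinuousOn F {τ | 0 < τ.re}) (hβ : 0 < β) (hK : 0 < K)
    {c M : ℝ} (hc : c < β) (hminor : ∀ᶠ t : ℝ in 𝓝[>] 0, ∀ φ ∈ Set.Icc (-π) π, K * t ≤ |φ| →
      ‖F (t - φ * I)‖ ≤ M / t * Real.exp (c / t)) :
    Tendsto (fun n : ℕ => (√n * Real.exp (-2 * √(β * n)) : ℝ) *
      ((∫ φ in -π..π, F ((β / √(β * n) : ℝ) - φ * I) * exp (n * ((β / √(β * n) : ℝ) - φ * I))) -
        ∫ φ in -(K * (β / √(β * n)))..K * (β / √(β * n)),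
          F ((β / √(β * n) : ℝ) - φ * I) * exp (n * ((β / √(β * n) : ℝ) - φ * I))))
      atTop (𝓝 0) := by
  have hL := tendsto_sqrt_mul_natCast hβ
  have hdecay : Tendsto (fun L : ℝ => 2 * π * M / (β * √β) *
      (L ^ (2 : ℝ) * Real.exp (-(1 - c / β) * L))) atTop (𝓝 0) := by
    simpa using (tendsto_rpow_mul_exp_neg_mul_atTop_nhds_zero 2 (1 - c / β)
      (by rwa [sub_pos, div_lt_one hβ])).const_mul (2 * π * M / (β * √β))
  refine squeeze_zero_norm' ?_ (hdecay.comp hL)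
  filter_upwards [hL.eventually (eventually_norm_minorArc_le hF hβ hK hminor),
    eventually_gt_atTop 0] with n hle hn
  have : (0 : ℝ) < n := Nat.cast_pos.2 hn
  have hle' := hle n (mul_div_sqrt_mul β n)
  rw [ofReal_natCast] at hle'
  rw [norm_mul, Complex.norm_of_nonneg (by positivity)]
  refine (mul_le_mul_of_nonneg_left hle' (by positivity)).trans_eq ?_
  have hsqrt : √(n : ℝ) = √(β * n) / √β := by
    rw [Real.sqrt_mul hβ.le, mul_div_cancel_left₀ _ (Real.sqrt_pos.2 hβ).ne']
  have hpos : 0 < √(β * n) := by positivity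
  rw [Function.comp_apply, hsqrt]
  generalize √(β * n) = L at hpos ⊢
  have hexp : Real.exp (-(1 - c / β) * L) =
      Real.exp (-2 * L) * Real.exp (c / (β / L)) * Real.exp L := by
    rw [← Real.exp_add, ← Real.exp_add]
    congr 1
    field_simp
    ring
  have := Real.sqrt_pos.2 hβ
  rw [hexp, Real.rpow_two]
  field_simp

/-- Wright's circle method for a function with the model singularity `A τ ^ (-1 / 2) exp (β / τ)`
at `τ = 0`, where `q = exp (-τ)`. -/
theorem tendsto_coeff_mul_exp (hF : ContinuousOn F {τ | 0 < τ.re}) (hβ : 0 < β) (hK : 0 < K)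
    (hA : Tendsto (singularRatio F β) (𝓝[cone K ∩ {τ | 0 < τ.re}] 0) (𝓝 A)) {c M : ℝ} (hc : c < β)
    (hminor : ∀ᶠ t : ℝ in 𝓝[>] 0, ∀ φ ∈ Set.Icc (-π) π, K * t ≤ |φ| →
      ‖F (t - φ * I)‖ ≤ M / t * Real.exp (c / t)) {a : ℕ → ℂ}
    (ha : ∀ n, ∀ t : ℝ, 0 < t →
      a n = (1 / (2 * π) : ℂ) * ∫ φ in -π..π, F (t - φ * I) * exp (n * (t - φ * I))) :
    Tendsto (fun n => a n * (√n * Real.exp (-2 * √(β * n)) : ℝ)) atTop (𝓝 (A / (2 * √π))) := by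
  have hmajor := (tendsto_integral_saddleIntegrand hF hβ hK hA).comp (tendsto_sqrt_mul_natCast hβ)
  have hsum := (hmajor.add (tendsto_minorArc hF hβ hK hc hminor)).const_mul (1 / (2 * π) : ℂ)
  have hlimit : (1 / (2 * π) : ℂ) * (A * √π + 0) = A / (2 * √π) := by
    have hπ : (π : ℂ) = √π * √π := by rw [← ofReal_mul, Real.mul_self_sqrt Real.pi_pos.le]
    have : (√π : ℂ) ≠ 0 := ofReal_ne_zero.2 (Real.sqrt_pos.2 Real.pi_pos).ne'
    rw [hπ, add_zero]
    field_simp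
  rw [hlimit] at hsum
  refine hsum.congr' ?_
  filter_upwards [eventually_gt_atTop 0] with n hn
  have hn' : (0 : ℝ) < n := Nat.cast_pos.2 hn
  have hL : 0 < √(β * n) := by positivity
  have harc := integral_majorArc (F := F) (K := K) hβ hL (mul_div_sqrt_mul β n)
  rw [ofReal_natCast] at harc
  have hsn : (√(n : ℝ) : ℂ) ≠ 0 := ofReal_ne_zero.2 (Real.sqrt_pos.2 hn').ne'
  have hunit : (Real.exp (-2 * √(β * n)) * Real.exp (2 * √(β * n)) : ℂ) = 1 := by
    rw [← ofReal_mul, ← Real.exp_add]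
    simp
  rw [ha n _ (div_pos hβ hL), harc, Function.comp_apply, ofReal_mul]
  generalize (∫ x in -(K * √√(β * n))..K * √√(β * n), saddleIntegrand F β √(β * n) x) = J
  generalize (∫ φ in -π..π, _ : ℂ) = J'
  rw [mul_sub, mul_assoc _ _ J, mul_mul_mul_comm, mul_inv_cancel₀ hsn, one_mul, ← mul_assoc, hunit]
  ring

end CircleMethod

section MainTheorem

variable {K : ℝ}

lemma norm_le_of_mem_cone {s : ℂ} (hs : s ∈ cone K) : ‖s‖ ≤ (1 + K) * s.re := by
  refine (norm_le_abs_re_add_abs_im s).trans ?_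
  rw [abs_of_nonneg hs.1, add_mul, one_mul]
  exact add_le_add_right hs.2 s.re

lemma tendsto_inv_re_cone (hK : 0 < K) :
    Tendsto (fun τ : ℂ => (τ⁻¹).re) (𝓝[cone K ∩ {τ | 0 < τ.re}] 0) atTop := by
  have hne : 𝓝[cone K ∩ {τ | 0 < τ.re}] (0 : ℂ) ≤ 𝓝[≠] 0 :=
    nhdsWithin_mono 0 fun τ hτ => ne_zero_of_re_pos hτ.2
  rw [← tendsto_const_mul_atTop_of_pos (by positivity : 0 < 1 + K)]
  refine tendsto_atTop_mono' _ ?_ (tendsto_norm_inv_nhdsNE_zero_atTop.mono_left hne)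
  filter_upwards [self_mem_nhdsWithin] with τ hτ
  exact norm_le_of_mem_cone (inv_mem_cone hτ.1)

lemma tendsto_thetaCofactor (hK : 0 < K) :
    Tendsto thetaCofactor (𝓝[cone K ∩ {τ | 0 < τ.re}] 0) (𝓝 (√2 : ℝ)) := by
  have hρ := tendsto_inv_re_cone hK
  have hmain : Tendsto (fun τ : ℂ => (√2 : ℝ) * exp (τ / 8)) (𝓝[cone K ∩ {τ | 0 < τ.re}] 0)
      (𝓝 (√2 : ℝ)) := by
    have hcont : Continuous fun τ : ℂ => ((√2 : ℝ) : ℂ) * exp (τ / 8) := by fun_prop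
    simpa using (hcont.tendsto 0).mono_left nhdsWithin_le_nhds
  have hbound : Tendsto (fun τ : ℂ => 4 * (Real.exp (τ.re / 8) * Real.exp (-(π ^ 2 * (τ⁻¹).re))))
      (𝓝[cone K ∩ {τ | 0 < τ.re}] 0) (𝓝 0) := by
    have hcont : Continuous fun τ : ℂ => Real.exp (τ.re / 8) := by fun_prop
    have hre := (hcont.tendsto 0).mono_left (nhdsWithin_le_nhds (s := cone K ∩ {τ | 0 < τ.re}))
    have hdecay := Real.tendsto_exp_neg_atTop_nhds_zero.comp
      (hρ.const_mul_atTop (by positivity : 0 < π ^ 2))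
    simpa using (hre.mul hdecay).const_mul 4
  have herror : Tendsto (fun τ : ℂ => thetaCofactor τ - (√2 : ℝ) * exp (τ / 8))
      (𝓝[cone K ∩ {τ | 0 < τ.re}] 0) (𝓝 0) := by
    refine squeeze_zero_norm' ?_ hbound
    filter_upwards [self_mem_nhdsWithin, hρ.eventually_ge_atTop 1] with τ hτ hτρ
    exact norm_thetaCofactor_sub_le hτ.2 hτρ
  simpa using herror.add hmain

lemma norm_cpow_half_div_mul_exp_le {β : ℝ} {τ : ℂ} (hτK : τ ∈ cone K) (hρ : 1 ≤ (τ⁻¹).re) :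
    ‖τ ^ (1 / 2 : ℂ) / (2 * τ) * exp (-(β / τ))‖ ≤
      (1 + K) / 2 * ((τ⁻¹).re * Real.exp (-(β * (τ⁻¹).re))) := by
  have hinv : 1 ≤ ‖τ⁻¹‖ := hρ.trans (re_le_norm _)
  have hle : ‖τ‖ ≤ 1 := by simpa using inv_le_one_of_one_le₀ hinv
  have hpow : ‖τ ^ (1 / 2 : ℂ)‖ ≤ 1 := by
    rw [show (1 / 2 : ℂ) = (1 / 2 : ℝ) by push_cast; rfl, norm_cpow_real]
    exact Real.rpow_le_one (norm_nonneg τ) hle (by norm_num)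
  have hexp : ‖exp (-(β / τ))‖ = Real.exp (-(β * (τ⁻¹).re)) := by
    rw [norm_exp, neg_re, ofReal_div_re]
  have hquot : ‖τ ^ (1 / 2 : ℂ) / (2 * τ)‖ ≤ (1 + K) / 2 * (τ⁻¹).re := by
    have hcone := norm_le_of_mem_cone (inv_mem_cone hτK)
    rw [norm_inv] at hcone
    rw [norm_div, norm_mul, norm_ofNat, div_eq_mul_inv, mul_inv]
    have := mul_le_mul_of_nonneg_right hpow (inv_nonneg.2 (norm_nonneg τ))
    linarith
  rw [norm_mul, hexp, ← mul_assoc]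
  exact mul_le_mul_of_nonneg_right hquot (Real.exp_pos _).le

lemma tendsto_singularRatio_mul_thetaCofactor (hK : 0 < K) :
    Tendsto (fun τ => singularRatio (fun τ => R2 zetaSix (exp (-τ))) (π ^ 2 / 72) τ *
      thetaCofactor τ) (𝓝[cone K ∩ {τ | 0 < τ.re}] 0) (𝓝 (√(8 * π) / 2 : ℝ)) := by
  obtain ⟨C, hC, hle⟩ := exists_norm_R2_zetaSix_sub_le hK
  have hρ := tendsto_inv_re_cone hK
  have hdecay : Tendsto (fun τ : ℂ => C * ((1 + K) / 2 *
      ((τ⁻¹).re * Real.exp (-(π ^ 2 / 72 * (τ⁻¹).re))))) (𝓝[cone K ∩ {τ | 0 < τ.re}] 0) (𝓝 0) := by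
    have hexp := tendsto_rpow_mul_exp_neg_mul_atTop_nhds_zero 1 (π ^ 2 / 72) (by positivity)
    simpa [Function.comp_def] using ((hexp.comp hρ).const_mul ((1 + K) / 2)).const_mul C
  refine tendsto_iff_norm_sub_tendsto_zero.2 (squeeze_zero' (.of_forall fun _ => norm_nonneg _)
    ?_ hdecay)
  filter_upwards [self_mem_nhdsWithin, hρ.eventually_ge_atTop 1] with τ ⟨hτK, hτ⟩ hτρ
  have hτ₀ : τ ≠ 0 := ne_zero_of_re_pos hτ
  have hsq : τ ^ (1 / 2 : ℂ) * τ ^ (1 / 2 : ℂ) = τ := by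
    rw [← cpow_add _ _ hτ₀]
    norm_num
  have hunit : exp ((π ^ 2 / 72 : ℝ) / τ) * exp (-((π ^ 2 / 72 : ℝ) / τ)) = 1 := by
    rw [← exp_add, add_neg_cancel, exp_zero]
  have hroot : (8 * π * τ) ^ (1 / 2 : ℂ) = √(8 * π) * τ ^ (1 / 2 : ℂ) := by
    rw [← ofReal_mul_cpow_half (by positivity) hτ₀]
    push_cast
    rfl
  have heq : singularRatio (fun τ => R2 zetaSix (exp (-τ))) (π ^ 2 / 72) τ * thetaCofactor τ -
      (√(8 * π) / 2 : ℝ) = (R2 zetaSix (exp (-τ)) * (2 * τ) * thetaCofactor τ -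
        (8 * π * τ) ^ (1 / 2 : ℂ) * exp ((π ^ 2 / 72 : ℝ) / τ)) *
      (τ ^ (1 / 2 : ℂ) / (2 * τ) * exp (-((π ^ 2 / 72 : ℝ) / τ))) := by
    rw [singularRatio, hroot]
    generalize exp (-((π ^ 2 / 72 : ℝ) / τ)) = e at hunit ⊢
    generalize exp ((π ^ 2 / 72 : ℝ) / τ) = e' at hunit ⊢
    generalize τ ^ (1 / 2 : ℂ) = s at hsq ⊢
    push_cast
    field_simp
    linear_combination √(8 * π) * s ^ 2 * hunit + √(8 * π) * hsq
  rw [heq, norm_mul]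
  exact mul_le_mul (hle τ hτK hτ hτρ) (norm_cpow_half_div_mul_exp_le hτK hτρ) (norm_nonneg _) hC.le

theorem tendsto_singularRatio_R2_zetaSix (hK : 0 < K) :
    Tendsto (singularRatio (fun τ => R2 zetaSix (exp (-τ))) (π ^ 2 / 72))
      (𝓝[cone K ∩ {τ | 0 < τ.re}] 0) (𝓝 (√π : ℝ)) := by
  have hsqrt : (√2 : ℝ) ≠ 0 := by positivity
  have hlimit : √(8 * π) / 2 / √2 = √π := by
    rw [show 8 * π = 2 ^ 2 * (2 * π) by ring, Real.sqrt_mul (by norm_num), Real.sqrt_mul two_pos.le,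
      Real.sqrt_sq two_pos.le]
    field_simp
  have hcofactor := tendsto_thetaCofactor hK
  have hquot := (tendsto_singularRatio_mul_thetaCofactor hK).div hcofactor
    (ofReal_ne_zero.2 hsqrt)
  rw [← ofReal_div, hlimit] at hquot
  refine hquot.congr' ?_
  filter_upwards [hcofactor.eventually_ne (ofReal_ne_zero.2 hsqrt)] with τ hne
  exact mul_div_cancel_right₀ _ hne

theorem tendsto_Acoef_one_six_mul_exp :
    Tendsto (fun n : ℕ => Acoef 1 6 n * (√n * Real.exp (-2 * √(π ^ 2 / 72 * n)) : ℝ)) atTop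
      (𝓝 (1 / 2)) := by
  have hcont : ContinuousOn (fun τ => R2 zetaSix (exp (-τ))) {τ | 0 < τ.re} :=
    (differentiableOn_R2 norm_zetaSix).continuousOn.comp (by fun_prop)
      fun τ hτ => mem_ball_zero_iff.2 (norm_exp_neg_lt_one hτ)
  have hβ : 13 / 100 < π ^ 2 / 72 := by nlinarith [Real.pi_gt_d2]
  have hA : ∀ n, Acoef 1 6 n = rankCoeff zetaSix n := fun n => by
    rw [Acoef_eq_rankCoeff (by norm_num), zetaSix]
    push_cast
    rw [mul_one_div, mul_one]
  have hlimit : (√π : ℝ) / (2 * (√π : ℝ)) = (1 / 2 : ℂ) := by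
    have : (√π : ℂ) ≠ 0 := ofReal_ne_zero.2 (Real.sqrt_pos.2 Real.pi_pos).ne'
    field_simp
  simp_rw [hA, ← hlimit]
  exact tendsto_coeff_mul_exp hcont (by positivity) (by norm_num)
    (tendsto_singularRatio_R2_zetaSix (K := 8000) (by norm_num)) hβ eventually_norm_R2_zetaSix_le
    fun n t ht => rankCoeff_eq_intervalIntegral norm_zetaSix n ht

lemma tendsto_sqrt_sub_one_div_sqrt : Tendsto (fun x : ℝ => √(x - 1) / √x) atTop (𝓝 1) := by
  have hinv : Tendsto (fun x : ℝ => √(1 - x⁻¹)) atTop (𝓝 √(1 - 0)) :=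
    (tendsto_inv_atTop_zero.const_sub 1).sqrt
  rw [sub_zero, Real.sqrt_one] at hinv
  refine hinv.congr' ?_
  filter_upwards [eventually_gt_atTop 0] with x hx
  rw [← Real.sqrt_div' _ hx.le, sub_div, div_self hx.ne', one_div]

lemma tendsto_sqrt_sub_sqrt_sub_one : Tendsto (fun x : ℝ => √x - √(x - 1)) atTop (𝓝 0) := by
  refine squeeze_zero' (.of_forall fun x => sub_nonneg.2 (Real.sqrt_le_sqrt (by linarith))) ?_
    (Real.tendsto_sqrt_atTop.const_div_atTop 1)
  filter_upwards [eventually_ge_atTop 1] with x hx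
  have hsq := Real.mul_self_sqrt (zero_le_one.trans hx)
  have hsq' := Real.mul_self_sqrt (sub_nonneg.2 hx)
  have hle : √(x - 1) ≤ √x := Real.sqrt_le_sqrt (by linarith)
  rw [le_div_iff₀ (by positivity)]
  nlinarith [Real.sqrt_nonneg (x - 1)]

lemma tendsto_exp_div_cosh : Tendsto (fun y => Real.exp y / Real.cosh y) atTop (𝓝 2) := by
  have hexp : Tendsto (fun y : ℝ => 2 / (1 + Real.exp (-(2 * y)))) atTop (𝓝 (2 / (1 + 0))) :=
    tendsto_const_nhds.div ((Real.tendsto_exp_neg_atTop_nhds_zero.comp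
      (tendsto_id.const_mul_atTop two_pos)).const_add 1) (by norm_num)
  rw [add_zero, div_one] at hexp
  refine hexp.congr fun y => ?_
  have hsplit : Real.exp (-(2 * y)) = Real.exp (-y) / Real.exp y := by
    rw [← Real.exp_sub]
    ring_nf
  rw [hsplit, Real.cosh_eq]
  field_simp

lemma tendsto_sqrt_sub_one_div_cosh :
    Tendsto (fun x : ℝ => √(x - 1) / Real.cosh (π * √(x - 1) / 12) /
      (√x * Real.exp (-(π / 12 * √x)))) atTop (𝓝 2) := by
  have hsqrt : Tendsto (fun x : ℝ => √(x - 1)) atTop atTop :=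
    Real.tendsto_sqrt_atTop.comp (tendsto_atTop_add_const_right _ (-1) tendsto_id)
  have hshift : Tendsto (fun x : ℝ => π * √(x - 1) / 12) atTop atTop :=
    (hsqrt.const_mul_atTop Real.pi_pos).atTop_div_const (by norm_num)
  have hexp : Tendsto (fun x : ℝ => Real.exp (π / 12 * (√x - √(x - 1)))) atTop (𝓝 1) := by
    simpa using (tendsto_sqrt_sub_sqrt_sub_one.const_mul (π / 12)).rexp
  have hprod := (tendsto_sqrt_sub_one_div_sqrt.mul hexp).mul (tendsto_exp_div_cosh.comp hshift)
  rw [one_mul, one_mul] at hprod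
  refine hprod.congr fun x => ?_
  have hsplit : Real.exp (π / 12 * (√x - √(x - 1))) * Real.exp (π * √(x - 1) / 12) =
      (Real.exp (-(π / 12 * √x)))⁻¹ := by
    rw [← Real.exp_add, ← Real.exp_neg]
    ring_nf
  rw [Function.comp_apply, mul_assoc, ← mul_div_assoc, hsplit]
  ring

lemma tendsto_sqrt_eight_mul_sub_one_div_cosh : Tendsto (fun n : ℕ => √(8 * (n : ℝ) - 1) /
      (2 * √2 * Real.cosh (π * √(8 * (n : ℝ) - 1) / 12)) /
      (√n * Real.exp (-2 * √(π ^ 2 / 72 * n)))) atTop (𝓝 2) := by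
  have hreal := tendsto_sqrt_sub_one_div_cosh.comp
    ((tendsto_natCast_atTop_atTop (R := ℝ)).const_mul_atTop (by norm_num : (0 : ℝ) < 8))
  refine hreal.congr fun n => ?_
  have hsqrt : √(8 * (n : ℝ)) = 2 * √2 * √n := by
    rw [show 8 * (n : ℝ) = 2 ^ 2 * (2 * n) by ring, Real.sqrt_mul (by norm_num),
      Real.sqrt_sq two_pos.le, Real.sqrt_mul two_pos.le, mul_assoc]
  have hexp : -2 * √(π ^ 2 / 72 * n) = -(π / 12 * √(8 * n)) := by
    rw [show π ^ 2 / 72 * n = (π / 24) ^ 2 * (8 * n) by ring, Real.sqrt_mul (by positivity),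
      Real.sqrt_sq (by positivity)]
    ring
  rw [Function.comp_apply, hexp, hsqrt]
  ring

end MainTheorem

end M2Rank

theorem Acoef_one_sixth_asymptotic :
    Filter.Tendsto
      (fun n : ℕ =>
        Acoef 1 6 n * ((Real.sqrt (8 * (n : ℝ) - 1) : ℝ) : ℂ) /
          (((2 * Real.sqrt 2 : ℝ) : ℂ) *
            ((Real.cosh (Real.pi * Real.sqrt (8 * (n : ℝ) - 1) / 12) : ℝ) : ℂ)))
      Filter.atTop (nhds 1) := by
  have hmul := M2Rank.tendsto_Acoef_one_six_mul_exp.mul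
    ((Complex.continuous_ofReal.tendsto 2).comp M2Rank.tendsto_sqrt_eight_mul_sub_one_div_cosh)
  rw [show (1 / 2 : ℂ) * (2 : ℝ) = 1 by norm_num] at hmul
  refine hmul.congr' ?_
  filter_upwards [Filter.eventually_gt_atTop 0] with n hn
  have hpos : 0 < Real.sqrt n * Real.exp (-2 * Real.sqrt (Real.pi ^ 2 / 72 * n)) := by positivity
  rw [Function.comp_apply, mul_assoc, ← Complex.ofReal_mul, mul_div_cancel₀ _ hpos.ne',
    Complex.ofReal_div, Complex.ofReal_mul (2 * Real.sqrt 2), ← mul_div_assoc (Acoef 1 6 n)]
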